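/- Let j be a positive real number. Then the following are equivalent: (a) rank_ℤ E^{(D)}(ℚ) < 2j for every nonzero integer D (i.e., for every nonzero integer D there is no ℤ-linearly independent family of ⌈2j⌉ points in the abelian group E^{(D)}(ℚ)); (b) R_E(j,k,X) converges for some real k ≥ 1 and some broad set X ⊆ ℝ; (c) R_E(j,k) converges for every real k ≥ 1. -/

import Mathlib

noncomputable section

/-- `F(u,v) = v·(u³ + au²v + buv² + cv³) = v⁴ f(u/v)`. -/
def Fbin (a b c u v : ℤ) : ℤ := v * (u^3 + a*u^2*v + b*u*v^2 + c*v^3)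

/-- `Ψ = {(u,v) ∈ ℤ² : gcd(u,v) = 1 and F(u,v) ≠ 0}`. -/
def Psi (a b c : ℤ) : Set (ℤ × ℤ) := {p | Int.gcd p.1 p.2 = 1 ∧ Fbin a b c p.1 p.2 ≠ 0}

/-- `h(u/v) = max(1, log|u|, log|v|)` for coprime `u, v`. -/
def ht (u v : ℤ) : ℝ := max 1 (max (Real.log |(u : ℝ)|) (Real.log |(v : ℝ)|))

/-- the polynomial `f(x) = x³ + ax² + bx + c` has three distinct complex roots. -/
def DistinctRoots (a b c : ℤ) : Prop :=
  ∃ r₁ r₂ r₃ : ℂ, r₁ ≠ r₂ ∧ r₁ ≠ r₃ ∧ r₂ ≠ r₃ ∧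
    ∀ z : ℂ, z^3 + a*z^2 + b*z + c = (z - r₁) * (z - r₂) * (z - r₃)

/-- `sq` is a squarefree-part function: for nonzero `n`, `sq n` is squarefree and
`n = sq n · m²` for some rational `m`. -/
def IsSqfreePart (sq : ℤ → ℤ) : Prop :=
  ∀ n : ℤ, n ≠ 0 → Squarefree (sq n) ∧ ∃ m : ℚ, (n : ℚ) = sq n * m^2

/-- the general term `|s(F(u,v))|^{-k} · h(u/v)^{-j}` of `S_E(j,k)`. -/
def STerm (a b c : ℤ) (sq : ℤ → ℤ) (j k : ℝ) (p : ℤ × ℤ) : ℝ :=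
  |(sq (Fbin a b c p.1 p.2) : ℝ)| ^ (-k) * ht p.1 p.2 ^ (-j)

/-- index set of `S_E(j,k,X)`: `(u,v) ∈ Ψ` with `u/v ∈ X`. -/
def SIdx (a b c : ℤ) (X : Set ℝ) : Set (ℤ × ℤ) :=
  {p | p ∈ Psi a b c ∧ ((p.1 : ℝ) / (p.2 : ℝ)) ∈ X}

/-- `S_E(j,k,X)` converges. -/
def SConv (a b c : ℤ) (sq : ℤ → ℤ) (j k : ℝ) (X : Set ℝ) : Prop :=
  Summable fun p : SIdx a b c X => STerm a b c sq j k p.1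

/-- index set of `R_E(j,k,X)`: `t ≥ 1`, `(u,v) ∈ Ψ`, `u/v ∈ X`, `t² ∣ F(u,v)`. -/
def RIdx (a b c : ℤ) (X : Set ℝ) : Set (ℕ × ℤ × ℤ) :=
  {q | 1 ≤ q.1 ∧ q.2 ∈ Psi a b c ∧ ((q.2.1 : ℝ) / (q.2.2 : ℝ)) ∈ X ∧
    (q.1 : ℤ)^2 ∣ Fbin a b c q.2.1 q.2.2}

/-- the general term `t^{2k} · |F(u,v)|^{-k} · h(u/v)^{-j}` of `R_E(j,k)`. -/
def RTerm (a b c : ℤ) (j k : ℝ) (q : ℕ × ℤ × ℤ) : ℝ :=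
  (q.1 : ℝ) ^ (2*k) * |(Fbin a b c q.2.1 q.2.2 : ℝ)| ^ (-k) * ht q.2.1 q.2.2 ^ (-j)

/-- `R_E(j,k,X)` converges. -/
def RConv (a b c : ℤ) (j k : ℝ) (X : Set ℝ) : Prop :=
  Summable fun q : RIdx a b c X => RTerm a b c j k q.1

/-- `Ω_d = {α ∈ ℤ/d²ℤ : f(α) ≡ 0 (mod d²)}`. -/
def OmegaSet (a b c : ℤ) (d : ℕ) : Set (ZMod (d^2)) :=
  {α | α^3 + (a : ZMod (d^2))*α^2 + (b : ZMod (d^2))*α + (c : ZMod (d^2)) = 0}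

/-- the lattice `L_{α,d,d'} = {(u,v) : u ≡ αv (mod d²), v ≡ 0 (mod d'²)}`. -/
def latL (d d' : ℕ) (α : ZMod (d^2)) : Set (ℤ × ℤ) :=
  {p | ((p.1 : ZMod (d^2)) = α * (p.2 : ZMod (d^2))) ∧ ((d' : ℤ))^2 ∣ p.2}

/-- `ω` is a choice, for coprime `d, d' ≥ 1` and `α ∈ Ω_d`, of a shortest nonzero
vector `ω_{α,d,d'}` of the lattice `L_{α,d,d'}` for the Euclidean norm. -/
def IsShortestChoice (a b c : ℤ) (ω : (d d' : ℕ) → ZMod (d^2) → ℤ × ℤ) : Prop :=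
  ∀ d d' : ℕ, 0 < d → 0 < d' → Nat.Coprime d d' → ∀ α ∈ OmegaSet a b c d,
    ω d d' α ∈ latL d d' α ∧ ω d d' α ≠ 0 ∧
    ∀ p ∈ latL d d' α, p ≠ 0 →
      (ω d d' α).1^2 + (ω d d' α).2^2 ≤ p.1^2 + p.2^2

/-- index set of `Q_E(j,k)`: coprime `d, d' ≥ 1`, `α ∈ Ω_d`, `ω_{α,d,d'} ∈ Ψ`. -/
def QIdx (a b c : ℤ) (ω : (d d' : ℕ) → ZMod (d^2) → ℤ × ℤ) :
    Set (Σ d : ℕ, ℕ × ZMod (d^2)) :=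
  {x | 0 < x.1 ∧ 0 < x.2.1 ∧ Nat.Coprime x.1 x.2.1 ∧ x.2.2 ∈ OmegaSet a b c x.1 ∧
    ω x.1 x.2.1 x.2.2 ∈ Psi a b c}

/-- the general term `(dd')^{2k} · max(1, log(dd'))^{-j} · ‖ω_{α,d,d'}‖^{-4k}` of `Q_E(j,k)`. -/
def QTerm (j k : ℝ) (ω : (d d' : ℕ) → ZMod (d^2) → ℤ × ℤ)
    (x : Σ d : ℕ, ℕ × ZMod (d^2)) : ℝ :=
  ((x.1 : ℝ) * (x.2.1 : ℝ)) ^ (2*k) * max 1 (Real.log ((x.1 : ℝ) * (x.2.1 : ℝ))) ^ (-j) *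
    Real.sqrt (((ω x.1 x.2.1 x.2.2).1 : ℝ)^2 + ((ω x.1 x.2.1 x.2.2).2 : ℝ)^2) ^ (-(4*k))

/-- `Q_E(j,k)` converges. -/
def QConv (a b c : ℤ) (j k : ℝ) (ω : (d d' : ℕ) → ZMod (d^2) → ℤ × ℤ) : Prop :=
  Summable fun x : QIdx a b c ω => QTerm j k ω x.1

/-- the quadratic twist `E^{(D)} : Dy² = f(x)`, in Weierstrass form
`y² = x³ + aDx² + bD²x + cD³` (isomorphic via `(x,y) ↦ (Dx, D²y)`). -/
def twist (a b c D : ℤ) : WeierstrassCurve.Affine ℚ :=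
  { a₁ := 0, a₂ := a*D, a₃ := 0, a₄ := b*D^2, a₆ := c*D^3 }

/-- `rank_ℤ E^{(D)}(ℚ) < 2j` for every nonzero integer `D`: there is no
ℤ-linearly independent family of `⌈2j⌉` rational points on `E^{(D)}`. -/
def RankBound (a b c : ℤ) (j : ℝ) : Prop :=
  ∀ D : ℤ, D ≠ 0 →
    ¬ ∃ P : Fin ⌈2*j⌉₊ → (twist a b c D).Point, LinearIndependent ℤ P

/-- `X ⊆ ℝ` is broad: open, and meets both `(e_max, ∞)` and `(-∞, e_min)`. -/
def Broad (a b c : ℤ) (X : Set ℝ) : Prop :=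
  IsOpen X ∧ (∃ x ∈ X, ∀ r : ℝ, r^3 + a*r^2 + b*r + c = 0 → r < x) ∧
    (∃ x ∈ X, ∀ r : ℝ, r^3 + a*r^2 + b*r + c = 0 → x < r)

/-- the set of triples `(α, d, d')` with `d, d'` coprime positive integers,
`dd' = t`, and `α ∈ Ω_d`. -/
def TripSet (a b c : ℤ) (t : ℕ) : Set (Σ d : ℕ, ℕ × ZMod (d^2)) :=
  {x | 0 < x.1 ∧ 0 < x.2.1 ∧ Nat.Coprime x.1 x.2.1 ∧ x.1 * x.2.1 = t ∧
    x.2.2 ∈ OmegaSet a b c x.1}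

end

/-!
For `j ≤ 1` none of the three conditions holds: explicit parametrisations of pairs `x₁, x₂` with
`f(x₁) f(x₂)` a square give a twist with two independent points, so the rank bound fails.

Assume the rank bound with `j > 1`. All twists share the `x`-line, so the logarithmic height of `x`
differs from a canonical height by a bound which does not depend on `D`. A pigeonhole argument
modulo `m` in the group of rational points counts the points of bounded canonical height, and for
squarefree `D` a point of `E^(D)` which is not 2-torsion has height `≫ log |D|`. Hence the pairs
`(u, v)` with `F(u, v)` in the square class of `D` contribute at most a constant times
`|D|⁻¹ (log |D|)^(-j)`, which is summable over `D`.

Conversely, `n` independent points on a twist span a lattice `ℤⁿ` of points. Since `x(P + Q)` and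
`x(P - Q)` depend continuously on `x(P)` and `x(Q)` as an unordered pair, compactness of the real
projective line yields finitely many translations, one of which moves any given lattice point to a
point with `x` in the broad set. As heights of lattice points are `O(‖g‖²)`, the series dominates
`∑ (1 + ‖g‖)^(-2j)` over `ℤⁿ`, which diverges when `n ≥ 2j`.
-/

open Filter Height Topology

section SumDiffRel

variable {K : Type*} [Field K]

/-- The unordered pair `{v, w}` of points of `ℙ¹` as a point of `Sym² ℙ¹ = ℙ²`: the coefficients
of the product of the linear forms attached to `v` and `w`. -/
def symProd (v w : K × K) : K × K × K := (v.1 * w.1, v.1 * w.2 + v.2 * w.1, v.2 * w.2)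

/-- The quadratic self-map of `ℙ²` which, on the curve `y² = x³ + ax² + bx + c`, sends
`{x(P), x(Q)}` to `{x(P + Q), x(P - Q)}`; this is `WeierstrassCurve.addSubMap` with its
coefficients written out. -/
def addSubX (a b c : K) (z : K × K × K) : K × K × K :=
  ((z.1 - b * z.2.2) ^ 2 - 4 * c * z.2.2 * (z.2.1 + a * z.2.2),
    2 * (z.2.1 * (z.1 + b * z.2.2) + 2 * a * z.1 * z.2.2 + 2 * c * z.2.2 ^ 2),
    z.2.1 ^ 2 - 4 * z.1 * z.2.2)

/-- The projective `x`-coordinates `v, w, p, m` are related like those of points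
`P, Q, P + Q, P - Q` of the curve `y² = x³ + ax² + bx + c`. -/
def SumDiffRel (a b c : K) (v w p m : K × K) : Prop :=
  ∃ l : K, l ≠ 0 ∧ addSubX a b c (symProd v w) = l • symProd p m

lemma symProd_comm (v w : K × K) : symProd v w = symProd w v := by
  simp only [symProd, mul_comm, add_comm]

variable {a b c : K} {v w p m : K × K}

lemma SumDiffRel.comm (h : SumDiffRel a b c v w p m) : SumDiffRel a b c w v p m := by
  rwa [SumDiffRel, symProd_comm]

lemma SumDiffRel.swap (h : SumDiffRel a b c v w p m) : SumDiffRel a b c v w m p := by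
  rwa [SumDiffRel, symProd_comm m]

lemma SumDiffRel.infinity_left (w : K × K) : SumDiffRel a b c (1, 0) w w w := by
  refine ⟨1, one_ne_zero, ?_⟩
  simp only [addSubX, symProd, one_smul, Prod.mk.injEq]
  refine ⟨?_, ?_, ?_⟩ <;> ring

variable {x y x' y' : K}

lemma mul_addX_subX (hxy : y ^ 2 = x ^ 3 + a * x ^ 2 + b * x + c)
    (hxy' : y' ^ 2 = x' ^ 3 + a * x' ^ 2 + b * x' + c) (hx : x - x' ≠ 0) :
    (x * x' - b) ^ 2 - 4 * c * (x + x' + a) = (x - x') ^ 2 *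
      ((((y - y') / (x - x')) ^ 2 - a - x - x') * (((y + y') / (x - x')) ^ 2 - a - x - x')) := by
  have factor : (y - y') * (y + y') = (x - x') * (x ^ 2 + x * x' + x' ^ 2 + a * (x + x') + b) := by
    linear_combination hxy - hxy'
  have slope_mul : (x - x') ^ 2 * (((y - y') / (x - x')) ^ 2 * ((y + y') / (x - x')) ^ 2) =
      (x ^ 2 + x * x' + x' ^ 2 + a * (x + x') + b) ^ 2 := by
    rw [← mul_pow, div_mul_div_comm, factor]
    field_simp
  have slope_add : (x - x') ^ 2 * (((y - y') / (x - x')) ^ 2 + ((y + y') / (x - x')) ^ 2) =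
      2 * (y ^ 2 + y' ^ 2) := by
    field_simp
    ring
  linear_combination -slope_mul + (a + x + x') * slope_add + 2 * (a + x + x') * (hxy + hxy')

lemma add_addX_subX (hxy : y ^ 2 = x ^ 3 + a * x ^ 2 + b * x + c)
    (hxy' : y' ^ 2 = x' ^ 3 + a * x' ^ 2 + b * x' + c) (hx : x - x' ≠ 0) :
    2 * ((x + x') * (x * x' + b) + 2 * a * x * x' + 2 * c) = (x - x') ^ 2 *
      ((((y - y') / (x - x')) ^ 2 - a - x - x') + (((y + y') / (x - x')) ^ 2 - a - x - x')) := by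
  field_simp
  linear_combination -2 * (hxy + hxy')

lemma mul_doubleX [NeZero (2 : K)] (hxy : y ^ 2 = x ^ 3 + a * x ^ 2 + b * x + c) (hy : y ≠ 0) :
    (x * x - b) ^ 2 - 4 * c * (x + x + a) =
      4 * y ^ 2 * (((3 * x ^ 2 + 2 * a * x + b) / (2 * y)) ^ 2 - a - x - x) := by
  have h2 : (2 : K) ≠ 0 := NeZero.ne 2
  field_simp
  linear_combination 16 * (a + 2 * x) * hxy

end SumDiffRel

section Discriminant

/-- The discriminant of the cubic `x³ + ax² + bx + c`. -/
def cubicDisc {R : Type*} [CommRing R] (a b c : R) : R :=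
  a ^ 2 * b ^ 2 - 4 * b ^ 3 - 4 * a ^ 3 * c + 18 * a * b * c - 27 * c ^ 2

lemma DistinctRoots.cubicDisc_ne_zero {a b c : ℤ} (hf : DistinctRoots a b c) :
    cubicDisc a b c ≠ 0 := by
  obtain ⟨r, s, t, hrs, hrt, hst, h⟩ := hf
  have ha : (a : ℂ) = -(r + s + t) := by linear_combination (h 1 + h (-1)) / 2 - h 0
  have hb : (b : ℂ) = r * s + r * t + s * t := by linear_combination (h 1 - h (-1)) / 2
  have hc : (c : ℂ) = -(r * s * t) := by linear_combination h 0
  have disc_eq : ((cubicDisc a b c : ℤ) : ℂ) = ((r - s) * (r - t) * (s - t)) ^ 2 := by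
    simp only [cubicDisc]
    push_cast
    rw [ha, hb, hc]
    ring
  rw [← Int.cast_ne_zero (α := ℂ), disc_eq]
  exact pow_ne_zero 2 (mul_ne_zero (mul_ne_zero (sub_ne_zero.2 hrs) (sub_ne_zero.2 hrt))
    (sub_ne_zero.2 hst))

end Discriminant

section ProjX

open WeierstrassCurve.Affine

variable {a b c D : ℤ}

/-- The projective `x`-coordinate of a point of the twist in the model `D y² = f(x)`, normalised
to `(1, 0)` or `(x, 1)`. In the Weierstrass model the `x`-coordinate is `D` times larger. -/
def projX (a b c D : ℤ) : (twist a b c D).Point → ℚ × ℚ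
  | .zero => (1, 0)
  | .some x _ _ => (x / D, 1)

lemma projX_zero : projX a b c D 0 = (1, 0) := rfl

lemma projX_some {x y : ℚ} (h : (twist a b c D).Nonsingular x y) :
    projX a b c D (.some x y h) = (x / D, 1) := rfl

lemma projX_neg (P : (twist a b c D).Point) : projX a b c D (-P) = projX a b c D P := by
  rcases P with _ | _ <;> rfl

lemma projX_snd_eq_zero_iff {P : (twist a b c D).Point} : (projX a b c D P).2 = 0 ↔ P = 0 := by
  rcases P with _ | _
  · exact iff_of_true rfl rfl
  · simp [projX]

lemma eq_or_eq_neg_of_projX_eq (hD : D ≠ 0) {P Q : (twist a b c D).Point}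
    (h : projX a b c D P = projX a b c D Q) : P = Q ∨ P = -Q := by
  apply Point.eq_or_eq_neg_of_xRep_eq_xRep
  rcases P with _ | ⟨x, y, hP⟩ <;> rcases Q with _ | ⟨x', y', hQ⟩
  · rfl
  · simp [projX] at h
  · simp [projX] at h
  · have hx : x = x' := (div_left_inj' (Int.cast_ne_zero.2 hD)).1 (congrArg Prod.fst h)
    simp only [Point.xRep_some, hx]

lemma twist_equation_of_nonsingular {x y : ℚ} (h : (twist a b c D).Nonsingular x y) :
    y ^ 2 = x ^ 3 + a * D * x ^ 2 + b * D ^ 2 * x + c * D ^ 3 := by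
  have := (equation_iff ..).1 h.1
  simp only [twist] at this
  linear_combination this

lemma twist_deriv_ne_zero_of_nonsingular {x : ℚ} (h : (twist a b c D).Nonsingular x 0) :
    3 * x ^ 2 + 2 * a * D * x + b * D ^ 2 ≠ 0 := by
  intro h0
  have := ((nonsingular_iff ..).1 h).2
  simp only [twist] at this
  refine this.elim (fun h1 ↦ h1 ?_) (fun h2 ↦ h2 ?_)
  · linear_combination -h0
  · ring

lemma twist_negY (x y : ℚ) : (twist a b c D).negY x y = -y := by
  simp [negY, twist]

lemma twist_addX (x x' s : ℚ) : (twist a b c D).addX x x' s = s ^ 2 - a * D - x - x' := by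
  simp [addX, twist]

lemma sumDiffRel_double_of_Y_eq_zero (hD : D ≠ 0) {x : ℚ} (h : (twist a b c D).Nonsingular x 0) :
    SumDiffRel (a : ℚ) b c (x / D, 1) (x / D, 1) (1, 0) (1, 0) := by
  have hD' : (D : ℚ) ≠ 0 := Int.cast_ne_zero.2 hD
  have eqn := twist_equation_of_nonsingular h
  refine ⟨((3 * x ^ 2 + 2 * a * D * x + b * D ^ 2) / D ^ 2) ^ 2,
    pow_ne_zero 2 (div_ne_zero (twist_deriv_ne_zero_of_nonsingular h) (pow_ne_zero 2 hD')), ?_⟩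
  simp only [addSubX, symProd, Prod.smul_mk, smul_eq_mul, Prod.mk.injEq]
  refine ⟨?_, ?_, ?_⟩ <;> field_simp
  · linear_combination (4 * (2 * x + a * D)) * eqn
  · linear_combination (-4 * D) * eqn
  · ring

lemma sumDiffRel_double_of_Y_ne_zero (hD : D ≠ 0) {x y : ℚ}
    (h : (twist a b c D).Nonsingular x y) (hy : y ≠ 0) :
    SumDiffRel (a : ℚ) b c (x / D, 1) (x / D, 1)
      (projX a b c D (.some x y h + .some x y h)) (1, 0) := by
  have hD' : (D : ℚ) ≠ 0 := Int.cast_ne_zero.2 hD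
  have eqn := twist_equation_of_nonsingular h
  have hnegY : y ≠ (twist a b c D).negY x y := by
    rw [twist_negY]
    exact fun h ↦ hy (self_eq_neg.1 h)
  have slope_eq : (twist a b c D).slope x x y y =
      (3 * x ^ 2 + 2 * (a * D) * x + b * D ^ 2) / (2 * y) := by
    rw [slope_of_Y_ne rfl hnegY, twist_negY]
    simp only [twist]
    ring
  have double := mul_doubleX eqn hy
  rw [Point.add_self_of_Y_ne hnegY, projX_some, twist_addX, slope_eq]
  generalize ((3 * x ^ 2 + 2 * (a * D) * x + b * D ^ 2) / (2 * y)) ^ 2 - a * D - x - x = z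
    at double
  refine ⟨4 * y ^ 2 / D ^ 3, by positivity, ?_⟩
  simp only [addSubX, symProd, Prod.smul_mk, smul_eq_mul, Prod.mk.injEq]
  refine ⟨?_, ?_, ?_⟩ <;> field_simp
  · linear_combination double
  · linear_combination (-4 * D) * eqn
  · ring

lemma sumDiffRel_double (hD : D ≠ 0) (P : (twist a b c D).Point) :
    SumDiffRel (a : ℚ) b c (projX a b c D P) (projX a b c D P) (projX a b c D (P + P)) (1, 0) := by
  rcases P with _ | ⟨x, y, h⟩
  · exact SumDiffRel.infinity_left _
  · by_cases hy : y = 0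
    · subst hy
      rw [Point.add_self_of_Y_eq (by rw [twist_negY, neg_zero]), projX_zero, projX_some]
      exact sumDiffRel_double_of_Y_eq_zero hD h
    · exact sumDiffRel_double_of_Y_ne_zero hD h hy

lemma sumDiffRel_of_X_ne (hD : D ≠ 0) {x y x' y' : ℚ} (h : (twist a b c D).Nonsingular x y)
    (h' : (twist a b c D).Nonsingular x' y') (hx : x ≠ x') :
    SumDiffRel (a : ℚ) b c (x / D, 1) (x' / D, 1)
      (projX a b c D (.some x y h + .some x' y' h'))
      (projX a b c D (.some x y h - .some x' y' h')) := by
  have hD' : (D : ℚ) ≠ 0 := Int.cast_ne_zero.2 hD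
  have hxx : x - x' ≠ 0 := sub_ne_zero.2 hx
  have eqn := twist_equation_of_nonsingular h
  have eqn' := twist_equation_of_nonsingular h'
  have prod_eq := mul_addX_subX eqn eqn' hxx
  have sum_eq := add_addX_subX eqn eqn' hxx
  rw [sub_eq_add_neg, Point.neg_some, Point.add_of_X_ne hx, Point.add_of_X_ne hx]
  simp only [projX_some, twist_addX, twist_negY, slope_of_X_ne hx, sub_neg_eq_add]
  generalize ((y - y') / (x - x')) ^ 2 - a * D - x - x' = z at prod_eq sum_eq
  generalize ((y + y') / (x - x')) ^ 2 - a * D - x - x' = z' at prod_eq sum_eq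
  refine ⟨(x - x') ^ 2 / D ^ 2, by positivity, ?_⟩
  simp only [addSubX, symProd, Prod.smul_mk, smul_eq_mul, Prod.mk.injEq]
  refine ⟨?_, ?_, ?_⟩ <;> field_simp
  · linear_combination prod_eq
  · linear_combination sum_eq
  · ring

theorem sumDiffRel_projX (hD : D ≠ 0) (P Q : (twist a b c D).Point) :
    SumDiffRel (a : ℚ) b c (projX a b c D P) (projX a b c D Q)
      (projX a b c D (P + Q)) (projX a b c D (P - Q)) := by
  by_cases hPQ : projX a b c D P = projX a b c D Q
  · rcases eq_or_eq_neg_of_projX_eq hD hPQ with rfl | rfl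
    · rw [sub_self, projX_zero]
      exact sumDiffRel_double hD P
    · rw [← hPQ, neg_add_cancel, projX_zero, sub_eq_add_neg]
      exact (sumDiffRel_double hD (-Q)).swap
  · by_cases hP : P = 0
    · rw [hP, zero_add, zero_sub, projX_neg]
      exact SumDiffRel.infinity_left _
    by_cases hQ : Q = 0
    · rw [hQ, add_zero, sub_zero]
      exact (SumDiffRel.infinity_left _).comm
    rcases P with _ | ⟨x, y, h⟩
    · exact absurd rfl hP
    rcases Q with _ | ⟨x', y', h'⟩
    · exact absurd rfl hQ
    exact sumDiffRel_of_X_ne hD h h' fun hx ↦ hPQ (by rw [projX_some, projX_some, hx])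

end ProjX

section Parallelogram

open QuadraticMap

variable {G : Type*} [AddCommGroup G] {q : G → ℝ}

/-- The parallelogram law for a real-valued function on an abelian group. -/
def ParallelogramLaw (q : G → ℝ) : Prop :=
  ∀ P Q, q (P + Q) + q (P - Q) = 2 * q P + 2 * q Q

namespace ParallelogramLaw

lemma map_zero (h : ParallelogramLaw q) : q 0 = 0 := by
  have := h 0 0
  rw [add_zero, sub_zero] at this
  linarith

lemma map_neg (h : ParallelogramLaw q) (P : G) : q (-P) = q P := by
  have := h 0 P
  rw [zero_add, zero_sub, h.map_zero] at this
  linarith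

lemma map_add_add (h : ParallelogramLaw q) (x y z : G) :
    q (x + y + z) = q (x + y) + q (y + z) + q (x + z) - q x - q y - q z := by
  have hxy_z := h (x + y) z
  have hxz_y := h (x - z) y
  have hyz_x := h (y - z) x
  have hyzx := h (y + z) x
  have hxzy := h (x + z) y
  rw [show x - z + y = x + y - z by abel, show x - z - y = -(y + z - x) by abel,
    h.map_neg] at hxz_y
  rw [show y - z + x = x + y - z by abel, show y - z - x = -(x + z - y) by abel,
    h.map_neg] at hyz_x
  rw [show y + z + x = x + y + z by abel] at hyzx
  rw [show x + z + y = x + y + z by abel] at hxzy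
  linarith [h y z, h x z]

lemma polar_add_left (h : ParallelogramLaw q) (x x' y : G) :
    polar q (x + x') y = polar q x y + polar q x' y := by
  simp only [polar, h.map_add_add x x' y]
  ring

lemma polar_zsmul_left (h : ParallelogramLaw q) (n : ℤ) (x y : G) :
    polar q (n • x) y = n • polar q x y :=
  _root_.map_zsmul (AddMonoidHom.mk' (fun x ↦ polar q x y) (h.polar_add_left · · y)) n x

lemma two_mul_eq_polar (h : ParallelogramLaw q) (x : G) : 2 * q x = polar q x x := by
  have := h x x
  rw [sub_self, h.map_zero] at this
  simp only [polar]
  linarith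

lemma map_zsmul (h : ParallelogramLaw q) (n : ℤ) (x : G) : q (n • x) = (n * n) • q x := by
  have : 2 * q (n • x) = (n * n) • (2 * q x) := by
    rw [h.two_mul_eq_polar, h.two_mul_eq_polar, h.polar_zsmul_left, polar_comm,
      h.polar_zsmul_left, smul_smul]
  simp only [zsmul_eq_mul] at this ⊢
  linarith

/-- A function satisfying the parallelogram law, as a quadratic map. -/
def toQuadraticMap (h : ParallelogramLaw q) : QuadraticMap ℤ G ℝ :=
  QuadraticMap.ofPolar q h.map_zsmul h.polar_add_left h.polar_zsmul_left

end ParallelogramLaw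

end Parallelogram

section TateLimit

variable {G : Type*} [AddCommGroup G] {H : G → ℝ} {C : ℝ}

/-- The `n`-th approximation to the canonical height in Tate's limit construction. -/
noncomputable def tateApprox (H : G → ℝ) (P : G) (n : ℕ) : ℝ := H (2 ^ n • P) / 4 ^ n

lemma abs_map_two_nsmul_sub_le (h : ∀ P Q, |H (P + Q) + H (P - Q) - 2 * H P - 2 * H Q| ≤ C)
    (P : G) : |H (2 • P) - 4 * H P| ≤ 3 * C / 2 := by
  have hzero := h 0 0
  have hPP := h P P
  rw [add_zero, sub_zero] at hzero
  rw [sub_self, ← two_nsmul] at hPP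
  rw [abs_le] at hzero hPP ⊢
  constructor <;> linarith

lemma dist_tateApprox_succ_le (h : ∀ P Q, |H (P + Q) + H (P - Q) - 2 * H P - 2 * H Q| ≤ C)
    (P : G) (n : ℕ) :
    dist (tateApprox H P n) (tateApprox H P (n + 1)) ≤ (3 * C / 8) * (1 / 4) ^ n := by
  have hdouble := abs_map_two_nsmul_sub_le h (2 ^ n • P)
  rw [← mul_nsmul, ← pow_succ] at hdouble
  have hdiff : tateApprox H P n - tateApprox H P (n + 1) =
      -(H (2 ^ (n + 1) • P) - 4 * H (2 ^ n • P)) / 4 ^ (n + 1) := by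
    simp only [tateApprox]
    field_simp
    ring
  rw [Real.dist_eq, hdiff, abs_div, abs_neg, abs_of_pos (by positivity : (0 : ℝ) < 4 ^ (n + 1)),
    div_le_iff₀ (by positivity)]
  refine hdouble.trans_eq ?_
  rw [one_div, inv_pow, pow_succ]
  field_simp
  ring

lemma exists_tendsto_tateApprox
    (h : ∀ P Q, |H (P + Q) + H (P - Q) - 2 * H P - 2 * H Q| ≤ C) (P : G) :
    ∃ l, Tendsto (tateApprox H P) atTop (𝓝 l) :=
  cauchySeq_tendsto_of_complete
    (cauchySeq_of_le_geometric _ _ (by norm_num) (dist_tateApprox_succ_le h P))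

lemma tendsto_tateApprox_defect
    (h : ∀ P Q, |H (P + Q) + H (P - Q) - 2 * H P - 2 * H Q| ≤ C) (P Q : G) :
    Tendsto (fun n ↦ tateApprox H (P + Q) n + tateApprox H (P - Q) n -
      (2 * tateApprox H P n + 2 * tateApprox H Q n)) atTop (𝓝 0) := by
  have hgeom : Tendsto (fun n : ℕ ↦ C * (1 / 4 : ℝ) ^ n) atTop (𝓝 0) := by
    simpa using (tendsto_pow_atTop_nhds_zero_of_lt_one (by norm_num : (0 : ℝ) ≤ 1 / 4)
      (by norm_num)).const_mul C
  refine squeeze_zero_norm (fun n ↦ ?_) hgeom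
  have hdefect : tateApprox H (P + Q) n + tateApprox H (P - Q) n -
      (2 * tateApprox H P n + 2 * tateApprox H Q n) =
      (H (2 ^ n • P + 2 ^ n • Q) + H (2 ^ n • P - 2 ^ n • Q) - 2 * H (2 ^ n • P) -
        2 * H (2 ^ n • Q)) / 4 ^ n := by
    simp only [tateApprox, nsmul_add, nsmul_sub]
    ring
  rw [hdefect, Real.norm_eq_abs, abs_div, abs_of_pos (by positivity : (0 : ℝ) < 4 ^ n),
    div_eq_mul_inv, one_div, inv_pow]
  exact mul_le_mul_of_nonneg_right (h _ _) (by positivity)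

theorem exists_quadraticMap_near
    (h : ∀ P Q, |H (P + Q) + H (P - Q) - 2 * H P - 2 * H Q| ≤ C) (hH : ∀ P, 0 ≤ H P) :
    ∃ q : QuadraticMap ℤ G ℝ, (∀ P, |q P - H P| ≤ C) ∧ ∀ P, 0 ≤ q P := by
  choose q hq using exists_tendsto_tateApprox h
  have hlaw : ParallelogramLaw q := fun P Q ↦ by
    have hlim := ((hq (P + Q)).add (hq (P - Q))).sub (((hq P).const_mul 2).add ((hq Q).const_mul 2))
    linarith [tendsto_nhds_unique hlim (tendsto_tateApprox_defect h P Q)]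
  refine ⟨hlaw.toQuadraticMap, fun P ↦ ?_, fun P ↦ ge_of_tendsto' (hq P) fun n ↦
    div_nonneg (hH _) (by positivity)⟩
  have hdist := dist_le_of_le_geometric_of_tendsto₀ _ _ (by norm_num)
    (dist_tateApprox_succ_le h P) (hq P)
  rw [dist_comm, Real.dist_eq, show tateApprox H P 0 = H P by simp [tateApprox]] at hdist
  have hC : 0 ≤ C := (abs_nonneg _).trans (h 0 0)
  refine hdist.trans ?_
  norm_num
  linarith

end TateLimit

section QuadraticMap

open QuadraticMap

variable {G : Type*} [AddCommGroup G] (q : QuadraticMap ℤ G ℝ)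

lemma quadraticMap_zsmul (n : ℤ) (P : G) : q (n • P) = n ^ 2 * q P := by
  rw [q.map_smul, zsmul_eq_mul]
  push_cast
  ring

lemma quadraticMap_add_add_sub (P Q : G) : q (P + Q) + q (P - Q) = 2 * (q P + q Q) := by
  have hsub := QuadraticMap.map_add q P (-Q)
  rw [polar_neg_right, q.map_neg, ← sub_eq_add_neg] at hsub
  linarith [QuadraticMap.map_add q P Q]

lemma quadraticMap_add_le (hq : ∀ P, 0 ≤ q P) (P Q : G) : q (P + Q) ≤ 2 * q P + 2 * q Q := by
  linarith [quadraticMap_add_add_sub q P Q, hq (P - Q)]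

lemma quadraticMap_gram_eq_zero {m n : ℤ} (hmn : m ≠ 0 ∨ n ≠ 0) {P Q : G}
    (h : m • P + n • Q = 0) : 4 * q P * q Q = polar q P Q ^ 2 := by
  have hpolar (R : G) : m * polar q P R + n * polar q Q R = 0 := by
    have := polar_zero_left q R
    rwa [← h, polar_add_left, polar_smul_left, polar_smul_left, zsmul_eq_mul, zsmul_eq_mul] at this
  have hP := hpolar P
  have hQ := hpolar Q
  rw [polar_self, nsmul_eq_mul, polar_comm] at hP
  rw [polar_self, nsmul_eq_mul] at hQ
  push_cast at hP hQ
  rcases hmn with hm | hn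
  · have : (m : ℝ) * (4 * q P * q Q - polar q P Q ^ 2) = 0 := by
      linear_combination 2 * q Q * hP - polar q P Q * hQ
    exact sub_eq_zero.1 ((mul_eq_zero.1 this).resolve_left (Int.cast_ne_zero.2 hm))
  · have : (n : ℝ) * (4 * q P * q Q - polar q P Q ^ 2) = 0 := by
      linear_combination 2 * q P * hQ - polar q P Q * hP
    exact sub_eq_zero.1 ((mul_eq_zero.1 this).resolve_left (Int.cast_ne_zero.2 hn))

lemma quadraticMap_eq_zero_of_isOfFinAddOrder {P : G} (hP : IsOfFinAddOrder P) : q P = 0 := by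
  obtain ⟨n, hn, hnP⟩ := isOfFinAddOrder_iff_nsmul_eq_zero.1 hP
  have := quadraticMap_zsmul q n P
  rw [natCast_zsmul, hnP, q.map_zero] at this
  exact (mul_eq_zero.1 this.symm).resolve_left (by positivity)

lemma quadraticMap_add_of_isOfFinAddOrder {P : G} (hP : IsOfFinAddOrder P) (Q : G) :
    q (P + Q) = q Q := by
  obtain ⟨n, hn, hnP⟩ := isOfFinAddOrder_iff_nsmul_eq_zero.1 hP
  have hpolar := polar_smul_left (Q := q) (n : ℤ) P Q
  rw [natCast_zsmul, hnP, polar_zero_left, zsmul_eq_mul] at hpolar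
  have : polar q P Q = 0 := (mul_eq_zero.1 hpolar.symm).resolve_left (by simpa using hn.ne')
  rw [QuadraticMap.map_add q P Q, this, quadraticMap_eq_zero_of_isOfFinAddOrder q hP]
  ring

end QuadraticMap

section NaiveHeight

variable {a b c D : ℤ}

/-- The logarithmic height of the `x`-coordinate in the model `D y² = f(x)`. All twists share the
same `x`-line, so the height estimates in terms of it are uniform in `D`. -/
noncomputable def naiveHeight (a b c D : ℤ) (P : (twist a b c D).Point) : ℝ :=
  logHeight ![(projX a b c D P).1, (projX a b c D P).2]

lemma naiveHeight_eq_logHeight₁ {P : (twist a b c D).Point} {x : ℚ}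
    (h : projX a b c D P = (x, 1)) : naiveHeight a b c D P = logHeight₁ x := by
  rw [naiveHeight, h, logHeight₁_eq_logHeight]

lemma twist_Δ : (twist a b c D).Δ = 16 * D ^ 6 * cubicDisc a b c := by
  simp only [twist, WeierstrassCurve.Δ, WeierstrassCurve.b₂, WeierstrassCurve.b₄,
    WeierstrassCurve.b₆, WeierstrassCurve.b₈, cubicDisc]
  push_cast
  ring

lemma twist_Δ_ne_zero (hd : cubicDisc a b c ≠ 0) (hD : D ≠ 0) : (twist a b c D).Δ ≠ 0 := by
  rw [twist_Δ]
  have : ((cubicDisc a b c : ℤ) : ℚ) ≠ 0 := Int.cast_ne_zero.2 hd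
  positivity

lemma eval_addSubMap (z : ℚ × ℚ × ℚ) :
    (fun i ↦ (WeierstrassCurve.addSubMap (twist a b c 1) i).eval ![z.1, z.2.1, z.2.2]) =
      ![(addSubX (a : ℚ) b c z).1, (addSubX (a : ℚ) b c z).2.1, (addSubX (a : ℚ) b c z).2.2] := by
  funext i
  fin_cases i <;>
    simp [WeierstrassCurve.addSubMap, WeierstrassCurve.b₂, WeierstrassCurve.b₄,
      WeierstrassCurve.b₆, WeierstrassCurve.b₈, twist, addSubX] <;> ring

lemma exists_abs_logHeight_addSubX_sub_le (hd : cubicDisc a b c ≠ 0) :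
    ∃ C : ℝ, ∀ z : ℚ × ℚ × ℚ, |logHeight ![(addSubX (a : ℚ) b c z).1, (addSubX (a : ℚ) b c z).2.1,
      (addSubX (a : ℚ) b c z).2.2] - 2 * logHeight ![z.1, z.2.1, z.2.2]| ≤ C := by
  have : (twist a b c 1).IsElliptic := ⟨(twist_Δ_ne_zero hd one_ne_zero).isUnit⟩
  obtain ⟨C, hC⟩ :=
    WeierstrassCurve.abs_logHeight_addSubMap_sub_two_mul_logHeight_le (twist a b c 1)
  refine ⟨C, fun z ↦ ?_⟩
  rw [← eval_addSubMap]
  exact hC _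

lemma exists_abs_logHeight_symProd_sub_le :
    ∃ C : ℝ, ∀ v w : ℚ × ℚ, ![v.1, v.2] ≠ 0 → ![w.1, w.2] ≠ 0 →
      |logHeight ![(symProd v w).1, (symProd v w).2.1, (symProd v w).2.2] -
        (logHeight ![v.1, v.2] + logHeight ![w.1, w.2])| ≤ C := by
  obtain ⟨C, hC⟩ := abs_logHeight_sym2_sub_le ℚ
  exact ⟨C, fun v w hv hw ↦ hC hv hw⟩

lemma projX_ne_zero (P : (twist a b c D).Point) :
    ![(projX a b c D P).1, (projX a b c D P).2] ≠ 0 := by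
  rcases P with _ | _ <;> simp [projX]

theorem exists_naiveHeight_parallelogram (hd : cubicDisc a b c ≠ 0) :
    ∃ C : ℝ, ∀ D : ℤ, D ≠ 0 → ∀ P Q : (twist a b c D).Point,
      |naiveHeight a b c D (P + Q) + naiveHeight a b c D (P - Q) - 2 * naiveHeight a b c D P -
        2 * naiveHeight a b c D Q| ≤ C := by
  obtain ⟨C, hC⟩ := exists_abs_logHeight_addSubX_sub_le hd
  obtain ⟨C', hC'⟩ := exists_abs_logHeight_symProd_sub_le
  refine ⟨C + 2 * C' + C', fun D hD P Q ↦ ?_⟩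
  obtain ⟨l, hl, rel⟩ := sumDiffRel_projX hD P Q
  have hPQ := hC' _ _ (projX_ne_zero P) (projX_ne_zero Q)
  have hsum := hC' _ _ (projX_ne_zero (P + Q)) (projX_ne_zero (P - Q))
  have hmap := hC (symProd (projX a b c D P) (projX a b c D Q))
  rw [rel] at hmap
  have hscale (z : ℚ × ℚ × ℚ) :
      logHeight ![(l • z).1, (l • z).2.1, (l • z).2.2] = logHeight ![z.1, z.2.1, z.2.2] := by
    rw [← logHeight_smul_eq_logHeight ![z.1, z.2.1, z.2.2] hl]
    simp
  rw [hscale] at hmap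
  simp only [naiveHeight, abs_le] at hPQ hsum hmap ⊢
  constructor <;> linarith [hPQ.1, hPQ.2, hsum.1, hsum.2, hmap.1, hmap.2]

theorem exists_canonicalHeight (hd : cubicDisc a b c ≠ 0) :
    ∃ C : ℝ, 0 ≤ C ∧ ∀ D : ℤ, D ≠ 0 → ∃ q : QuadraticMap ℤ (twist a b c D).Point ℝ,
      (∀ P, |q P - naiveHeight a b c D P| ≤ C) ∧ ∀ P, 0 ≤ q P := by
  obtain ⟨C, hC⟩ := exists_naiveHeight_parallelogram hd
  exact ⟨C, (abs_nonneg _).trans (hC 1 one_ne_zero 0 0), fun D hD ↦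
    exists_quadraticMap_near (hC D hD) fun P ↦ logHeight_nonneg _⟩

end NaiveHeight

section RationalHeight

lemma logHeight₁_div_of_gcd_eq_one {u v : ℤ} (h : Int.gcd u v = 1) (hv : v ≠ 0) :
    logHeight₁ ((u : ℚ) / v) = Real.log (max |(u : ℝ)| |(v : ℝ)|) := by
  wlog hpos : 0 < v generalizing u v
  · have := this (u := -u) (v := -v) (by simpa [Int.gcd] using h) (neg_ne_zero.2 hv) (by lia)
    push_cast at this
    rwa [neg_div_neg_eq, abs_neg, abs_neg] at this
  have hden : (((u : ℚ) / v).den : ℝ) = |(v : ℝ)| := by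
    rw [← Int.cast_natCast, Rat.den_div_eq_of_coprime hpos h, abs_of_pos (Int.cast_pos.2 hpos)]
  rw [Rat.logHeight₁_eq_log_max, Nat.cast_max, hden, Rat.num_div_eq_of_coprime hpos h,
    Nat.cast_natAbs, Int.cast_abs]

lemma one_le_ht (u v : ℤ) : 1 ≤ ht u v := le_max_left _ _

lemma ht_rpow_nonneg (u v : ℤ) (s : ℝ) : 0 ≤ ht u v ^ s :=
  Real.rpow_nonneg (zero_le_one.trans (one_le_ht u v)) s

lemma ht_eq_max_logHeight₁ {u v : ℤ} (h : Int.gcd u v = 1) (hv : v ≠ 0) :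
    ht u v = max 1 (logHeight₁ ((u : ℚ) / v)) := by
  rw [logHeight₁_div_of_gcd_eq_one h hv, ht]
  have hv1 : 1 ≤ |(v : ℝ)| := mod_cast Int.one_le_abs hv
  congr 1
  rcases eq_or_ne u 0 with rfl | hu
  · simp only [Int.cast_zero, abs_zero, Real.log_zero]
    rw [max_eq_right (Real.log_nonneg hv1), max_eq_right (by positivity)]
  · exact (Real.strictMonoOn_log.monotoneOn.map_max (by simpa using hu) (by simpa using hv)).symm

lemma logHeight₁_le_ht {u v : ℤ} (h : Int.gcd u v = 1) (hv : v ≠ 0) :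
    logHeight₁ ((u : ℚ) / v) ≤ ht u v :=
  (le_max_right _ _).trans_eq (ht_eq_max_logHeight₁ h hv).symm

lemma ht_num_den_le (x : ℚ) : ht x.num x.den ≤ logHeight₁ x + 1 := by
  have hgcd : Int.gcd x.num x.den = 1 := by simpa [Int.gcd] using x.reduced
  rw [ht_eq_max_logHeight₁ hgcd (mod_cast x.den_ne_zero), Int.cast_natCast, Rat.num_div_den]
  have := zero_le_logHeight₁ x
  exact max_le (by linarith) (by linarith)

end RationalHeight

section TwistPoints

open WeierstrassCurve.Affine

variable {a b c D : ℤ} {x y x' y' : ℚ}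

lemma twist_nonsingular (hd : cubicDisc a b c ≠ 0) (hD : D ≠ 0)
    (h : D * y ^ 2 = x ^ 3 + a * x ^ 2 + b * x + c) :
    (twist a b c D).Nonsingular (D * x) (D ^ 2 * y) := by
  rw [← equation_iff_nonsingular_of_Δ_ne_zero (twist_Δ_ne_zero hd hD), equation_iff]
  simp only [twist]
  linear_combination (D : ℚ) ^ 3 * h

lemma projX_some_mul (hD : D ≠ 0) (h : (twist a b c D).Nonsingular (D * x) y) :
    projX a b c D (.some _ _ h) = (x, 1) := by
  rw [projX_some, mul_div_cancel_left₀ _ (Int.cast_ne_zero.2 hD)]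

lemma exists_projX_eq (hD : D ≠ 0) {P : (twist a b c D).Point} (hP : P ≠ 0) :
    ∃ x y : ℚ, projX a b c D P = (x, 1) ∧ D * y ^ 2 = x ^ 3 + a * x ^ 2 + b * x + c := by
  have hD' : (D : ℚ) ≠ 0 := Int.cast_ne_zero.2 hD
  rcases P with _ | ⟨x, y, h⟩
  · exact absurd rfl hP
  · refine ⟨x / D, y / D ^ 2, rfl, ?_⟩
    field_simp
    linear_combination twist_equation_of_nonsingular h

lemma projX_add_some_some (hD : D ≠ 0) (h : (twist a b c D).Nonsingular (D * x) (D ^ 2 * y))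
    (h' : (twist a b c D).Nonsingular (D * x') (D ^ 2 * y')) (hx : x ≠ x') :
    projX a b c D (.some _ _ h + .some _ _ h') =
      (D * ((y - y') / (x - x')) ^ 2 - a - x - x', 1) := by
  have hD' : (D : ℚ) ≠ 0 := Int.cast_ne_zero.2 hD
  have hDx : D * x ≠ D * x' := fun h ↦ hx (mul_left_cancel₀ hD' h)
  have hxx : x - x' ≠ 0 := sub_ne_zero.2 hx
  rw [Point.add_of_X_ne hDx, projX_some, slope_of_X_ne hDx, twist_addX, ← mul_sub, ← mul_sub]
  congr 1
  field_simp

end TwistPoints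

section PointCounting

variable {G : Type*} [AddCommGroup G]

lemma exists_eq_smul_of_repr_eq_zero {M ι : Type*} [AddCommGroup M] [Finite ι]
    (b : Module.Basis ι ℤ M) {m : ℕ} {x : M} (hx : ∀ i, ((b.repr x i : ℤ) : ZMod m) = 0) :
    ∃ w, x = (m : ℤ) • w := by
  have := Fintype.ofFinite ι
  choose z hz using fun i ↦ (ZMod.intCast_zmod_eq_zero_iff_dvd _ m).1 (hx i)
  refine ⟨∑ i, z i • b i, ?_⟩
  rw [← b.sum_repr x, Finset.smul_sum]
  simp only [hz, mul_smul]

lemma exists_addMonoidHom_pi_zmod [Module.Finite ℤ G] (m : ℕ) :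
    ∃ φ : G →+ (Fin (Module.finrank ℤ G) → ZMod m),
      ∀ x, φ x = 0 → ∃ w, IsOfFinAddOrder (x - (m : ℤ) • w) := by
  let T := Submodule.torsion ℤ G
  have : Module.Free ℤ (G ⧸ T) := Module.free_of_finite_type_torsion_free'
  rw [← finrank_quotient_eq_of_le_torsion (le_refl T)]
  let b := Module.finBasis ℤ (G ⧸ T)
  refine ⟨AddMonoidHom.mk' (fun x i ↦ ((b.repr (T.mkQ x) i : ℤ) : ZMod m)) fun x y ↦ ?_,
    fun x hx ↦ ?_⟩
  · ext i
    simp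
  · obtain ⟨w', hw'⟩ := exists_eq_smul_of_repr_eq_zero b (congrFun hx)
    obtain ⟨w, rfl⟩ := T.mkQ_surjective w'
    refine ⟨w, ?_⟩
    have hmem : x - (m : ℤ) • w ∈ T := by
      rw [← Submodule.Quotient.mk_eq_zero, ← Submodule.mkQ_apply, map_sub, map_smul, hw', sub_self]
    obtain ⟨k, hk⟩ := (Submodule.mem_torsion_iff _).1 hmem
    exact isOfFinAddOrder_iff_zsmul_eq_zero.2 ⟨k, nonZeroDivisors.ne_zero k.2, hk⟩

lemma finrank_submodule_le_of_not_exists_linearIndependent {r : ℕ}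
    (hr : ¬ ∃ P : Fin (r + 1) → G, LinearIndependent ℤ P) (A : Submodule ℤ G) :
    Module.finrank ℤ A ≤ r := by
  by_contra! hlt
  obtain ⟨g, hg⟩ := exists_linearIndependent_of_le_finrank (Nat.succ_le_of_lt hlt)
  exact hr ⟨_, hg.map' A.subtype A.ker_subtype⟩

variable {q : QuadraticMap ℤ G ℝ} {μ : ℝ}

lemma isOfFinAddOrder_sub_of_congr (hq : ∀ P, 0 ≤ q P) (hμ : ∀ P, q P < μ → IsOfFinAddOrder P)
    {m : ℕ} {B : ℝ} (hB : 4 * B < m ^ 2 * μ) {P R w : G} (hP : q P ≤ B) (hR : q R ≤ B)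
    (hw : IsOfFinAddOrder (P - R - (m : ℤ) • w)) : IsOfFinAddOrder (P - R) := by
  have hsub : q (P - R) = m ^ 2 * q w := by
    rw [← sub_add_cancel (P - R) ((m : ℤ) • w), quadraticMap_add_of_isOfFinAddOrder q hw,
      quadraticMap_zsmul, Int.cast_natCast]
  have hle := quadraticMap_add_le q hq P (-R)
  rw [q.map_neg, ← sub_eq_add_neg, hsub] at hle
  have hqw : q w < μ := lt_of_mul_lt_mul_left (by linarith) (sq_nonneg (m : ℝ))
  rw [← sub_add_cancel (P - R) ((m : ℤ) • w)]
  exact hw.add (hμ w hqw).zsmul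

lemma card_le_of_quadraticMap_le (hq : ∀ P, 0 ≤ q P) {r : ℕ}
    (hr : ¬ ∃ P : Fin (r + 1) → G, LinearIndependent ℤ P)
    (hμ : ∀ P, q P < μ → IsOfFinAddOrder P) {T : Finset G} (hT : ∀ P, IsOfFinAddOrder P → P ∈ T)
    {S : Finset G} {B : ℝ} (hS : ∀ P ∈ S, q P ≤ B) {m : ℕ} (hm : m ≠ 0)
    (hB : 4 * B < m ^ 2 * μ) : S.card ≤ T.card * m ^ r := by
  classical
  let A : Submodule ℤ G := Submodule.span ℤ (S : Set G)
  have : Module.Finite ℤ A := Module.Finite.span_of_finite ℤ S.finite_toSet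
  have : NeZero m := ⟨hm⟩
  obtain ⟨φ, hφ⟩ := exists_addMonoidHom_pi_zmod (G := A) m
  let ψ (P : S) : Fin (Module.finrank ℤ A) → ZMod m := φ ⟨P, Submodule.subset_span P.2⟩
  have hfiber (P R : S) (h : ψ P = ψ R) : (P - R : G) ∈ T := by
    obtain ⟨w, hw⟩ := hφ (⟨P, Submodule.subset_span P.2⟩ - ⟨R, Submodule.subset_span R.2⟩)
      (by rw [map_sub, sub_eq_zero]; exact h)
    exact hT _ (isOfFinAddOrder_sub_of_congr hq hμ hB (hS P P.2) (hS R R.2)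
      (A.subtype.toAddMonoidHom.isOfFinAddOrder hw))
  have hcard := Finset.card_le_mul_card_image (f := ψ) S.attach T.card fun y hy ↦ by
    obtain ⟨R, -, rfl⟩ := Finset.mem_image.1 hy
    refine Finset.card_le_card_of_injOn (fun P ↦ (P - R : G)) (fun P hP ↦ ?_)
      fun P _ P' _ h ↦ Subtype.ext (sub_left_injective h)
    exact hfiber P R (Finset.mem_filter.1 hP).2
  rw [Finset.card_attach] at hcard
  refine hcard.trans (Nat.mul_le_mul_left _ ?_)
  calc _ ≤ Fintype.card (Fin (Module.finrank ℤ A) → ZMod m) := Finset.card_le_univ _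
    _ = m ^ Module.finrank ℤ A := by simp [ZMod.card]
    _ ≤ m ^ r := Nat.pow_le_pow_right (Nat.pos_of_ne_zero hm)
      (finrank_submodule_le_of_not_exists_linearIndependent hr A)

lemma two_rpow_sub_two_mul_pow (r k : ℕ) (j : ℝ) :
    ((2 : ℝ) ^ (r - 2 * j)) ^ k = (2 ^ k) ^ r * (4 ^ k) ^ (-j) := by
  rw [← Real.rpow_mul_natCast (by norm_num), ← Real.rpow_natCast 4 k, ← Real.rpow_mul (by norm_num),
    show (4 : ℝ) = 2 ^ (2 : ℝ) by norm_num, ← Real.rpow_mul (by norm_num), ← pow_mul,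
    ← Real.rpow_natCast 2 (k * r), ← Real.rpow_add (by norm_num)]
  congr 1
  push_cast
  ring

variable {r : ℕ} {j : ℝ}

lemma sum_dyadic_rpow_neg_le (hq : ∀ P, 0 ≤ q P)
    (hr : ¬ ∃ P : Fin (r + 1) → G, LinearIndependent ℤ P) (μ_pos : 0 < μ)
    (hμ : ∀ P, q P < μ → IsOfFinAddOrder P) {T : Finset G} (hT : ∀ P, IsOfFinAddOrder P → P ∈ T)
    (hj : 0 < j) (k : ℕ) {S : Finset G}
    (hS : ∀ P ∈ S, 4 ^ k * μ ≤ q P ∧ q P < 4 ^ (k + 1) * μ) :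
    ∑ P ∈ S, q P ^ (-j) ≤ T.card * 8 ^ r * μ ^ (-j) * ((2 : ℝ) ^ (r - 2 * j)) ^ k := by
  have hcard : (S.card : ℝ) ≤ T.card * (2 ^ (k + 3)) ^ r := by
    have hB : 4 * (4 ^ (k + 1) * μ) < ((2 ^ (k + 3) : ℕ) : ℝ) ^ 2 * μ := by
      have : ((2 ^ (k + 3) : ℕ) : ℝ) ^ 2 = 64 * 4 ^ k := by
        push_cast
        rw [← pow_mul, mul_comm, pow_mul, pow_add]
        norm_num
        ring
      rw [this, pow_succ]
      linarith [(by positivity : 0 < 4 ^ k * μ)]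
    exact_mod_cast card_le_of_quadraticMap_le hq hr hμ hT (fun P hP ↦ (hS P hP).2.le)
      (by positivity) hB
  calc ∑ P ∈ S, q P ^ (-j) ≤ S.card • (4 ^ k * μ) ^ (-j) :=
        Finset.sum_le_card_nsmul _ _ _ fun P hP ↦
          Real.rpow_le_rpow_of_nonpos (by positivity) (hS P hP).1 (by linarith)
    _ ≤ T.card * (2 ^ (k + 3)) ^ r * (4 ^ k * μ) ^ (-j) := by
        rw [nsmul_eq_mul]
        gcongr
    _ = T.card * 8 ^ r * μ ^ (-j) * ((2 : ℝ) ^ (r - 2 * j)) ^ k := by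
        rw [two_rpow_sub_two_mul_pow, Real.mul_rpow (by positivity) μ_pos.le, pow_add, mul_pow]
        norm_num
        ring

theorem sum_quadraticMap_rpow_neg_le (hq : ∀ P, 0 ≤ q P)
    (hr : ¬ ∃ P : Fin (r + 1) → G, LinearIndependent ℤ P) (μ_pos : 0 < μ)
    (hμ : ∀ P, q P < μ → IsOfFinAddOrder P) {T : Finset G} (hT : ∀ P, IsOfFinAddOrder P → P ∈ T)
    {S : Finset G} (hS : ∀ P ∈ S, μ ≤ q P) (hj : 0 < j) (hrj : r < 2 * j) :
    ∑ P ∈ S, q P ^ (-j) ≤ T.card * 8 ^ r * (1 - (2 : ℝ) ^ (r - 2 * j))⁻¹ * μ ^ (-j) := by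
  classical
  have hlevel (P : G) : ∃ n : ℕ, P ∈ S → 4 ^ n * μ ≤ q P ∧ q P < 4 ^ (n + 1) * μ := by
    by_cases hP : P ∈ S
    · obtain ⟨n, hle, hlt⟩ := exists_nat_pow_near ((one_le_div μ_pos).2 (hS P hP))
        (by norm_num : (1 : ℝ) < 4)
      exact ⟨n, fun _ ↦ ⟨(le_div_iff₀ μ_pos).1 hle, (div_lt_iff₀ μ_pos).1 hlt⟩⟩
    · exact ⟨0, fun h ↦ absurd h hP⟩
  choose n hn using hlevel
  set ρ : ℝ := 2 ^ (r - 2 * j)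
  have ρ_nonneg : 0 ≤ ρ := by positivity
  have ρ_lt_one : ρ < 1 := Real.rpow_lt_one_of_one_lt_of_neg (by norm_num) (by linarith)
  have hrange : ∀ P ∈ S, n P ∈ Finset.range (S.sup n + 1) := fun P hP ↦
    Finset.mem_range.2 (Nat.lt_succ_of_le (Finset.le_sup hP))
  calc ∑ P ∈ S, q P ^ (-j)
      = ∑ k ∈ Finset.range (S.sup n + 1), ∑ P ∈ S with n P = k, q P ^ (-j) :=
        (Finset.sum_fiberwise_of_maps_to hrange _).symm
    _ ≤ ∑ k ∈ Finset.range (S.sup n + 1), T.card * 8 ^ r * μ ^ (-j) * ρ ^ k := by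
        refine Finset.sum_le_sum fun k _ ↦
          sum_dyadic_rpow_neg_le hq hr μ_pos hμ hT hj k fun P hP ↦ ?_
        obtain ⟨hPS, rfl⟩ := Finset.mem_filter.1 hP
        exact hn P hPS
    _ ≤ T.card * 8 ^ r * μ ^ (-j) * (1 - ρ)⁻¹ := by
        rw [← Finset.mul_sum, ← tsum_geometric_of_lt_one ρ_nonneg ρ_lt_one]
        gcongr
        exact (summable_geometric_of_lt_one ρ_nonneg ρ_lt_one).sum_le_tsum _ fun i _ ↦ by positivity
    _ = T.card * 8 ^ r * (1 - ρ)⁻¹ * μ ^ (-j) := by ring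

end PointCounting

section Finiteness

variable {a b c : ℤ}

lemma exists_finset_projX (B : ℝ) : ∃ V : Finset (ℚ × ℚ), ∀ D : ℤ, D ≠ 0 →
    ∀ P : (twist a b c D).Point, naiveHeight a b c D P ≤ B → projX a b c D P ∈ V := by
  classical
  let bounded : Finset ℚ := (NumberField.finite_setOfPred_logHeight₁_le ℚ B).toFinset
  refine ⟨insert (1, 0) (bounded.image fun x ↦ (x, 1)), fun D hD P hP ↦ ?_⟩
  by_cases hP0 : P = 0
  · rw [hP0, projX_zero]
    exact Finset.mem_insert_self _ _
  · obtain ⟨x, y, hx, -⟩ := exists_projX_eq hD hP0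
    rw [naiveHeight_eq_logHeight₁ hx] at hP
    simp [hx, bounded, hP]

theorem exists_card_naiveHeight_le (B : ℝ) : ∃ M : ℕ, ∀ D : ℤ, D ≠ 0 →
    ∃ T : Finset (twist a b c D).Point, T.card ≤ M ∧ ∀ P, naiveHeight a b c D P ≤ B → P ∈ T := by
  classical
  obtain ⟨V, hV⟩ := exists_finset_projX (a := a) (b := b) (c := c) B
  refine ⟨V.card + V.card, fun D hD ↦ ?_⟩
  let lift := Function.invFun (projX a b c D)
  refine ⟨V.image lift ∪ V.image (-lift), (Finset.card_union_le _ _).trans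
    (add_le_add Finset.card_image_le Finset.card_image_le), fun P hP ↦ ?_⟩
  have hmem := hV D hD P hP
  have hlift : projX a b c D P = projX a b c D (lift (projX a b c D P)) :=
    (Function.invFun_eq ⟨P, rfl⟩).symm
  rw [Finset.mem_union, Finset.mem_image, Finset.mem_image]
  exact (eq_or_eq_neg_of_projX_eq hD hlift).imp (fun h ↦ ⟨_, hmem, h.symm⟩)
    fun h ↦ ⟨_, hmem, h.symm⟩

variable {C : ℝ} {D : ℤ} {q : QuadraticMap ℤ (twist a b c D).Point ℝ}

theorem isOfFinAddOrder_iff_canonicalHeight_eq_zero (hD : D ≠ 0)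
    (hqC : ∀ P, |q P - naiveHeight a b c D P| ≤ C) {P : (twist a b c D).Point} :
    IsOfFinAddOrder P ↔ q P = 0 := by
  refine ⟨quadraticMap_eq_zero_of_isOfFinAddOrder q, fun h ↦ ?_⟩
  obtain ⟨M, hM⟩ := exists_card_naiveHeight_le (a := a) (b := b) (c := c) C
  obtain ⟨T, -, hT⟩ := hM D hD
  rw [← finite_multiples]
  refine T.finite_toSet.subset ?_
  rintro _ ⟨n, rfl⟩
  have hn : q (n • P) = 0 := by
    rw [← natCast_zsmul, quadraticMap_zsmul, h, mul_zero]
  exact hT _ (by linarith [(abs_le.1 (hqC (n • P))).1])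

theorem exists_pos_canonicalHeight_gap (hD : D ≠ 0)
    (hqC : ∀ P, |q P - naiveHeight a b c D P| ≤ C) (hq : ∀ P, 0 ≤ q P) :
    ∃ μ > 0, ∀ P, q P < μ → IsOfFinAddOrder P := by
  obtain ⟨M, hM⟩ := exists_card_naiveHeight_le (a := a) (b := b) (c := c) (1 + C)
  obtain ⟨T, -, hT⟩ := hM D hD
  have below_T : ∀ᶠ μ in 𝓝[>] (0 : ℝ), ∀ P ∈ T, ¬ IsOfFinAddOrder P → μ ≤ q P := by
    refine (Filter.eventually_all_finset T).2 fun P _ ↦ eventually_imp_distrib_left.2 fun hP ↦ ?_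
    have hqP : 0 < q P :=
      (hq P).lt_of_ne' (mt (isOfFinAddOrder_iff_canonicalHeight_eq_zero hD hqC).2 hP)
    exact nhdsWithin_le_nhds (eventually_le_nhds hqP)
  obtain ⟨μ, hμT, μ_pos, μ_lt⟩ :=
    (below_T.and (Ioo_mem_nhdsGT (zero_lt_one' ℝ))).exists
  refine ⟨μ, μ_pos, fun P hP ↦ by_contra fun hPt ↦ hP.not_ge (hμT P (hT P ?_) hPt)⟩
  linarith [(abs_le.1 (hqC P)).1]

end Finiteness

section BinaryForm

variable {a b c : ℤ}

lemma snd_ne_zero_of_mem_Psi {p : ℤ × ℤ} (hp : p ∈ Psi a b c) : p.2 ≠ 0 :=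
  fun h ↦ hp.2 (by simp [Fbin, h])

lemma Fbin_eq_pow_mul {u v : ℤ} (hv : v ≠ 0) : ((Fbin a b c u v : ℤ) : ℚ) =
    v ^ 4 * (((u : ℚ) / v) ^ 3 + a * ((u : ℚ) / v) ^ 2 + b * ((u : ℚ) / v) + c) := by
  have : (v : ℚ) ≠ 0 := Int.cast_ne_zero.2 hv
  simp only [Fbin]
  push_cast
  field_simp

lemma Fbin_num_den (x : ℚ) : ((Fbin a b c x.num x.den : ℤ) : ℚ) =
    x.den ^ 4 * (x ^ 3 + a * x ^ 2 + b * x + c) := by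
  rw [Fbin_eq_pow_mul (mod_cast x.den_ne_zero), Int.cast_natCast, Rat.num_div_den]

lemma abs_le_exp_ht (u v : ℤ) : |(u : ℝ)| ≤ Real.exp (ht u v) ∧ |(v : ℝ)| ≤ Real.exp (ht u v) :=
  ⟨(Real.le_exp_log _).trans (Real.exp_le_exp.2 (le_max_of_le_right (le_max_left _ _))),
    (Real.le_exp_log _).trans (Real.exp_le_exp.2 (le_max_of_le_right (le_max_right _ _)))⟩

lemma abs_Fbin_le {u v : ℤ} {M : ℝ} (hu : |(u : ℝ)| ≤ M) (hv : |(v : ℝ)| ≤ M) :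
    |(Fbin a b c u v : ℝ)| ≤ (1 + |(a : ℝ)| + |(b : ℝ)| + |(c : ℝ)|) * M ^ 4 := by
  have hM : 0 ≤ M := (abs_nonneg _).trans hu
  have hcubic : |(u : ℝ) ^ 3 + a * u ^ 2 * v + b * u * v ^ 2 + c * v ^ 3| ≤
      M ^ 3 + |(a : ℝ)| * M ^ 2 * M + |(b : ℝ)| * M * M ^ 2 + |(c : ℝ)| * M ^ 3 := by
    refine (abs_add_le _ _).trans (add_le_add ((abs_add_le _ _).trans (add_le_add
      ((abs_add_le _ _).trans (add_le_add ?_ ?_)) ?_)) ?_) <;>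
    · simp only [abs_mul, abs_pow]
      gcongr
  simp only [Fbin]
  push_cast
  rw [abs_mul]
  calc |(v : ℝ)| * |(u : ℝ) ^ 3 + a * u ^ 2 * v + b * u * v ^ 2 + c * v ^ 3|
      ≤ M * (M ^ 3 + |(a : ℝ)| * M ^ 2 * M + |(b : ℝ)| * M * M ^ 2 + |(c : ℝ)| * M ^ 3) := by gcongr
    _ = (1 + |(a : ℝ)| + |(b : ℝ)| + |(c : ℝ)|) * M ^ 4 := by ring

lemma log_abs_Fbin_le {u v : ℤ} (h : Fbin a b c u v ≠ 0) :
    Real.log |(Fbin a b c u v : ℝ)| ≤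
      Real.log (1 + |(a : ℝ)| + |(b : ℝ)| + |(c : ℝ)|) + 4 * ht u v := by
  obtain ⟨hu, hv⟩ := abs_le_exp_ht u v
  calc Real.log |(Fbin a b c u v : ℝ)|
      ≤ Real.log ((1 + |(a : ℝ)| + |(b : ℝ)| + |(c : ℝ)|) * Real.exp (ht u v) ^ 4) :=
        Real.log_le_log (by positivity) (abs_Fbin_le hu hv)
    _ = Real.log (1 + |(a : ℝ)| + |(b : ℝ)| + |(c : ℝ)|) + 4 * ht u v := by
        rw [Real.log_mul (by positivity) (by positivity), Real.log_pow, Real.log_exp]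
        norm_num

lemma exists_squarefree_mul_sq {n : ℤ} (hn : n ≠ 0) :
    ∃ (D : ℤ) (N : ℕ), Squarefree D ∧ N ≠ 0 ∧ n = D * N ^ 2 := by
  obtain ⟨s, N, hN, hs⟩ := Nat.sq_mul_squarefree n.natAbs
  refine ⟨n.sign * s, N, ?_, ?_, ?_⟩
  · rw [← Int.squarefree_natAbs, Int.natAbs_mul, Int.natAbs_sign_of_ne_zero hn, one_mul]
    simpa using hs
  · rintro rfl
    exact hn (Int.natAbs_eq_zero.1 (by simpa using hN.symm))
  · have habs : (n.natAbs : ℤ) = N ^ 2 * s := mod_cast hN.symm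
    linear_combination -Int.sign_mul_natAbs n + n.sign * habs

lemma exists_eq_mul_den_sq_of_eq_mul_sq {D F : ℤ} {z : ℚ} (h : (F : ℚ) = D * z ^ 2) :
    ∃ D' : ℤ, D = D' * (z.den : ℤ) ^ 2 ∧ F = D' * z.num ^ 2 := by
  have hden : (z.den : ℤ) ^ 2 ≠ 0 := pow_ne_zero _ (mod_cast z.den_ne_zero)
  have cross : F * (z.den : ℤ) ^ 2 = D * z.num ^ 2 := by
    have : (F : ℚ) * z.den ^ 2 = D * z.num ^ 2 := by
      rw [h, mul_assoc, ← mul_pow, Rat.mul_den_eq_num]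
    exact_mod_cast this
  have hcop : IsCoprime ((z.den : ℤ) ^ 2) (z.num ^ 2) :=
    (Rat.isCoprime_num_den z).symm.pow
  obtain ⟨D', hD'⟩ : (z.den : ℤ) ^ 2 ∣ D := hcop.dvd_of_dvd_mul_right ⟨F, by rw [← cross, mul_comm]⟩
  refine ⟨D', hD'.trans (mul_comm _ _), mul_right_cancel₀ hden ?_⟩
  rw [cross, hD']
  ring

lemma abs_le_of_squarefree_of_eq_mul_sq {D F : ℤ} (hD : Squarefree D) (hF : F ≠ 0) {z : ℚ}
    (h : (F : ℚ) = D * z ^ 2) : |D| ≤ |F| := by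
  obtain ⟨D', hD', rfl⟩ := exists_eq_mul_den_sq_of_eq_mul_sq h
  have hunit : IsUnit (z.den : ℤ) := hD _ ⟨D', by rw [hD']; ring⟩
  rw [Int.isUnit_sq hunit, mul_one] at hD'
  rw [hD', abs_mul]
  exact le_mul_of_one_le_right (abs_nonneg _) (Int.one_le_abs (right_ne_zero_of_mul hF))

lemma eq_or_eq_neg_of_div_eq_div {p p' : ℤ × ℤ} (h : Int.gcd p.1 p.2 = 1)
    (h' : Int.gcd p'.1 p'.2 = 1) (hp : p.2 ≠ 0) (hp' : p'.2 ≠ 0)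
    (heq : (p.1 : ℚ) / p.2 = p'.1 / p'.2) : p = p' ∨ p = -p' := by
  rw [div_eq_div_iff (Int.cast_ne_zero.2 hp) (Int.cast_ne_zero.2 hp')] at heq
  have cross : p.1 * p'.2 = p'.1 * p.2 := mod_cast heq
  have hdvd : p.2 ∣ p'.2 :=
    (Int.isCoprime_iff_gcd_eq_one.2 h).symm.dvd_of_dvd_mul_left ⟨p'.1, by rw [cross, mul_comm]⟩
  have hdvd' : p'.2 ∣ p.2 :=
    (Int.isCoprime_iff_gcd_eq_one.2 h').symm.dvd_of_dvd_mul_left ⟨p.1, by rw [← cross, mul_comm]⟩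
  refine (Int.natAbs_eq_natAbs_iff.1 (Int.natAbs_eq_of_dvd_dvd hdvd hdvd')).imp
    (fun hsnd ↦ Prod.ext (mul_right_cancel₀ hp' ?_) hsnd)
    fun hsnd ↦ Prod.ext (mul_right_cancel₀ hp' ?_) hsnd
  · rw [cross, hsnd]
  · rw [cross, hsnd, Prod.fst_neg, Prod.snd_neg, neg_mul, mul_neg]

end BinaryForm

section TwistFiber

variable {a b c D : ℤ}

lemma add_self_eq_zero_iff_of_projX_eq (hD : D ≠ 0) {P : (twist a b c D).Point} {x : ℚ}
    (hx : projX a b c D P = (x, 1)) : P + P = 0 ↔ x ^ 3 + a * x ^ 2 + b * x + c = 0 := by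
  obtain ⟨l, hl, heq⟩ := sumDiffRel_projX hD P P
  have hsnd : 4 * (x ^ 3 + a * x ^ 2 + b * x + c) = l * (projX a b c D (P + P)).2 := by
    rw [sub_self, projX_zero, hx] at heq
    have := congrArg (fun z ↦ z.2.1) heq
    simp only [addSubX, symProd, Prod.smul_snd, Prod.smul_fst, smul_eq_mul] at this
    linear_combination this
  rw [← projX_snd_eq_zero_iff]
  constructor <;> intro h <;> simpa [h, hl] using hsnd

theorem exists_log_le_naiveHeight (a b c : ℤ) : ∃ C : ℝ, 0 ≤ C ∧ ∀ D : ℤ, Squarefree D →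
    ∀ P : (twist a b c D).Point, P + P ≠ 0 →
      Real.log (|(D : ℝ)| + 2) ≤ C + 4 * naiveHeight a b c D P := by
  set A : ℝ := 1 + |(a : ℝ)| + |(b : ℝ)| + |(c : ℝ)|
  have hA : 1 ≤ A := by
    simp only [A, add_assoc]
    exact le_add_of_nonneg_right (by positivity)
  refine ⟨Real.log A + 4 + Real.log 3,
    by linarith [Real.log_nonneg hA, Real.log_nonneg (by norm_num : (1 : ℝ) ≤ 3)],
    fun D hD P hP ↦ ?_⟩
  obtain ⟨x, y, hx, hxy⟩ := exists_projX_eq hD.ne_zero fun h : P = 0 ↦ hP (by rw [h, add_zero])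
  have hf := mt (add_self_eq_zero_iff_of_projX_eq hD.ne_zero hx).2 hP
  have hden : (x.den : ℚ) ^ 4 ≠ 0 := pow_ne_zero _ (mod_cast x.den_ne_zero)
  have hF := Fbin_num_den (a := a) (b := b) (c := c) x
  have hF0 : Fbin a b c x.num x.den ≠ 0 := Int.cast_ne_zero.1 (hF ▸ mul_ne_zero hden hf)
  have hDF : |(D : ℝ)| ≤ |(Fbin a b c x.num x.den : ℝ)| := by
    have : (Fbin a b c x.num x.den : ℚ) = D * (x.den ^ 2 * y) ^ 2 := by rw [hF, ← hxy]; ring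
    exact_mod_cast abs_le_of_squarefree_of_eq_mul_sq hD hF0 this
  have hF1 : 1 ≤ |(Fbin a b c x.num x.den : ℝ)| := mod_cast Int.one_le_abs hF0
  calc Real.log (|(D : ℝ)| + 2)
      ≤ Real.log (3 * |(Fbin a b c x.num x.den : ℝ)|) :=
        Real.log_le_log (by positivity) (by linarith)
    _ = Real.log 3 + Real.log |(Fbin a b c x.num x.den : ℝ)| :=
        Real.log_mul (by norm_num) (by linarith)
    _ ≤ Real.log A + 4 + Real.log 3 + 4 * naiveHeight a b c D P := by
        rw [naiveHeight_eq_logHeight₁ hx]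
        linarith [log_abs_Fbin_le hF0, ht_num_den_le x]

/-- The pairs `(u, v) ∈ Ψ` for which `F(u, v)` has the square class of `D`, that is, for which
`u/v` is the `x`-coordinate of a rational point on `Dy² = f(x)`. -/
def twistFiber (a b c D : ℤ) : Set (ℤ × ℤ) :=
  {p | p ∈ Psi a b c ∧ ∃ N : ℤ, Fbin a b c p.1 p.2 = D * N ^ 2}

lemma exists_point_of_mem_twistFiber (hd : cubicDisc a b c ≠ 0) (hD : D ≠ 0) {p : ℤ × ℤ}
    (hp : p ∈ twistFiber a b c D) :
    ∃ P : (twist a b c D).Point, projX a b c D P = ((p.1 : ℚ) / p.2, 1) ∧ P + P ≠ 0 := by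
  obtain ⟨hpsi, N, hN⟩ := hp
  have hv : (p.2 : ℚ) ≠ 0 := Int.cast_ne_zero.2 (snd_ne_zero_of_mem_Psi hpsi)
  have hF := Fbin_eq_pow_mul (a := a) (b := b) (c := c) (u := p.1) (snd_ne_zero_of_mem_Psi hpsi)
  set x : ℚ := (p.1 : ℚ) / p.2
  have hxy : D * ((N : ℚ) / p.2 ^ 2) ^ 2 = x ^ 3 + a * x ^ 2 + b * x + c := by
    refine mul_left_cancel₀ (pow_ne_zero 4 hv) ?_
    rw [← hF, hN]
    push_cast
    field_simp
  refine ⟨_, projX_some_mul hD (twist_nonsingular hd hD hxy), fun h ↦ hpsi.2 ?_⟩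
  rw [add_self_eq_zero_iff_of_projX_eq hD (projX_some_mul hD _)] at h
  rwa [h, mul_zero, Int.cast_eq_zero] at hF

-- The points chosen over `p` and `p'` agree only if `p' = ± p`, whence the factor `2`.
lemma exists_sum_twistFiber_le (hd : cubicDisc a b c ≠ 0) (hD : D ≠ 0)
    (S : Finset (twistFiber a b c D)) {w : twistFiber a b c D → ℝ}
    {g : (twist a b c D).Point → ℝ} (hg : ∀ P, 0 ≤ g P)
    (hwg : ∀ (p : twistFiber a b c D) (P),
      projX a b c D P = ((p.1.1 : ℚ) / p.1.2, 1) → P + P ≠ 0 → w p ≤ g P) :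
    ∃ I : Finset (twist a b c D).Point, ∑ p ∈ S, w p ≤ 2 * ∑ P ∈ I, g P := by
  classical
  choose point hpoint using fun p : twistFiber a b c D ↦ exists_point_of_mem_twistFiber hd hD p.2
  have hfiber (p p') (h : point p' = point p) : p'.1 = p.1 ∨ p'.1 = -p.1 := by
    have hx := (hpoint p').1
    rw [h, (hpoint p).1, Prod.mk.injEq] at hx
    exact eq_or_eq_neg_of_div_eq_div p'.2.1.1 p.2.1.1 (snd_ne_zero_of_mem_Psi p'.2.1)
      (snd_ne_zero_of_mem_Psi p.2.1) hx.1.symm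
  have hcard (p) : {p' ∈ S | point p' = point p}.card ≤ 2 :=
    (Finset.card_le_card_of_injOn (t := {p.1, -p.1}) Subtype.val
      (fun p' hp' ↦ by simpa using hfiber p p' (Finset.mem_filter.1 hp').2)
      Subtype.val_injective.injOn).trans Finset.card_le_two
  refine ⟨S.image point, ?_⟩
  calc ∑ p ∈ S, w p
      ≤ ∑ p ∈ S, g (point p) :=
        Finset.sum_le_sum fun p _ ↦ hwg p _ (hpoint p).1 (hpoint p).2
    _ = ∑ P ∈ S.image point, {p ∈ S | point p = P}.card • g P := Finset.sum_comp g point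
    _ ≤ ∑ P ∈ S.image point, 2 * g P := by
        refine Finset.sum_le_sum (Finset.forall_mem_image.2 fun p _ ↦ ?_)
        rw [nsmul_eq_mul]
        exact mul_le_mul_of_nonneg_right (mod_cast hcard p) (hg _)
    _ = 2 * ∑ P ∈ S.image point, g P := (Finset.mul_sum ..).symm

variable {C j μ : ℝ} {r : ℕ} {q : QuadraticMap ℤ (twist a b c D).Point ℝ}

lemma ht_rpow_neg_le (hqC : ∀ P, |q P - naiveHeight a b c D P| ≤ C) (hC : 0 ≤ C) (hj : 0 ≤ j)
    {p : ℤ × ℤ} (hp : p ∈ Psi a b c) {P : (twist a b c D).Point}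
    (hP : projX a b c D P = ((p.1 : ℚ) / p.2, 1)) (hqP : 0 < q P) :
    ht p.1 p.2 ^ (-j) ≤ (1 + C) ^ j * q P ^ (-j) := by
  have hle : q P / (1 + C) ≤ ht p.1 p.2 := by
    have hht := logHeight₁_le_ht hp.1 (snd_ne_zero_of_mem_Psi hp)
    rw [← naiveHeight_eq_logHeight₁ hP] at hht
    rw [div_le_iff₀ (by linarith)]
    nlinarith [(abs_le.1 (hqC P)).2, one_le_ht p.1 p.2]
  calc ht p.1 p.2 ^ (-j)
      ≤ (q P / (1 + C)) ^ (-j) :=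
        Real.rpow_le_rpow_of_nonpos (by positivity) hle (neg_nonpos.2 hj)
    _ = (1 + C) ^ j * q P ^ (-j) := by
        rw [Real.div_rpow hqP.le (by linarith), Real.rpow_neg (by linarith : 0 ≤ 1 + C) j,
          div_inv_eq_mul, mul_comm]

theorem sum_twistFiber_rpow_neg_le (hd : cubicDisc a b c ≠ 0) (hD : D ≠ 0)
    (hqC : ∀ P, |q P - naiveHeight a b c D P| ≤ C) (hC : 0 ≤ C) (hq : ∀ P, 0 ≤ q P)
    (hr : ¬ ∃ P : Fin (r + 1) → (twist a b c D).Point, LinearIndependent ℤ P)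
    (hj : 0 < j) (hrj : r < 2 * j) (μ_pos : 0 < μ) (hμ : ∀ P, q P < μ → IsOfFinAddOrder P)
    {T T' : Finset (twist a b c D).Point} (hT : ∀ P, IsOfFinAddOrder P → P ∈ T)
    (hT' : ∀ P, IsOfFinAddOrder P → P + P ≠ 0 → P ∈ T')
    (S : Finset (twistFiber a b c D)) :
    ∑ p ∈ S, ht p.1.1 p.1.2 ^ (-j) ≤ 2 * (T'.card +
      (1 + C) ^ j * (T.card * 8 ^ r * (1 - (2 : ℝ) ^ (r - 2 * j))⁻¹ * μ ^ (-j))) := by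
  classical
  have torsion_iff {P} := isOfFinAddOrder_iff_canonicalHeight_eq_zero (P := P) hD hqC
  -- On torsion points `q P ^ (-j) = 0 ^ (-j)` is the junk value `0`.
  let g (P : (twist a b c D).Point) : ℝ :=
    (if P ∈ T' then 1 else 0) + (1 + C) ^ j * q P ^ (-j)
  have hg (P) : 0 ≤ g P := by
    have := hq P
    positivity
  have hwg (p : twistFiber a b c D) (P) (hP : projX a b c D P = ((p.1.1 : ℚ) / p.1.2, 1))
      (hPP : P + P ≠ 0) : ht p.1.1 p.1.2 ^ (-j) ≤ g P := by
    by_cases hPt : IsOfFinAddOrder P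
    · simp only [g, hT' P hPt hPP, if_true, torsion_iff.1 hPt]
      rw [Real.zero_rpow (by linarith), mul_zero, add_zero]
      exact Real.rpow_le_one_of_one_le_of_nonpos (one_le_ht _ _) (by linarith)
    · have hqP := (hq P).lt_of_ne' (mt torsion_iff.2 hPt)
      exact (ht_rpow_neg_le hqC hC hj.le p.2.1 hP hqP).trans
        (le_add_of_nonneg_left (by positivity))
  obtain ⟨I, hI⟩ := exists_sum_twistFiber_le hd hD S hg hwg
  have hsum : ∑ P ∈ I, q P ^ (-j) = ∑ P ∈ I with μ ≤ q P, q P ^ (-j) := by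
    refine (Finset.sum_filter_of_ne fun P _ hne ↦ not_lt.1 fun hlt ↦ hne ?_).symm
    rw [torsion_iff.1 (hμ P hlt), Real.zero_rpow (by linarith)]
  refine hI.trans ?_
  rw [Finset.sum_add_distrib, ← Finset.mul_sum, hsum, Finset.sum_boole]
  gcongr
  · exact fun P hP ↦ (Finset.mem_filter.1 hP).2
  · exact sum_quadraticMap_rpow_neg_le hq hr μ_pos hμ hT (fun P hP ↦ (Finset.mem_filter.1 hP).2)
      hj hrj

end TwistFiber

section RankBound

variable {a b c : ℤ} {j : ℝ}

lemma RankBound.exists_natCast_lt (hj : 0 < j) (h : RankBound a b c j) :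
    ∃ r : ℕ, (r : ℝ) < 2 * j ∧ ∀ D : ℤ, D ≠ 0 →
      ¬ ∃ P : Fin (r + 1) → (twist a b c D).Point, LinearIndependent ℤ P := by
  obtain ⟨r, hr⟩ : ∃ r, ⌈2 * j⌉₊ = r + 1 :=
    Nat.exists_eq_succ_of_ne_zero (Nat.ceil_pos.2 (by linarith)).ne'
  refine ⟨r, Nat.lt_ceil.1 (by lia), ?_⟩
  rw [← hr]
  exact h

theorem RankBound.summable_twistFiber (hj : 0 < j) (h : RankBound a b c j)
    (hd : cubicDisc a b c ≠ 0) {D : ℤ} (hD : D ≠ 0) :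
    Summable fun p : twistFiber a b c D ↦ ht p.1.1 p.1.2 ^ (-j) := by
  obtain ⟨C, hC, hheight⟩ := exists_canonicalHeight hd
  obtain ⟨q, hqC, hq⟩ := hheight D hD
  obtain ⟨r, hrj, hr⟩ := h.exists_natCast_lt hj
  obtain ⟨M, hM⟩ := exists_card_naiveHeight_le (a := a) (b := b) (c := c) C
  obtain ⟨T, -, hT⟩ := hM D hD
  have hT' (P) (hP : IsOfFinAddOrder P) : P ∈ T := hT P <| by
    have := (isOfFinAddOrder_iff_canonicalHeight_eq_zero hD hqC).1 hP
    linarith [(abs_le.1 (hqC P)).1]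
  obtain ⟨μ, μ_pos, hμ⟩ := exists_pos_canonicalHeight_gap hD hqC hq
  exact summable_of_sum_le (fun p ↦ ht_rpow_nonneg _ _ _)
    (sum_twistFiber_rpow_neg_le hd hD hqC hC hq (hr D hD) hj hrj μ_pos hμ hT' fun P hP _ ↦ hT' P hP)

-- A point of `E^{(D)}` that is not 2-torsion has canonical height at least `log |D| / 8`,
-- so for large `D` there is no other torsion to account for.
theorem RankBound.exists_tsum_twistFiber_le (hj : 0 < j) (h : RankBound a b c j)
    (hd : cubicDisc a b c ≠ 0) :
    ∃ K L : ℝ, ∀ D : ℤ, Squarefree D → L < Real.log (|(D : ℝ)| + 2) →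
      ∑' p : twistFiber a b c D, ht p.1.1 p.1.2 ^ (-j) ≤ K * Real.log (|(D : ℝ)| + 2) ^ (-j) := by
  obtain ⟨C, hC, hheight⟩ := exists_canonicalHeight hd
  obtain ⟨C', hC', hlog⟩ := exists_log_le_naiveHeight a b c
  obtain ⟨r, hrj, hr⟩ := h.exists_natCast_lt hj
  obtain ⟨M, hM⟩ := exists_card_naiveHeight_le (a := a) (b := b) (c := c) C
  refine ⟨2 * ((1 + C) ^ j * (M * 8 ^ r * (1 - (2 : ℝ) ^ (r - 2 * j))⁻¹ * 8 ^ j)),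
    2 * (C' + 4 * C), fun D hD hL ↦ ?_⟩
  have hD0 := hD.ne_zero
  obtain ⟨q, hqC, hq⟩ := hheight D hD0
  obtain ⟨T, hTM, hT⟩ := hM D hD0
  set ℓ := Real.log (|(D : ℝ)| + 2)
  have ℓ_pos : 0 < ℓ := by linarith
  have large (P) (hP : P + P ≠ 0) : ℓ / 8 ≤ q P := by
    linarith [hlog D hD P hP, (abs_le.1 (hqC P)).1]
  have hμ (P) (hP : q P < ℓ / 8) : IsOfFinAddOrder P :=
    isOfFinAddOrder_iff_nsmul_eq_zero.2 ⟨2, two_pos, by_contra fun h2 ↦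
      hP.not_ge (large P (by rwa [two_nsmul] at h2))⟩
  have torsion {P} (hP : IsOfFinAddOrder P) : q P = 0 :=
    (isOfFinAddOrder_iff_canonicalHeight_eq_zero hD0 hqC).1 hP
  have hsum := sum_twistFiber_rpow_neg_le (T' := ∅) hd hD0 hqC hC hq (hr D hD0) hj hrj
    (by positivity) hμ (fun P hP ↦ hT P (by linarith [torsion hP, (abs_le.1 (hqC P)).1]))
    (fun P hP h2 ↦ by linarith [torsion hP, large P h2])
  have hgeom : 0 ≤ (1 - (2 : ℝ) ^ (r - 2 * j))⁻¹ := inv_nonneg.2 <| sub_nonneg.2 <|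
    Real.rpow_le_one_of_one_le_of_nonpos one_le_two (by linarith)
  refine (h.summable_twistFiber hj hd hD0).tsum_le_of_sum_le fun S ↦ ?_
  calc ∑ p ∈ S, ht p.1.1 p.1.2 ^ (-j)
      ≤ 2 * ((1 + C) ^ j * (T.card * 8 ^ r * (1 - (2 : ℝ) ^ (r - 2 * j))⁻¹ * (ℓ / 8) ^ (-j))) := by
        simpa only [Finset.card_empty, Nat.cast_zero, zero_add] using hsum S
    _ ≤ 2 * ((1 + C) ^ j * (M * 8 ^ r * (1 - (2 : ℝ) ^ (r - 2 * j))⁻¹ * (ℓ / 8) ^ (-j))) := by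
        gcongr
    _ = _ := by
        rw [Real.div_rpow ℓ_pos.le (by norm_num), Real.rpow_neg (by norm_num : (0 : ℝ) ≤ 8),
          div_inv_eq_mul]
        ring

end RankBound

section Convergence

variable {a b c : ℤ} {j k : ℝ}

theorem summable_inv_mul_log_rpow_neg (hj : 1 < j) :
    Summable fun n : ℕ ↦ (n : ℝ)⁻¹ * Real.log (n + 2) ^ (-j) := by
  have hlog (n : ℕ) : 0 < Real.log ((n : ℝ) + 2) :=
    Real.log_pos (by linarith [n.cast_nonneg (α := ℝ)])
  rw [← summable_condensed_iff_of_nonneg (fun n ↦ by have := hlog n; positivity)]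
  · have hpow : Summable fun i : ℕ ↦ Real.log 2 ^ (-j) * (i : ℝ) ^ (-j) :=
      (Real.summable_nat_rpow.2 (by linarith)).mul_left _
    rw [← summable_nat_add_iff 1] at hpow ⊢
    refine hpow.of_nonneg_of_le (fun i ↦ by have := hlog (2 ^ (i + 1)); positivity) fun i ↦ ?_
    have hlog2 : 0 < Real.log 2 := Real.log_pos one_lt_two
    have h2pow : (0 : ℝ) < 2 ^ (i + 1) := by positivity
    push_cast
    rw [mul_inv_cancel_left₀ h2pow.ne', ← Real.mul_rpow hlog2.le (by positivity)]
    refine Real.rpow_le_rpow_of_nonpos (by positivity) ?_ (by linarith)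
    calc Real.log 2 * ((i : ℝ) + 1) = Real.log (2 ^ (i + 1)) := by
          rw [Real.log_pow, mul_comm, Nat.cast_succ]
      _ ≤ Real.log (2 ^ (i + 1) + 2) := Real.log_le_log h2pow (by linarith)
  · intro m n hm hmn
    have : (0 : ℝ) < m := mod_cast hm
    have hmn' : (m : ℝ) ≤ n := mod_cast hmn
    have := Real.rpow_nonneg (hlog n).le (-j)
    have hlog_le : Real.log ((m : ℝ) + 2) ≤ Real.log (n + 2) :=
      Real.log_le_log (by positivity) (by linarith)
    have := Real.rpow_le_rpow_of_nonpos (hlog m) hlog_le (by linarith : -j ≤ 0)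
    gcongr

theorem summable_int_abs_inv_mul_log_rpow_neg (hj : 1 < j) :
    Summable fun D : ℤ ↦ |(D : ℝ)|⁻¹ * Real.log (|(D : ℝ)| + 2) ^ (-j) := by
  have h := summable_inv_mul_log_rpow_neg hj
  exact .of_nat_of_neg (by simpa using h) (by simpa using h)

lemma eventually_cofinite_lt_log (L : ℝ) :
    ∀ᶠ D : ℤ in cofinite, L < Real.log (|(D : ℝ)| + 2) := by
  have habs : Tendsto (fun D : ℤ ↦ |(D : ℝ)| + 2) cofinite atTop := by
    exact tendsto_atTop_add_const_right _ _
      (tendsto_norm_cocompact_atTop.comp Int.tendsto_coe_cofinite)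
  exact (Real.tendsto_log_atTop.comp habs).eventually_gt_atTop L

theorem RankBound.summable_sigma_twistFiber (hj : 1 < j) (h : RankBound a b c j)
    (hd : cubicDisc a b c ≠ 0) :
    Summable fun x : Σ D : {D : ℤ // Squarefree D}, twistFiber a b c D ↦
      |(x.1 : ℝ)|⁻¹ * ht x.2.1.1 x.2.1.2 ^ (-j) := by
  have hj0 : 0 < j := by linarith
  obtain ⟨K, L, hKL⟩ := h.exists_tsum_twistFiber_le hj0 hd
  refine (summable_sigma_of_nonneg fun x ↦ mul_nonneg (by positivity) (ht_rpow_nonneg _ _ _)).2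
    ⟨fun D ↦ (h.summable_twistFiber hj0 hd D.2.ne_zero).mul_left |(D : ℝ)|⁻¹, ?_⟩
  simp only [tsum_mul_left]
  refine .of_norm_bounded_eventually
    (((summable_int_abs_inv_mul_log_rpow_neg hj).mul_left K).comp_injective
      Subtype.val_injective) ?_
  filter_upwards [Subtype.val_injective.tendsto_cofinite.eventually (eventually_cofinite_lt_log L)]
    with D hL
  rw [Real.norm_of_nonneg (mul_nonneg (by positivity) (tsum_nonneg fun _ ↦ ht_rpow_nonneg _ _ _))]
  calc |(D : ℝ)|⁻¹ * ∑' p : twistFiber a b c D, ht p.1.1 p.1.2 ^ (-j)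
      ≤ |(D : ℝ)|⁻¹ * (K * Real.log (|(D : ℝ)| + 2) ^ (-j)) := by
        gcongr
        exact hKL D D.2 hL
    _ = K * (|(D : ℝ)|⁻¹ * Real.log (|(D : ℝ)| + 2) ^ (-j)) := mul_left_comm _ _ _

lemma exists_twistFiber_of_mem_RIdx {X : Set ℝ} (x : RIdx a b c X) :
    ∃ y : ℕ × Σ D : {D : ℤ // Squarefree D}, twistFiber a b c D,
      y.1 ≠ 0 ∧ y.2.2.1 = x.1.2 ∧ Fbin a b c x.1.2.1 x.1.2.2 = y.2.1 * (x.1.1 * y.1) ^ 2 := by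
  obtain ⟨⟨t, p⟩, -, hp, -, n, hn⟩ := x
  dsimp only at hp hn ⊢
  have hn0 : n ≠ 0 := fun h ↦ hp.2 (by rw [hn, h, mul_zero])
  obtain ⟨D, m, hD, hm, rfl⟩ := exists_squarefree_mul_sq hn0
  have hF : Fbin a b c p.1 p.2 = D * (t * m) ^ 2 := hn.trans (by ring)
  exact ⟨⟨m, ⟨D, hD⟩, p, hp, t * m, hF⟩, hm, rfl, hF⟩

lemma RTerm_eq_of_Fbin_eq {t : ℕ} {p : ℤ × ℤ} {n : ℤ} (ht0 : t ≠ 0)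
    (hF : Fbin a b c p.1 p.2 = n * t ^ 2) :
    RTerm a b c j k (t, p) = |(n : ℝ)| ^ (-k) * ht p.1 p.2 ^ (-j) := by
  have t_pos : (0 : ℝ) < t := mod_cast Nat.pos_of_ne_zero ht0
  have habs : |(Fbin a b c p.1 p.2 : ℝ)| = (t : ℝ) ^ 2 * |(n : ℝ)| := by
    rw [hF]
    push_cast
    rw [abs_mul, abs_sq, mul_comm]
  simp only [RTerm]
  rw [habs, Real.mul_rpow (by positivity) (by positivity), ← mul_assoc, Real.rpow_mul t_pos.le,
    Real.rpow_two, ← Real.rpow_add (by positivity), add_neg_cancel, Real.rpow_zero, one_mul]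

lemma RTerm_le_of_Fbin_eq (hk : 1 ≤ k) {t m : ℕ} {p : ℤ × ℤ} {D : ℤ} (ht0 : t ≠ 0) (hm : m ≠ 0)
    (hD : D ≠ 0) (hF : Fbin a b c p.1 p.2 = D * (t * m) ^ 2) :
    RTerm a b c j k (t, p) ≤ ((m : ℝ) ^ 2)⁻¹ * (|(D : ℝ)|⁻¹ * ht p.1 p.2 ^ (-j)) := by
  have hD1 : 1 ≤ |(D : ℝ)| := mod_cast Int.one_le_abs hD
  have hm1 : (1 : ℝ) ≤ m := mod_cast Nat.one_le_iff_ne_zero.2 hm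
  have := ht_rpow_nonneg p.1 p.2 (-j)
  calc RTerm a b c j k (t, p)
      = (|(D : ℝ)| * m ^ 2) ^ (-k) * ht p.1 p.2 ^ (-j) := by
        rw [RTerm_eq_of_Fbin_eq (n := D * m ^ 2) ht0 (hF.trans (by ring))]
        push_cast
        rw [abs_mul, abs_sq]
    _ ≤ (|(D : ℝ)| * m ^ 2) ^ (-1 : ℝ) * ht p.1 p.2 ^ (-j) := by
        gcongr
        exact one_le_mul_of_one_le_of_one_le hD1 (one_le_pow₀ hm1)
    _ = ((m : ℝ) ^ 2)⁻¹ * (|(D : ℝ)|⁻¹ * ht p.1 p.2 ^ (-j)) := by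
        rw [Real.rpow_neg_one, mul_inv, mul_comm |(D : ℝ)|⁻¹, mul_assoc]

theorem RankBound.rConv_of_one_lt (hj : 1 < j) (h : RankBound a b c j)
    (hd : cubicDisc a b c ≠ 0) (hk : 1 ≤ k) : RConv a b c j k Set.univ := by
  have hsum := (Real.summable_nat_pow_inv.2 one_lt_two).mul_of_nonneg
    (h.summable_sigma_twistFiber hj hd) (fun n ↦ by positivity)
    (fun x ↦ mul_nonneg (by positivity) (ht_rpow_nonneg _ _ _))
  choose φ hφ_ne hφ_val hφ using exists_twistFiber_of_mem_RIdx (a := a) (b := b) (c := c)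
    (X := Set.univ)
  have hφ_inj : Function.Injective φ := by
    intro x y hxy
    have hp : x.1.2 = y.1.2 := by rw [← hφ_val, ← hφ_val, hxy]
    have hF := (hφ x).symm.trans (hp ▸ hφ y)
    rw [hxy, mul_right_inj' (φ y).2.1.2.ne_zero] at hF
    have ht : x.1.1 * (φ y).1 = y.1.1 * (φ y).1 :=
      Nat.pow_left_injective two_ne_zero (by exact_mod_cast hF)
    exact Subtype.ext (Prod.ext (Nat.eq_of_mul_eq_mul_right (Nat.pos_of_ne_zero (hφ_ne y)) ht) hp)
  refine (hsum.comp_injective hφ_inj).of_nonneg_of_le (fun x ↦ ?_) fun x ↦ ?_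
  · exact mul_nonneg (by positivity) (ht_rpow_nonneg _ _ _)
  · have := RTerm_le_of_Fbin_eq (j := j) hk (Nat.one_le_iff_ne_zero.1 x.2.1) (hφ_ne x)
      (φ x).2.1.2.ne_zero (hφ x)
    rw [← hφ_val] at this
    rw [← Prod.mk.eta (p := x.1), ← hφ_val]
    exact this

end Convergence

section HeightDegree

open Polynomial

/-- The heights of the values `g n` grow like `d * log n`. For the values of a rational function
`g`, the number `d` is its degree. -/
def HasHeightDegree (g : ℕ → ℚ) (d : ℕ) : Prop :=
  Tendsto (fun n ↦ logHeight₁ (g n) / Real.log n) atTop (𝓝 d)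

lemma tendsto_log_natCast_atTop : Tendsto (fun n : ℕ ↦ Real.log n) atTop atTop :=
  Real.tendsto_log_atTop.comp tendsto_natCast_atTop_atTop

lemma tendsto_div_log_of_abs_sub_le {f g : ℕ → ℝ} {C l : ℝ} (h : ∀ᶠ n in atTop, |f n - g n| ≤ C)
    (hg : Tendsto (fun n ↦ g n / Real.log n) atTop (𝓝 l)) :
    Tendsto (fun n ↦ f n / Real.log n) atTop (𝓝 l) := by
  have hdiff : Tendsto (fun n ↦ (f n - g n) / Real.log n) atTop (𝓝 0) := by
    refine squeeze_zero_norm' ?_ (tendsto_log_natCast_atTop.const_div_atTop C)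
    filter_upwards [h, tendsto_log_natCast_atTop.eventually_gt_atTop 0] with n hn hlog
    rw [norm_div, Real.norm_eq_abs, Real.norm_of_nonneg hlog.le]
    gcongr
  simpa [sub_div] using hdiff.add hg

lemma HasHeightDegree.congr' {g g' : ℕ → ℚ} {d : ℕ} (h : HasHeightDegree g d)
    (hg : g =ᶠ[atTop] g') : HasHeightDegree g' d :=
  Tendsto.congr' (hg.mono fun n hn ↦ by rw [hn]) h

lemma HasHeightDegree.add_const {g : ℕ → ℚ} {d : ℕ} (h : HasHeightDegree g d) (k : ℚ) :
    HasHeightDegree (fun n ↦ g n + k) d := by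
  refine tendsto_div_log_of_abs_sub_le (C := totalWeight ℚ * Real.log 2 + logHeight₁ k)
    (.of_forall fun n ↦ abs_le.2 ⟨?_, ?_⟩) h
  · have := logHeight₁_sub_le (g n + k) k
    rw [add_sub_cancel_right] at this
    linarith
  · linarith [logHeight₁_add_le (g n) k]

lemma tendsto_log_abs_eval_div_log (p : ℝ[X]) :
    Tendsto (fun n : ℕ ↦ Real.log |p.eval (n : ℝ)| / Real.log n) atTop (𝓝 p.natDegree) := by
  rcases eq_or_ne p 0 with rfl | hp
  · simp
  obtain ⟨l, hl⟩ : ∃ l, l = p.leadingCoeff := ⟨_, rfl⟩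
  have hl0 : l ≠ 0 := hl ▸ leadingCoeff_ne_zero.2 hp
  have hratio : Tendsto (fun n : ℕ ↦ p.eval (n : ℝ) / (l * n ^ p.natDegree)) atTop (𝓝 1) := by
    subst hl
    refine ((Asymptotics.isEquivalent_iff_tendsto_one ?_).1 p.isEquivalent_atTop_lead).comp
      tendsto_natCast_atTop_atTop
    filter_upwards [eventually_gt_atTop 0] with x hx using by positivity
  have hlog := (hratio.log one_ne_zero).abs.eventually_le_const
    (by simp : |Real.log (1 : ℝ)| < 1)
  refine tendsto_div_log_of_abs_sub_le (g := fun n ↦ p.natDegree * Real.log n)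
    (C := 1 + |Real.log l|) ?_ ?_
  · filter_upwards [hlog, hratio.eventually_ne one_ne_zero, eventually_gt_atTop 0]
      with n hn hne hpos
    have hpow : (n : ℝ) ^ p.natDegree ≠ 0 := by positivity
    have heval : p.eval (n : ℝ) ≠ 0 := fun h ↦ hne (by rw [h, zero_div])
    rw [Real.log_div heval (mul_ne_zero hl0 hpow), Real.log_mul hl0 hpow, Real.log_pow] at hn
    rw [Real.log_abs, ← sub_add_sub_cancel _ (Real.log l + p.natDegree * Real.log n),
      add_sub_cancel_right]
    exact (abs_add_le _ _).trans (by gcongr)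
  · refine tendsto_const_nhds.congr' ?_
    filter_upwards [tendsto_log_natCast_atTop.eventually_ne_atTop 0] with n hn
    rw [mul_div_cancel_right₀ _ hn]

lemma exists_map_intCast_eq_C_mul (p : ℚ[X]) :
    ∃ (m : ℤ) (P : ℤ[X]), m ≠ 0 ∧ P.map (Int.castRingHom ℚ) = C (m : ℚ) * p := by
  obtain ⟨m, hm, hP⟩ := IsLocalization.integerNormalization_spec (nonZeroDivisors ℤ) p
  exact ⟨m, _, nonZeroDivisors.ne_zero hm, by
    rw [← eq_intCast (algebraMap ℤ ℚ), ← smul_eq_C_mul, algebraMap_smul]; exact hP⟩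

lemma exists_gcd_eval_dvd {P Q : ℤ[X]}
    (h : IsCoprime (P.map (Int.castRingHom ℚ)) (Q.map (Int.castRingHom ℚ))) :
    ∃ M : ℕ, M ≠ 0 ∧ ∀ n : ℤ, Int.gcd (P.eval n) (Q.eval n) ∣ M := by
  obtain ⟨u, v, huv⟩ := h
  obtain ⟨m, U, hm, hU⟩ := exists_map_intCast_eq_C_mul u
  obtain ⟨k, V, hk, hV⟩ := exists_map_intCast_eq_C_mul v
  have hbezout : C k * U * P + C m * V * Q = C (m * k) := by
    refine map_injective (Int.castRingHom ℚ) Int.cast_injective ?_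
    simp only [Polynomial.map_add, Polynomial.map_mul, map_C, hU, hV,
      Int.coe_castRingHom, C_mul]
    linear_combination C (m : ℚ) * C (k : ℚ) * huv
  refine ⟨(m * k).natAbs, Int.natAbs_ne_zero.2 (mul_ne_zero hm hk), fun n ↦ ?_⟩
  have hn := congrArg (eval n) hbezout
  simp only [eval_add, eval_mul, eval_C] at hn
  rw [← Int.natCast_dvd, ← hn]
  exact dvd_add (Int.gcd_dvd_left _ _ |>.mul_left _) (Int.gcd_dvd_right _ _ |>.mul_left _)

lemma logHeight₁_div_add_log_gcd (u : ℤ) {v : ℤ} (hv : v ≠ 0) :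
    logHeight₁ ((u : ℚ) / v) + Real.log (Int.gcd u v) = Real.log (max |(u : ℝ)| |(v : ℝ)|) := by
  obtain ⟨g, u', v', hg, hcop, rfl, rfl⟩ :=
    Int.exists_gcd_one' (Int.gcd_pos_of_ne_zero_right u hv)
  have hg' : (0 : ℝ) < g := Nat.cast_pos.2 hg
  have hv' : v' ≠ 0 := left_ne_zero_of_mul hv
  have hmax : max |(u' : ℝ)| |(v' : ℝ)| ≠ 0 :=
    (lt_max_of_lt_right (abs_pos.2 (Int.cast_ne_zero.2 hv'))).ne'
  push_cast
  rw [mul_div_mul_right _ _ (Nat.cast_ne_zero.2 hg.ne'), logHeight₁_div_of_gcd_eq_one hcop hv',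
    Int.gcd_mul_right, hcop, one_mul, Int.natAbs_natCast, abs_mul, abs_mul, abs_of_pos hg',
    ← max_mul_of_nonneg _ _ hg'.le, Real.log_mul hmax hg'.ne']

lemma log_max_abs_intCast (u v : ℤ) : Real.log (max |(u : ℝ)| |(v : ℝ)|) =
    max (Real.log |(u : ℝ)|) (Real.log |(v : ℝ)|) := by
  have hmono : Monotone fun n : ℕ ↦ Real.log n := fun m n hmn ↦ by
    rcases m.eq_zero_or_pos with rfl | hm
    · simpa using Real.log_natCast_nonneg n
    · exact Real.log_le_log (Nat.cast_pos.2 hm) (Nat.cast_le.2 hmn)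
  have := hmono.map_max (a := u.natAbs) (b := v.natAbs)
  simpa [Nat.cast_natAbs] using this

lemma hasHeightDegree_of_isCoprime_map {P Q : ℤ[X]} (hQ : Q ≠ 0)
    (h : IsCoprime (P.map (Int.castRingHom ℚ)) (Q.map (Int.castRingHom ℚ))) :
    HasHeightDegree (fun n ↦ ((P.eval (n : ℤ) : ℤ) : ℚ) / ((Q.eval (n : ℤ) : ℤ) : ℚ))
      (max P.natDegree Q.natDegree) := by
  obtain ⟨M, hM, hgcd⟩ := exists_gcd_eval_dvd h
  have hlog (R : ℤ[X]) : Tendsto (fun n : ℕ ↦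
      Real.log |((R.eval (n : ℤ) : ℤ) : ℝ)| / Real.log n) atTop (𝓝 R.natDegree) := by
    have := tendsto_log_abs_eval_div_log (R.map (Int.castRingHom ℝ))
    rw [natDegree_map_eq_of_injective Int.cast_injective] at this
    simpa [eval_natCast_map] using this
  have hne : ∀ᶠ n : ℕ in atTop, Q.eval (n : ℤ) ≠ 0 := by
    have := (Q.map (Int.castRingHom ℝ)).eventually_atTop_not_isRoot
      ((Polynomial.map_ne_zero_iff Int.cast_injective).2 hQ)
    filter_upwards [tendsto_natCast_atTop_atTop.eventually this] with n hn h0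
    exact hn (by simp [IsRoot, eval_natCast_map, h0])
  refine tendsto_div_log_of_abs_sub_le (C := Real.log M) (g := fun n : ℕ ↦
    max (Real.log |((P.eval (n : ℤ) : ℤ) : ℝ)|) (Real.log |((Q.eval (n : ℤ) : ℤ) : ℝ)|)) ?_ ?_
  · filter_upwards [hne] with n hn
    have hgcd_le : Real.log (Int.gcd (P.eval (n : ℤ)) (Q.eval (n : ℤ))) ≤ Real.log M :=
      Real.log_le_log (Nat.cast_pos.2 (Int.gcd_pos_of_ne_zero_right _ hn))
        (Nat.cast_le.2 (Nat.le_of_dvd (Nat.pos_of_ne_zero hM) (hgcd n)))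
    rw [← log_max_abs_intCast, ← logHeight₁_div_add_log_gcd _ hn, sub_add_cancel_left, abs_neg,
      abs_of_nonneg (Real.log_natCast_nonneg _)]
    exact hgcd_le
  · rw [Nat.cast_max]
    refine ((hlog P).max (hlog Q)).congr fun n ↦ ?_
    rw [max_div_div_right (Real.log_natCast_nonneg n)]

lemma hasHeightDegree_of_isCoprime {p q : ℚ[X]} (hq : q ≠ 0) (h : IsCoprime p q) :
    HasHeightDegree (fun n ↦ p.eval (n : ℚ) / q.eval (n : ℚ)) (max p.natDegree q.natDegree) := by
  obtain ⟨m, P, hm, hP⟩ := exists_map_intCast_eq_C_mul p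
  obtain ⟨k, Q, hk, hQ⟩ := exists_map_intCast_eq_C_mul q
  have hmk : ((m * k : ℤ) : ℚ) ≠ 0 := Int.cast_ne_zero.2 (mul_ne_zero hm hk)
  have hP' : (C k * P).map (Int.castRingHom ℚ) = C ((m * k : ℤ) : ℚ) * p := by
    simp only [Polynomial.map_mul, map_C, hP, Int.cast_mul, Int.coe_castRingHom, C_mul]
    ring
  have hQ' : (C m * Q).map (Int.castRingHom ℚ) = C ((m * k : ℤ) : ℚ) * q := by
    simp only [Polynomial.map_mul, map_C, hQ, Int.cast_mul, Int.coe_castRingHom, C_mul]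
    ring
  have hdeg {R : ℤ[X]} {r : ℚ[X]} (hR : R.map (Int.castRingHom ℚ) = C ((m * k : ℤ) : ℚ) * r) :
      R.natDegree = r.natDegree := by
    rw [← natDegree_map_eq_of_injective (f := Int.castRingHom ℚ) Int.cast_injective, hR,
      natDegree_C_mul hmk]
  have heval {R : ℤ[X]} {r : ℚ[X]} (hR : R.map (Int.castRingHom ℚ) = C ((m * k : ℤ) : ℚ) * r)
      (n : ℕ) : ((R.eval (n : ℤ) : ℤ) : ℚ) = (m * k : ℤ) * r.eval (n : ℚ) := by
    rw [← eval_C_mul, ← hR, eval_natCast_map, eq_intCast]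
  have hQ0 : C m * Q ≠ 0 := fun h0 ↦ mul_ne_zero (C_ne_zero.2 hmk) hq (by
    rw [← hQ', h0, Polynomial.map_zero])
  have hcop : IsCoprime ((C k * P).map (Int.castRingHom ℚ))
      ((C m * Q).map (Int.castRingHom ℚ)) := by
    rw [hP', hQ']
    exact (isCoprime_mul_unit_left (isUnit_C.2 hmk.isUnit) p q).2 h
  have := hasHeightDegree_of_isCoprime_map hQ0 hcop
  rw [hdeg hP', hdeg hQ'] at this
  simpa only [heval hP', heval hQ', mul_div_mul_left _ _ hmk] using this

lemma exists_hasHeightDegree_of_forall_ne_C_mul {p q : ℚ[X]} (hq : q ≠ 0)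
    (h : ∀ k, p ≠ C k * q) :
    ∃ d, 1 ≤ d ∧ HasHeightDegree (fun n ↦ p.eval (n : ℚ) / q.eval (n : ℚ)) d := by
  obtain ⟨g, p', q', hcop, rfl, rfl⟩ : ∃ g p' q', IsCoprime p' q' ∧ p = g * p' ∧ q = g * q' :=
    ⟨gcd p q, p / gcd p q, q / gcd p q, isCoprime_div_gcd_div_gcd hq,
      (EuclideanDomain.mul_div_cancel' (gcd_ne_zero_of_right hq) (gcd_dvd_left p q)).symm,
      (EuclideanDomain.mul_div_cancel' (gcd_ne_zero_of_right hq) (gcd_dvd_right p q)).symm⟩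
  have hg : g ≠ 0 := left_ne_zero_of_mul hq
  have hq' : q' ≠ 0 := right_ne_zero_of_mul hq
  refine ⟨max p'.natDegree q'.natDegree, ?_, (hasHeightDegree_of_isCoprime hq' hcop).congr' ?_⟩
  · by_contra! hlt
    obtain ⟨u, rfl⟩ := natDegree_eq_zero.1 (Nat.lt_one_iff.1 ((le_max_left _ _).trans_lt hlt))
    obtain ⟨v, rfl⟩ := natDegree_eq_zero.1 (Nat.lt_one_iff.1 ((le_max_right _ _).trans_lt hlt))
    have hv : v ≠ 0 := C_ne_zero.1 hq'
    exact h (u / v) (by rw [mul_left_comm, ← C_mul, div_mul_cancel₀ _ hv])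
  · filter_upwards [tendsto_natCast_atTop_atTop.eventually (g.eventually_atTop_not_isRoot hg)]
      with n hn
    rw [eval_mul, eval_mul, mul_div_mul_left _ _ hn]

end HeightDegree

section IndependentPair

open WeierstrassCurve.Affine

/-- The `x`-coordinate of `(x₁, 1) + (x₂, s)` on the curve `f(x₁) y² = f(x)`, where
`f(x) = x³ + ax² + bx + c` and `f(x₂) = s² f(x₁)`. -/
def chordX (a b c x₁ x₂ s : ℚ) : ℚ :=
  (x₁ ^ 3 + a * x₁ ^ 2 + b * x₁ + c) * (1 - s) ^ 2 / (x₁ - x₂) ^ 2 - a - x₁ - x₂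

variable {a b c : ℤ}

lemma exists_point_pair_of_eq_sq_mul (hd : cubicDisc a b c ≠ 0) {x₁ x₂ s : ℚ}
    (h₁ : x₁ ^ 3 + a * x₁ ^ 2 + b * x₁ + c ≠ 0) (hx : x₁ ≠ x₂)
    (h₂ : x₂ ^ 3 + a * x₂ ^ 2 + b * x₂ + c = s ^ 2 * (x₁ ^ 3 + a * x₁ ^ 2 + b * x₁ + c)) :
    ∃ D : ℤ, D ≠ 0 ∧ ∃ P Q : (twist a b c D).Point,
      projX a b c D P = (x₁, 1) ∧ projX a b c D Q = (x₂, 1) ∧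
      projX a b c D (P + Q) = (chordX a b c x₁ x₂ s, 1) ∧
      projX a b c D (P - Q) = (chordX a b c x₁ x₂ (-s), 1) := by
  obtain ⟨ρ, hρ⟩ : ∃ ρ : ℚ, ρ = x₁ ^ 3 + a * x₁ ^ 2 + b * x₁ + c := ⟨_, rfl⟩
  rw [← hρ] at h₁ h₂
  have hden : (ρ.den : ℚ) ≠ 0 := Nat.cast_ne_zero.2 ρ.den_ne_zero
  obtain ⟨D, hD, y, hy⟩ : ∃ D : ℤ, D ≠ 0 ∧ ∃ y : ℚ, D * y ^ 2 = ρ := by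
    refine ⟨ρ.num * ρ.den, mul_ne_zero (Rat.num_ne_zero.2 h₁) (Nat.cast_ne_zero.2 ρ.den_ne_zero),
      (ρ.den : ℚ)⁻¹, ?_⟩
    conv_rhs => rw [← Rat.num_div_den ρ]
    push_cast
    field_simp
  have eq₁ : D * y ^ 2 = x₁ ^ 3 + a * x₁ ^ 2 + b * x₁ + c := hy.trans hρ
  have eq₂ : D * (s * y) ^ 2 = x₂ ^ 3 + a * x₂ ^ 2 + b * x₂ + c := by rw [h₂, ← hy]; ring
  have eq₂' : D * (-(s * y)) ^ 2 = x₂ ^ 3 + a * x₂ ^ 2 + b * x₂ + c := by rw [neg_sq, eq₂]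
  have hneg : -Point.some _ _ (twist_nonsingular hd hD eq₂) =
      .some _ _ (twist_nonsingular hd hD eq₂') := by
    simp only [Point.neg_some, twist_negY, mul_neg]
  refine ⟨D, hD, .some _ _ (twist_nonsingular hd hD eq₁), .some _ _ (twist_nonsingular hd hD eq₂),
    projX_some_mul hD _, projX_some_mul hD _, ?_, ?_⟩
  · rw [projX_add_some_some hD _ _ hx, chordX, ← hρ, ← hy, div_pow]
    ring_nf
  · rw [sub_eq_add_neg, hneg, projX_add_some_some hD _ _ hx, chordX, ← hρ, ← hy, div_pow]
    ring_nf

lemma exists_dependent_heights (hd : cubicDisc a b c ≠ 0)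
    (hdep : ∀ D : ℤ, D ≠ 0 → ∀ P Q : (twist a b c D).Point, ¬ LinearIndependent ℤ ![P, Q]) :
    ∃ C : ℝ, ∀ x₁ x₂ s : ℚ, x₁ ^ 3 + a * x₁ ^ 2 + b * x₁ + c ≠ 0 → x₁ ≠ x₂ →
      x₂ ^ 3 + a * x₂ ^ 2 + b * x₂ + c = s ^ 2 * (x₁ ^ 3 + a * x₁ ^ 2 + b * x₁ + c) →
      ∃ q₁ q₂ m m' : ℝ, |q₁ - logHeight₁ x₁| ≤ C ∧ |q₂ - logHeight₁ x₂| ≤ C ∧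
        |m - logHeight₁ (chordX a b c x₁ x₂ s)| ≤ C ∧
        |m' - logHeight₁ (chordX a b c x₁ x₂ (-s))| ≤ C ∧
        m + m' = 2 * (q₁ + q₂) ∧ 4 * q₁ * q₂ = (m - q₁ - q₂) ^ 2 := by
  obtain ⟨C, -, hC⟩ := exists_canonicalHeight hd
  refine ⟨C, fun x₁ x₂ s h₁ hx h₂ ↦ ?_⟩
  obtain ⟨D, hD, P, Q, hP, hQ, hPQ, hPQ'⟩ := exists_point_pair_of_eq_sq_mul hd h₁ hx h₂
  obtain ⟨q, hqC, -⟩ := hC D hD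
  have hnear {R : (twist a b c D).Point} {x : ℚ} (h : projX a b c D R = (x, 1)) :
      |q R - logHeight₁ x| ≤ C := naiveHeight_eq_logHeight₁ h ▸ hqC R
  refine ⟨q P, q Q, q (P + Q), q (P - Q), hnear hP, hnear hQ, hnear hPQ, hnear hPQ', ?_, ?_⟩
  · exact quadraticMap_add_add_sub q P Q
  · have hPQdep := hdep D hD P Q
    rw [LinearIndependent.pair_iff] at hPQdep
    push Not at hPQdep
    obtain ⟨m, n, hmn, hne⟩ := hPQdep
    exact quadraticMap_gram_eq_zero q (by tauto) hmn

theorem exists_linearIndependent_of_hasHeightDegree (hd : cubicDisc a b c ≠ 0)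
    {x₁ x₂ s : ℕ → ℚ} {d₁ d₂ e e' : ℕ} (h₁ : HasHeightDegree x₁ d₁) (h₂ : HasHeightDegree x₂ d₂)
    (he : HasHeightDegree (fun n ↦ chordX a b c (x₁ n) (x₂ n) (s n)) e)
    (he' : HasHeightDegree (fun n ↦ chordX a b c (x₁ n) (x₂ n) (-s n)) e')
    (he_pos : 1 ≤ e) (he'_pos : 1 ≤ e') (hlt : (d₁ + d₂ - 1 : ℝ) ^ 2 < 4 * d₁ * d₂)
    (hcurve : ∀ᶠ n in atTop, x₁ n ^ 3 + a * x₁ n ^ 2 + b * x₁ n + c ≠ 0 ∧ x₁ n ≠ x₂ n ∧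
      x₂ n ^ 3 + a * x₂ n ^ 2 + b * x₂ n + c =
        s n ^ 2 * (x₁ n ^ 3 + a * x₁ n ^ 2 + b * x₁ n + c)) :
    ∃ D : ℤ, D ≠ 0 ∧ ∃ P Q : (twist a b c D).Point, LinearIndependent ℤ ![P, Q] := by
  by_contra! hdep
  obtain ⟨C, hC⟩ := exists_dependent_heights hd hdep
  choose! q₁ q₂ m m' hq using hC
  have hq' := hcurve.mono fun n hn ↦ hq (x₁ n) (x₂ n) (s n) hn.1 hn.2.1 hn.2.2
  have hq₁ := tendsto_div_log_of_abs_sub_le (hq'.mono fun n hn ↦ hn.1) h₁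
  have hq₂ := tendsto_div_log_of_abs_sub_le (hq'.mono fun n hn ↦ hn.2.1) h₂
  have hm := tendsto_div_log_of_abs_sub_le (hq'.mono fun n hn ↦ hn.2.2.1) he
  have hm' := tendsto_div_log_of_abs_sub_le (hq'.mono fun n hn ↦ hn.2.2.2.1) he'
  have hsum : (e + e' : ℝ) = 2 * (d₁ + d₂) := by
    refine tendsto_nhds_unique_of_eventuallyEq (hm.add hm') ((hq₁.add hq₂).const_mul 2) ?_
    filter_upwards [hq'] with n hn
    linear_combination hn.2.2.2.2.1 / Real.log n
  have hgram : (4 * d₁ * d₂ : ℝ) = (e - d₁ - d₂) ^ 2 := by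
    refine tendsto_nhds_unique_of_eventuallyEq ((hq₁.const_mul 4).mul hq₂)
      (((hm.sub hq₁).sub hq₂).pow 2) ?_
    filter_upwards [hq'] with n hn
    linear_combination hn.2.2.2.2.2 / Real.log n ^ 2
  have he_pos' : (1 : ℝ) ≤ e := Nat.one_le_cast.2 he_pos
  have he'_pos' : (1 : ℝ) ≤ e' := Nat.one_le_cast.2 he'_pos
  rw [hgram, sq_lt_sq, lt_abs] at hlt
  cases abs_cases (d₁ + d₂ - 1 : ℝ) <;> rcases hlt with hlt | hlt <;> linarith

end IndependentPair

section Depressed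

open Polynomial

lemma eventually_eval_ne_zero {p : ℚ[X]} (hp : p ≠ 0) {g : ℕ → ℚ} (hg : g.Injective) :
    ∀ᶠ n in atTop, p.eval (g n) ≠ 0 := by
  rw [← Nat.cofinite_eq_atTop]
  exact hg.tendsto_cofinite.eventually (finite_setOfPred_isRoot hp).eventually_cofinite_notMem

lemma exists_hasHeightDegree_of_eval_eq_zero {p q : ℚ[X]} {r : ℚ} (hq : q ≠ 0)
    (hqr : q.eval r = 0) (hpr : p.eval r ≠ 0) :
    ∃ d, 1 ≤ d ∧ HasHeightDegree (fun n ↦ p.eval (n : ℚ) / q.eval (n : ℚ)) d :=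
  exists_hasHeightDegree_of_forall_ne_C_mul hq fun k hk ↦
    hpr (by rw [hk, eval_mul, hqr, mul_zero])

theorem exists_linearIndependent_of_hasHeightDegree_depressed {a b c : ℤ}
    (hd : cubicDisc a b c ≠ 0) {A B : ℚ} (hA : A = b - a ^ 2 / 3)
    (hB : B = c - a * b / 3 + 2 * a ^ 3 / 27) {x₁ x₂ s : ℕ → ℚ} {d₁ d₂ e e' : ℕ}
    (h₁ : HasHeightDegree x₁ d₁) (h₂ : HasHeightDegree x₂ d₂)
    (he : HasHeightDegree (fun n ↦ chordX 0 A B (x₁ n) (x₂ n) (s n)) e)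
    (he' : HasHeightDegree (fun n ↦ chordX 0 A B (x₁ n) (x₂ n) (-s n)) e')
    (he_pos : 1 ≤ e) (he'_pos : 1 ≤ e') (hlt : (d₁ + d₂ - 1 : ℝ) ^ 2 < 4 * d₁ * d₂)
    (hcurve : ∀ᶠ n in atTop, x₁ n ^ 3 + A * x₁ n + B ≠ 0 ∧ x₁ n ≠ x₂ n ∧
      x₂ n ^ 3 + A * x₂ n + B = s n ^ 2 * (x₁ n ^ 3 + A * x₁ n + B)) :
    ∃ D : ℤ, D ≠ 0 ∧ ∃ P Q : (twist a b c D).Point, LinearIndependent ℤ ![P, Q] := by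
  have hf (x : ℚ) : (x + -a / 3) ^ 3 + a * (x + -a / 3) ^ 2 + b * (x + -a / 3) + c =
      x ^ 3 + A * x + B := by rw [hA, hB]; ring
  have hchord (x y σ : ℚ) : chordX a b c (x + -a / 3) (y + -a / 3) σ =
      chordX 0 A B x y σ + -a / 3 := by
    simp only [chordX, hf, add_sub_add_right_eq_sub, zero_mul, add_zero]
    ring
  refine exists_linearIndependent_of_hasHeightDegree hd (s := s) (h₁.add_const (-a / 3))
    (h₂.add_const (-a / 3)) ?_ ?_ he_pos he'_pos hlt ?_
  · simpa only [hchord] using he.add_const (-a / 3)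
  · simpa only [hchord] using he'.add_const (-a / 3)
  · simpa only [hf, ne_eq, add_left_inj] using hcurve

section Mestre

variable {k : ℚ}

lemma hasHeightDegree_mestre (hk : k ≠ 0) :
    HasHeightDegree (fun n ↦ k * ((n : ℚ) ^ 4 + n ^ 2 + 1) / (n ^ 2 * (n ^ 2 + 1))) 4 ∧
      HasHeightDegree (fun n ↦ k * ((n : ℚ) ^ 4 + n ^ 2 + 1) / (n ^ 2 + 1)) 4 := by
  have hC : (C k⁻¹ * C k : ℚ[X]) = 1 := by rw [← C_mul, inv_mul_cancel₀ hk, C_1]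
  have hp : (C k * (X ^ 4 + X ^ 2 + 1)).natDegree = 4 := by compute_degree!
  have hq₁ : (X ^ 2 * (X ^ 2 + 1) : ℚ[X]).natDegree = 4 := by compute_degree!
  have hq₂ : (X ^ 2 + 1 : ℚ[X]).natDegree = 2 := by compute_degree!
  constructor
  · have hcop : IsCoprime (C k * (X ^ 4 + X ^ 2 + 1)) (X ^ 2 * (X ^ 2 + 1)) :=
      ⟨C k⁻¹, -1, by linear_combination (X ^ 4 + X ^ 2 + 1) * hC⟩
    simpa [hp, hq₁] using hasHeightDegree_of_isCoprime (by intro h; simp [h] at hq₁) hcop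
  · have hcop : IsCoprime (C k * (X ^ 4 + X ^ 2 + 1)) (X ^ 2 + 1) :=
      ⟨C k⁻¹, -X ^ 2, by linear_combination (X ^ 4 + X ^ 2 + 1) * hC⟩
    simpa [hp, hq₂] using hasHeightDegree_of_isCoprime (by intro h; simp [h] at hq₂) hcop

lemma chordX_mestre (A : ℚ) (hk : k ≠ 0) {t : ℚ} (ht : t ≠ 0) (ht₁ : t ^ 2 ≠ 1) :
    chordX 0 A (-k * A) (k * (t ^ 4 + t ^ 2 + 1) / (t ^ 2 * (t ^ 2 + 1)))
      (k * (t ^ 4 + t ^ 2 + 1) / (t ^ 2 + 1)) (t ^ 3) =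
    (k ^ 2 * (t ^ 4 + t ^ 2 + 1) ^ 3 + A * t ^ 4 * (t ^ 2 + 1) ^ 2 -
      k ^ 2 * (t ^ 4 + t ^ 2 + 1) * (t ^ 2 + 1) * (t ^ 2 - t + 1) ^ 2 * (t + 1) ^ 2) /
      (k * t ^ 2 * (t ^ 2 + 1) * (t ^ 2 - t + 1) ^ 2 * (t + 1) ^ 2) := by
  have h₁ : t ^ 2 + 1 ≠ 0 := by positivity
  have h₂ : t * (t - 1) + 1 ≠ 0 := by nlinarith [sq_nonneg (t - 1), sq_nonneg t]
  have h₃ : t * (t + 1) + 1 ≠ 0 := by nlinarith [sq_nonneg (t + 1), sq_nonneg t]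
  have h₄ : t + 1 ≠ 0 := fun h ↦ ht₁ (by linear_combination (t - 1) * h)
  have h₅ : 1 - t ≠ 0 := fun h ↦ ht₁ (by linear_combination -(t + 1) * h)
  have hdiff : k * (t ^ 4 + t ^ 2 + 1) / (t ^ 2 * (t ^ 2 + 1)) -
      k * (t ^ 4 + t ^ 2 + 1) / (t ^ 2 + 1) =
      k * (t ^ 2 - t + 1) * (t ^ 2 + t + 1) * (t + 1) * (1 - t) / (t ^ 2 * (t ^ 2 + 1)) := by
    field_simp
    ring
  rw [chordX, hdiff]
  field_simp
  ring

lemma exists_hasHeightDegree_chordX_mestre {A : ℚ} (hk : k ≠ 0) (hdisc : 27 * k ^ 2 + 4 * A ≠ 0)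
    {ε : ℚ} (hε : ε ^ 2 = 1) :
    ∃ d, 1 ≤ d ∧ HasHeightDegree (fun n ↦ chordX 0 A (-k * A)
      (k * ((n : ℚ) ^ 4 + n ^ 2 + 1) / (n ^ 2 * (n ^ 2 + 1)))
      (k * ((n : ℚ) ^ 4 + n ^ 2 + 1) / (n ^ 2 + 1)) (ε * n ^ 3)) d := by
  have hε₀ : ε ≠ 0 := by rintro rfl; norm_num at hε
  let p : ℚ[X] := (C (k ^ 2) * (X ^ 4 + X ^ 2 + 1) ^ 3 + C A * X ^ 4 * (X ^ 2 + 1) ^ 2 -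
      C (k ^ 2) * (X ^ 4 + X ^ 2 + 1) * (X ^ 2 + 1) * (X ^ 2 - X + 1) ^ 2 * (X + 1) ^ 2)
  let q : ℚ[X] := C k * X ^ 2 * (X ^ 2 + 1) * (X ^ 2 - X + 1) ^ 2 * (X + 1) ^ 2
  have heval (P : ℚ[X]) (r : ℚ) : (P.comp (C ε * X)).eval r = P.eval (ε * r) := by simp
  have hε_neg : ε * -ε = -1 := by linear_combination -hε
  have hp : p.eval (-1) = 27 * k ^ 2 + 4 * A := by
    simp only [p, eval_sub, eval_add, eval_mul, eval_pow, eval_C, eval_X, eval_one]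
    ring
  have hq : q.comp (C ε * X) ≠ 0 := by
    refine ne_of_apply_ne (eval ε) ?_
    rw [heval, ← sq, hε]
    simp [q, hk]
  obtain ⟨d, hd, h⟩ := exists_hasHeightDegree_of_eval_eq_zero (r := -ε) (p := p.comp (C ε * X)) hq
    (by rw [heval, hε_neg]; simp [q])
    (by rwa [heval, hε_neg, hp])
  refine ⟨d, hd, h.congr' ?_⟩
  filter_upwards [eventually_gt_atTop 1] with n hn
  have hn' : (1 : ℚ) < n := Nat.one_lt_cast.2 hn
  have h₂ : (ε * n) ^ 2 = n ^ 2 := by rw [mul_pow, hε, one_mul]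
  have h₃ : (ε * n) ^ 3 = ε * n ^ 3 := by linear_combination ε * n * h₂
  have h₄ : (ε * n) ^ 4 = n ^ 4 := by linear_combination ((ε * n) ^ 2 + n ^ 2) * h₂
  have hchord := chordX_mestre (t := ε * n) A hk (mul_ne_zero hε₀ (by positivity))
    (h₂ ▸ (one_lt_pow₀ hn' two_ne_zero).ne')
  rw [h₂, h₃, h₄] at hchord
  rw [hchord, heval, heval]
  simp [p, q, h₂, h₄]

/-- Mestre's construction: `x₂ = t² x₁` and `f(x₂) = t⁶ f(x₁)`, a linear condition on `x₁`. -/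
lemma exists_linearIndependent_of_ne_zero_of_ne_zero {a b c : ℤ} (hd : cubicDisc a b c ≠ 0)
    {A B : ℚ} (hA : A = b - a ^ 2 / 3) (hB : B = c - a * b / 3 + 2 * a ^ 3 / 27) (hA₀ : A ≠ 0)
    (hB₀ : B ≠ 0) (hdisc : 4 * A ^ 3 + 27 * B ^ 2 ≠ 0) :
    ∃ D : ℤ, D ≠ 0 ∧ ∃ P Q : (twist a b c D).Point, LinearIndependent ℤ ![P, Q] := by
  obtain ⟨k, rfl⟩ : ∃ k, B = -k * A := ⟨-B / A, by field_simp⟩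
  have hk : k ≠ 0 := neg_ne_zero.1 (left_ne_zero_of_mul hB₀)
  have hdisc' : 27 * k ^ 2 + 4 * A ≠ 0 := fun h ↦ hdisc (by linear_combination A ^ 2 * h)
  obtain ⟨h₁, h₂⟩ := hasHeightDegree_mestre hk
  obtain ⟨e, he, h⟩ := exists_hasHeightDegree_chordX_mestre hk hdisc' (one_pow 2)
  obtain ⟨e', he', h'⟩ := exists_hasHeightDegree_chordX_mestre hk hdisc' (neg_one_sq (R := ℚ))
  simp only [one_mul, neg_one_mul] at h h'
  refine exists_linearIndependent_of_hasHeightDegree_depressed hd hA hB h₁ h₂ h h' he he'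
    (by norm_num) ?_
  let p : ℚ[X] := C (k ^ 2) * (X ^ 4 + X ^ 2 + 1) ^ 3 + C A * X ^ 4 * (X ^ 2 + 1) ^ 2
  have hp : p ≠ 0 := ne_of_apply_ne (eval 0) (by simp [p, hk])
  filter_upwards [eventually_eval_ne_zero hp Nat.cast_injective, eventually_gt_atTop 1]
    with n hpn hn
  have hn' : (1 : ℚ) < n := Nat.one_lt_cast.2 hn
  have hn₂ : (1 : ℚ) < n ^ 2 := one_lt_pow₀ hn' two_ne_zero
  refine ⟨?_, ?_, by field_simp; ring⟩
  · convert mul_ne_zero hk (div_ne_zero hpn (b := (n : ℚ) ^ 6 * (n ^ 2 + 1) ^ 3) (by positivity))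
      using 1
    simp only [p, eval_add, eval_mul, eval_pow, eval_C, eval_X, eval_one]
    field_simp
    ring
  · rw [← mul_div_mul_left _ ((n : ℚ) ^ 2 + 1) (zero_lt_one.trans hn₂).ne', Ne,
      div_left_inj' (by positivity), ← sub_eq_zero, ← one_sub_mul]
    exact mul_ne_zero (sub_ne_zero.2 hn₂.ne) (by positivity)

end Mestre

section ZeroConst

variable {A : ℚ}

lemma hasHeightDegree_of_const_eq_zero (hA : A ≠ 0) :
    HasHeightDegree (fun n ↦ (n : ℚ) * (4 * A + n ^ 2) / (2 * A - n ^ 2)) 3 ∧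
      HasHeightDegree (fun n ↦ (n : ℚ) * (2 * A - n ^ 2) / (4 * (A + n ^ 2))) 3 := by
  have hC : (C A⁻¹ * C A : ℚ[X]) = 1 := by rw [← C_mul, inv_mul_cancel₀ hA, C_1]
  have h12 : (C (1 / 12) * 12 : ℚ[X]) = 1 := by rw [← C_ofNat, ← C_mul]; norm_num
  have hp₁ : (X * (4 * C A + X ^ 2) : ℚ[X]).natDegree = 3 := by compute_degree!
  have hq₁ : (2 * C A - X ^ 2 : ℚ[X]).natDegree = 2 := by compute_degree!
  have hp₂ : (X * (2 * C A - X ^ 2) : ℚ[X]).natDegree = 3 := by compute_degree!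
  have hq₂ : (4 * (C A + X ^ 2) : ℚ[X]).natDegree = 2 := by compute_degree!
  constructor
  · have hcop : IsCoprime (X * (4 * C A + X ^ 2)) (2 * C A - X ^ 2) :=
      ⟨C (1 / 12) * C A⁻¹ ^ 2 * X, C (1 / 12) * C A⁻¹ ^ 2 * (X ^ 2 + 6 * C A), by
        linear_combination (C A⁻¹ * C A) ^ 2 * h12 + (C A⁻¹ * C A + 1) * hC⟩
    simpa [hp₁, hq₁] using hasHeightDegree_of_isCoprime (by intro h; simp [h] at hq₁) hcop
  · have hcop : IsCoprime (X * (2 * C A - X ^ 2)) (4 * (C A + X ^ 2)) :=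
      ⟨-4 * C (1 / 12) * C A⁻¹ ^ 2 * X, -C (1 / 12) * C A⁻¹ ^ 2 * (X ^ 2 - 3 * C A), by
        linear_combination (C A⁻¹ * C A) ^ 2 * h12 + (C A⁻¹ * C A + 1) * hC⟩
    simpa [hp₂, hq₂] using hasHeightDegree_of_isCoprime (by intro h; simp [h] at hq₂) hcop

lemma chordX_of_const_eq_zero {t s N : ℚ} (ht : t ≠ 0) (h₁ : 2 * A - t ^ 2 ≠ 0)
    (h₂ : A + t ^ 2 ≠ 0) (h₃ : t ^ 4 + 8 * A * t ^ 2 + 4 * A ^ 2 ≠ 0)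
    (hs : 1 - s = N / (8 * (A + t ^ 2) ^ 2)) :
    chordX 0 A 0 (t * (4 * A + t ^ 2) / (2 * A - t ^ 2))
      (t * (2 * A - t ^ 2) / (4 * (A + t ^ 2))) s =
    ((4 * A + t ^ 2) * N ^ 2 - 9 * t ^ 2 * (t ^ 4 + 8 * A * t ^ 2 + 4 * A ^ 2) *
      (5 * t ^ 4 + 16 * A * t ^ 2 + 20 * A ^ 2)) /
      (36 * (2 * A - t ^ 2) * (A + t ^ 2) * t * (t ^ 4 + 8 * A * t ^ 2 + 4 * A ^ 2)) := by
  have hdiff : t * (4 * A + t ^ 2) / (2 * A - t ^ 2) - t * (2 * A - t ^ 2) / (4 * (A + t ^ 2)) =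
      3 * t * (t ^ 4 + 8 * A * t ^ 2 + 4 * A ^ 2) / (4 * (2 * A - t ^ 2) * (A + t ^ 2)) := by
    field_simp
    ring
  have hsum : t * (4 * A + t ^ 2) / (2 * A - t ^ 2) + t * (2 * A - t ^ 2) / (4 * (A + t ^ 2)) =
      t * (5 * t ^ 4 + 16 * A * t ^ 2 + 20 * A ^ 2) / (4 * (2 * A - t ^ 2) * (A + t ^ 2)) := by
    field_simp
    ring
  have hf : (t * (4 * A + t ^ 2) / (2 * A - t ^ 2)) ^ 3 +
      0 * (t * (4 * A + t ^ 2) / (2 * A - t ^ 2)) ^ 2 +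
      A * (t * (4 * A + t ^ 2) / (2 * A - t ^ 2)) + 0 =
      t * (4 * A + t ^ 2) * (A + t ^ 2) * (t ^ 4 + 8 * A * t ^ 2 + 4 * A ^ 2) /
        (2 * A - t ^ 2) ^ 3 := by
    field_simp
    ring
  rw [chordX, sub_zero, sub_sub, hdiff, hsum, hf, hs]
  generalize t ^ 4 + 8 * A * t ^ 2 + 4 * A ^ 2 = K at *
  generalize 2 * A - t ^ 2 = Z at *
  generalize 5 * t ^ 4 + 16 * A * t ^ 2 + 20 * A ^ 2 = Y at *
  field_simp
  ring

lemma eventually_ne_zero_of_const_eq_zero (A : ℚ) : ∀ᶠ n : ℕ in atTop, (n : ℚ) ≠ 0 ∧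
    2 * A - (n : ℚ) ^ 2 ≠ 0 ∧ A + (n : ℚ) ^ 2 ≠ 0 ∧ 4 * A + (n : ℚ) ^ 2 ≠ 0 ∧
    (n : ℚ) ^ 4 + 8 * A * n ^ 2 + 4 * A ^ 2 ≠ 0 := by
  let p : ℚ[X] := X * (2 * C A - X ^ 2) * (C A + X ^ 2) * (4 * C A + X ^ 2) *
    (X ^ 4 + 8 * C A * X ^ 2 + 4 * C A ^ 2)
  have hp : p.natDegree = 11 := by simp only [p]; compute_degree!
  filter_upwards [eventually_eval_ne_zero (p := p) (by intro h; simp [h] at hp)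
    Nat.cast_injective] with n hn
  simpa [p, not_or, and_assoc] using hn

lemma exists_hasHeightDegree_chordX_of_const_eq_zero (hA : A ≠ 0) (s : ℕ → ℚ) (N : ℚ[X])
    (hs : ∀ n : ℕ, A + (n : ℚ) ^ 2 ≠ 0 → 1 - s n = N.eval (n : ℚ) / (8 * (A + n ^ 2) ^ 2))
    (hN : N.eval 0 ≠ 0) :
    ∃ d, 1 ≤ d ∧ HasHeightDegree (fun n ↦ chordX 0 A 0
      ((n : ℚ) * (4 * A + n ^ 2) / (2 * A - n ^ 2))
      (n * (2 * A - n ^ 2) / (4 * (A + n ^ 2))) (s n)) d := by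
  let q : ℚ[X] := 36 * (2 * C A - X ^ 2) * (C A + X ^ 2) * X *
    (X ^ 4 + 8 * C A * X ^ 2 + 4 * C A ^ 2)
  have hq : q.natDegree = 9 := by simp only [q]; compute_degree!
  obtain ⟨d, hd, h⟩ := exists_hasHeightDegree_of_eval_eq_zero (q := q) (r := 0)
    (p := (4 * C A + X ^ 2) * N ^ 2 - 9 * X ^ 2 * (X ^ 4 + 8 * C A * X ^ 2 + 4 * C A ^ 2) *
      (5 * X ^ 4 + 16 * C A * X ^ 2 + 20 * C A ^ 2)) (by intro h; simp [h] at hq) (by simp [q])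
    (by simp [hA, hN])
  refine ⟨d, hd, h.congr' ?_⟩
  filter_upwards [eventually_ne_zero_of_const_eq_zero A] with n ⟨h₀, h₁, h₂, _, h₃⟩
  rw [chordX_of_const_eq_zero h₀ h₁ h₂ h₃ (hs n h₂)]
  simp [q]

lemma exists_linearIndependent_of_const_eq_zero {a b c : ℤ} (hd : cubicDisc a b c ≠ 0)
    (hA : A = b - a ^ 2 / 3) (hB : (0 : ℚ) = c - a * b / 3 + 2 * a ^ 3 / 27) (hA₀ : A ≠ 0) :
    ∃ D : ℤ, D ≠ 0 ∧ ∃ P Q : (twist a b c D).Point, LinearIndependent ℤ ![P, Q] := by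
  obtain ⟨h₁, h₂⟩ := hasHeightDegree_of_const_eq_zero hA₀
  obtain ⟨e, he, h⟩ := exists_hasHeightDegree_chordX_of_const_eq_zero hA₀
    (fun n ↦ (2 * A - (n : ℚ) ^ 2) ^ 2 / (8 * (A + n ^ 2) ^ 2))
    (7 * X ^ 4 + 20 * C A * X ^ 2 + 4 * C A ^ 2)
    (fun n hn ↦ by field_simp; simp; ring) (by simp [hA₀])
  obtain ⟨e', he', h'⟩ := exists_hasHeightDegree_chordX_of_const_eq_zero hA₀
    (fun n ↦ -((2 * A - (n : ℚ) ^ 2) ^ 2 / (8 * (A + n ^ 2) ^ 2)))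
    (9 * X ^ 4 + 12 * C A * X ^ 2 + 12 * C A ^ 2)
    (fun n hn ↦ by field_simp; simp; ring) (by simp [hA₀])
  refine exists_linearIndependent_of_hasHeightDegree_depressed hd hA hB h₁ h₂ h h' he he'
    (by norm_num) ?_
  filter_upwards [eventually_ne_zero_of_const_eq_zero A] with n ⟨h₀, h₁, h₂, h₃, h₄⟩
  refine ⟨?_, ?_, by field_simp; ring⟩
  · convert div_ne_zero (mul_ne_zero (mul_ne_zero (mul_ne_zero h₀ h₃) h₂) h₄) (pow_ne_zero 3 h₁)
      using 1
    field_simp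
    ring
  · rw [← sub_ne_zero]
    convert div_ne_zero (mul_ne_zero (mul_ne_zero three_ne_zero h₀) h₄)
      (mul_ne_zero (mul_ne_zero four_ne_zero h₁) h₂) using 1
    field_simp
    ring

end ZeroConst

end Depressed

section ZeroLinear

open Polynomial

lemma natDegree_X_mul_comp_C_mul_X_pow {P : ℚ[X]} (hP : P ≠ 0) {β : ℚ} (hβ : β ≠ 0) :
    (X * P.comp (C β * X ^ 3)).natDegree = 3 * P.natDegree + 1 := by
  have hW : (C β * X ^ 3).natDegree = 3 := natDegree_C_mul_X_pow 3 β hβ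
  have hcomp : P.comp (C β * X ^ 3) ≠ 0 := fun h ↦ hP <| by
    rcases comp_eq_zero_iff.1 h with h | ⟨-, h⟩
    · exact h
    · rw [h, natDegree_C] at hW
      cases hW
  rw [natDegree_X_mul hcomp, natDegree_comp, hW, mul_comm]

lemma hasHeightDegree_mul_eval_of_isCoprime {P Q : ℚ[X]} (hP : P ≠ 0) (hcop : IsCoprime P Q)
    (hQ : Q.eval 0 ≠ 0) {β : ℚ} (hβ : β ≠ 0) :
    HasHeightDegree (fun n ↦ n * P.eval (β * (n : ℚ) ^ 3) / Q.eval (β * (n : ℚ) ^ 3))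
      (max (3 * P.natDegree + 1) (3 * Q.natDegree)) := by
  have hQ₀ : (Q.comp (C β * X ^ 3)).coeff 0 ≠ 0 := by simpa [coeff_zero_eq_eval_zero]
  have hX : IsCoprime X (Q.comp (C β * X ^ 3)) :=
    irreducible_X.coprime_iff_not_dvd.2 fun h ↦ hQ₀ (X_dvd_iff.1 h)
  have hcomp : IsCoprime (P.comp (C β * X ^ 3)) (Q.comp (C β * X ^ 3)) :=
    hcop.map (compRingHom (C β * X ^ 3))
  have := hasHeightDegree_of_isCoprime (fun h ↦ hQ₀ (by rw [h, coeff_zero])) (hX.mul_left hcomp)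
  rw [natDegree_X_mul_comp_C_mul_X_pow hP hβ, natDegree_comp, natDegree_C_mul_X_pow 3 β hβ,
    mul_comm _ 3] at this
  simpa using this

/-- The degree of the numerator is `1` modulo `3`, that of the denominator is `0` modulo `3`. -/
lemma exists_hasHeightDegree_mul_eval {P Q : ℚ[X]} (hP : P ≠ 0) (hQ : Q ≠ 0) {β : ℚ}
    (hβ : β ≠ 0) :
    ∃ d, 1 ≤ d ∧
      HasHeightDegree (fun n ↦ n * P.eval (β * (n : ℚ) ^ 3) / Q.eval (β * (n : ℚ) ^ 3)) d := by
  have hdeg := natDegree_X_mul_comp_C_mul_X_pow hP hβ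
  have hQ' : Q.comp (C β * X ^ 3) ≠ 0 := fun h ↦ by
    simpa [h] using natDegree_X_mul_comp_C_mul_X_pow hQ hβ
  have hne (k : ℚ) : X * P.comp (C β * X ^ 3) ≠ C k * Q.comp (C β * X ^ 3) := fun hk ↦ by
    rcases eq_or_ne k 0 with rfl | hk₀
    · simp [hk] at hdeg
    · rw [hk, natDegree_C_mul hk₀, natDegree_comp, natDegree_C_mul_X_pow 3 β hβ] at hdeg
      omega
  simpa using exists_hasHeightDegree_of_forall_ne_C_mul hQ' hne

/-- If `T = (z, y)` lies on `y² = x³ + B` and `w = z³ / B`, then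
`y(2T) / y(T) = dblS w / (8 (w + 1)²)`. -/
def dblS {R : Type*} [CommRing R] (w : R) : R := w ^ 2 + 20 * w - 8

/-- If `T = (z, y)` lies on `y² = x³ + B` and `w = z³ / B`, then
`x(2T)³ / x(T)³ = dblR w / (64 (w + 1)⁴)`. -/
def dblR {R : Type*} [CommRing R] (w : R) : R := (w - 8) ^ 3 * (w + 1)

/-- The curve `x₂³ + B = s² (x₁³ + B)` with `s = y(2T) / y(T)` contains the points
`(ω x(T), ω² x(2T))` and `(ω² x(T), ω x(2T))`, where `ω` is a primitive cube root of unity. The line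
through them meets it in a third point, whose `x₁`-coordinate is `z * secU w / secV w`. -/
def secU {R : Type*} [CommRing R] (w : R) : R := dblS w ^ 2 - 2 * dblR w

/-- The denominator of the `x₁`-coordinate `z * secU w / secV w` of the third point. -/
def secV {R : Type*} [CommRing R] (w : R) : R := dblS w ^ 2 + dblR w

/-- The `x₂`-coordinate of the third point is `z * secY w / (4 * (w + 1) * secV w)`. -/
def secY {R : Type*} [CommRing R] (w : R) : R := (w - 8) * (dblR w - 2 * dblS w ^ 2)

lemma eval_secU (r : ℚ) : (secU (X : ℚ[X])).eval r = secU r := by simp [secU, dblS, dblR]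

lemma eval_secV (r : ℚ) : (secV (X : ℚ[X])).eval r = secV r := by simp [secV, dblS, dblR]

lemma eval_secY (r : ℚ) : (secY (X : ℚ[X])).eval r = secY r := by simp [secY, dblS, dblR]

lemma isCoprime_dblS_dblR : IsCoprime (dblS (X : ℚ[X])) (dblR X) := by
  refine .mul_right (.pow_right ⟨C (1 / 216), -C (1 / 216) * (X + 28), ?_⟩)
    ⟨-C (1 / 27), C (1 / 27) * (X + 19), ?_⟩
  · have h : (C (1 / 216) * 216 : ℚ[X]) = 1 := by rw [← C_ofNat, ← C_mul]; norm_num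
    simp only [dblS]
    linear_combination h
  · have h : (C (1 / 27) * 27 : ℚ[X]) = 1 := by rw [← C_ofNat, ← C_mul]; norm_num
    simp only [dblS]
    linear_combination h

lemma isUnit_ofNat_polynomial (n : ℕ) [n.AtLeastTwo] : IsUnit (OfNat.ofNat n : ℚ[X]) := by
  rw [← C_ofNat]
  exact isUnit_C.2 (IsUnit.mk0 _ (NeZero.ne _))

lemma isCoprime_secU_secV : IsCoprime (secU (X : ℚ[X])) (secV X) := by
  have hRV : IsCoprime (dblR (X : ℚ[X])) (secV X) := by
    simpa [secV] using isCoprime_dblS_dblR.symm.pow_right (n := 2) |>.add_mul_left_right 1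
  have h3 := (isCoprime_mul_unit_left_left (isUnit_ofNat_polynomial 3).neg _ _).2 hRV
  rw [show secU (X : ℚ[X]) = -3 * dblR X + secV X * 1 by rw [secU, secV]; ring]
  exact h3.add_mul_left_left 1

lemma isCoprime_secY_mul_secV : IsCoprime (secY (X : ℚ[X])) (4 * (X + 1) * secV X) := by
  have hSR := isCoprime_dblS_dblR.pow_left (m := 2)
  have hLS : IsCoprime (X - 8 : ℚ[X]) (dblS X ^ 2) :=
    (hSR.of_isCoprime_of_dvd_right ⟨(X - 8) ^ 2 * (X + 1), by rw [dblR]; ring⟩).symm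
  have hSM : IsCoprime (dblS (X : ℚ[X]) ^ 2) (X + 1) :=
    hSR.of_isCoprime_of_dvd_right ⟨_, mul_comm _ _⟩
  have hLM : IsCoprime (X - 8 : ℚ[X]) (X + 1) := by
    rw [show (X + 1 : ℚ[X]) = 9 + (X - 8) * 1 by ring]
    exact (isCoprime_one_right.of_isCoprime_of_dvd_right
      (isUnit_ofNat_polynomial 9).dvd).add_mul_left_right 1
  have hLV : IsCoprime (X - 8 : ℚ[X]) (secV X) := by
    rw [secV, dblR, show (X - 8 : ℚ[X]) ^ 3 * (X + 1) = (X - 8) * ((X - 8) ^ 2 * (X + 1)) by ring]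
    exact hLS.add_mul_left_right _
  have hYM : IsCoprime (dblR (X : ℚ[X]) - 2 * dblS X ^ 2) (X + 1) := by
    rw [dblR, sub_eq_neg_add, ← neg_mul, mul_comm (_ ^ 3)]
    exact ((isCoprime_mul_unit_left_left (isUnit_ofNat_polynomial 2).neg _ _).2
      hSM).add_mul_left_left _
  have hYV : IsCoprime (dblR (X : ℚ[X]) - 2 * dblS X ^ 2) (secV X) := by
    rw [show dblR (X : ℚ[X]) - 2 * dblS X ^ 2 = -secU X + secV X * -1 by rw [secU, secV]; ring]
    exact isCoprime_secU_secV.neg_left.add_mul_left_left (-1)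
  rw [mul_assoc, isCoprime_mul_unit_left_right (isUnit_ofNat_polynomial 4)]
  exact (hLM.mul_right hLV).mul_left (hYM.mul_right hYV)

lemma natDegree_secU : (secU (X : ℚ[X])).natDegree = 4 := by
  simp only [secU, dblS, dblR]
  compute_degree!

lemma natDegree_secV : (secV (X : ℚ[X])).natDegree = 4 := by
  simp only [secV, dblS, dblR]
  compute_degree!

lemma natDegree_secY : (secY (X : ℚ[X])).natDegree = 5 := by
  simp only [secY, dblS, dblR]
  compute_degree!

lemma natDegree_mul_secV : (4 * (X + 1) * secV (X : ℚ[X])).natDegree = 5 := by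
  simp only [secV, dblS, dblR]
  compute_degree!

lemma hasHeightDegree_secant_fst {β : ℚ} (hβ : β ≠ 0) :
    HasHeightDegree (fun n ↦ (n : ℚ) * secU (β * (n : ℚ) ^ 3) / secV (β * (n : ℚ) ^ 3)) 13 := by
  have hU := natDegree_secU
  have := hasHeightDegree_mul_eval_of_isCoprime (by intro h; simp [h] at hU) isCoprime_secU_secV
    (by norm_num [eval_secV, secV, dblS, dblR]) hβ
  rw [hU, natDegree_secV] at this
  simpa [eval_secU, eval_secV] using this

lemma hasHeightDegree_secant_snd {β : ℚ} (hβ : β ≠ 0) :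
    HasHeightDegree (fun n ↦ (n : ℚ) * secY (β * (n : ℚ) ^ 3) /
      (4 * (β * (n : ℚ) ^ 3 + 1) * secV (β * (n : ℚ) ^ 3))) 16 := by
  have hY := natDegree_secY
  have := hasHeightDegree_mul_eval_of_isCoprime (by intro h; simp [h] at hY)
    isCoprime_secY_mul_secV (by norm_num [eval_secV, secV, dblS, dblR]) hβ
  rw [hY, natDegree_mul_secV] at this
  simpa [eval_secY, eval_secV] using this

section Curve

variable {z w B : ℚ}

lemma cubic_secant (hB : z ^ 3 = w * B) (hw : w + 1 ≠ 0) (hV : secV w ≠ 0) :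
    (z * secY w / (4 * (w + 1) * secV w)) ^ 3 + B =
      (dblS w / (8 * (w + 1) ^ 2)) ^ 2 * ((z * secU w / secV w) ^ 3 + B) := by
  have key : (w + 1) * (64 * (w + 1) ^ 3 * secV w ^ 3 + w * secY w ^ 3) =
      dblS w ^ 2 * (w * secU w ^ 3 + secV w ^ 3) := by
    simp only [secU, secV, secY, dblS, dblR]
    ring
  simp only [div_pow, mul_pow, hB]
  field_simp
  linear_combination 64 * B * key

lemma secant_sub {U V Y : ℚ} (hw : w + 1 ≠ 0) (hV : V ≠ 0) :
    z * U / V - z * Y / (4 * (w + 1) * V) =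
      z * (4 * (w + 1) * U - Y) / (4 * (w + 1) * V) := by
  field_simp

lemma chordX_secant {U V Y E s : ℚ} (hB : z ^ 3 = w * B) (hz : z ≠ 0) (hw₀ : w ≠ 0)
    (hw : w + 1 ≠ 0) (hV : V ≠ 0) (hG : 4 * (w + 1) * U - Y ≠ 0)
    (hs : 1 - s = E / (8 * (w + 1) ^ 2)) :
    chordX 0 0 B (z * U / V) (z * Y / (4 * (w + 1) * V)) s =
      z * ((w * U ^ 3 + V ^ 3) * E ^ 2 -
          w * (w + 1) * (4 * (w + 1) * U - Y) ^ 2 * (4 * (w + 1) * U + Y)) /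
        (4 * w * (w + 1) ^ 2 * V * (4 * (w + 1) * U - Y) ^ 2) := by
  obtain rfl : B = z ^ 3 / w := by rw [hB, mul_div_cancel_left₀ _ hw₀]
  rw [chordX, secant_sub hw hV, hs]
  generalize 4 * (w + 1) * U - Y = G at *
  field_simp
  ring

end Curve

lemma eventually_secant_ne_zero {β : ℚ} (hβ : β ≠ 0) :
    ∀ᶠ n : ℕ in atTop, ∀ w, w = β * (n : ℚ) ^ 3 → (n : ℚ) ≠ 0 ∧ w ≠ 0 ∧ w + 1 ≠ 0 ∧
      secV w ≠ 0 ∧ 4 * (w + 1) * secU w - secY w ≠ 0 ∧ w * secU w ^ 3 + secV w ^ 3 ≠ 0 := by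
  let p : ℚ[X] := X * (X + 1) * secV X * (4 * (X + 1) * secU X - secY X) *
    (X * secU X ^ 3 + secV X ^ 3)
  have hp : p ≠ 0 := ne_of_apply_ne (eval 1) (by
    norm_num [p, eval_secU, eval_secV, eval_secY, secU, secV, secY, dblS, dblR])
  have hinj : Function.Injective fun n : ℕ ↦ β * (n : ℚ) ^ 3 := fun m n h ↦ by
    exact Nat.pow_left_injective three_ne_zero (by exact_mod_cast mul_left_cancel₀ hβ h)
  filter_upwards [eventually_eval_ne_zero hp hinj, eventually_ne_atTop 0] with n hn hn₀
  rintro w rfl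
  simpa [p, eval_secU, eval_secV, eval_secY, hβ, hn₀, and_assoc] using hn

lemma exists_hasHeightDegree_chordX_secant {B : ℚ} (hB : B ≠ 0) {E : ℚ[X]} {s : ℕ → ℚ}
    (hs : ∀ n : ℕ, B⁻¹ * (n : ℚ) ^ 3 + 1 ≠ 0 →
      1 - s n = E.eval (B⁻¹ * (n : ℚ) ^ 3) / (8 * (B⁻¹ * (n : ℚ) ^ 3 + 1) ^ 2))
    (hE : (X * secU X ^ 3 + secV X ^ 3) * E ^ 2 -
      X * (X + 1) * (4 * (X + 1) * secU X - secY X) ^ 2 * (4 * (X + 1) * secU X + secY X) ≠ 0) :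
    ∃ d, 1 ≤ d ∧ HasHeightDegree (fun n ↦ chordX 0 0 B
      ((n : ℚ) * secU (B⁻¹ * (n : ℚ) ^ 3) / secV (B⁻¹ * (n : ℚ) ^ 3))
      ((n : ℚ) * secY (B⁻¹ * (n : ℚ) ^ 3) /
        (4 * (B⁻¹ * (n : ℚ) ^ 3 + 1) * secV (B⁻¹ * (n : ℚ) ^ 3))) (s n)) d := by
  let q : ℚ[X] := 4 * X * (X + 1) ^ 2 * secV X * (4 * (X + 1) * secU X - secY X) ^ 2
  have hq : q ≠ 0 := ne_of_apply_ne (eval 1) (by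
    norm_num [q, eval_secU, eval_secV, eval_secY, secU, secV, secY, dblS, dblR])
  obtain ⟨d, hd, h⟩ := exists_hasHeightDegree_mul_eval hE hq (inv_ne_zero hB)
  refine ⟨d, hd, h.congr' ?_⟩
  filter_upwards [eventually_secant_ne_zero (inv_ne_zero hB)] with n hn
  obtain ⟨hn₀, hw₀, hw, hV, hG, -⟩ := hn _ rfl
  rw [chordX_secant (by field_simp) hn₀ hw₀ hw hV hG (hs n hw)]
  simp [q, eval_secU, eval_secV, eval_secY]

lemma exists_linearIndependent_of_linear_eq_zero {a b c : ℤ} {B : ℚ} (hd : cubicDisc a b c ≠ 0)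
    (hA : (0 : ℚ) = b - a ^ 2 / 3) (hB : B = c - a * b / 3 + 2 * a ^ 3 / 27) (hB₀ : B ≠ 0) :
    ∃ D : ℤ, D ≠ 0 ∧ ∃ P Q : (twist a b c D).Point, LinearIndependent ℤ ![P, Q] := by
  have hβ := inv_ne_zero hB₀
  obtain ⟨e, he, h⟩ := exists_hasHeightDegree_chordX_secant hB₀ (E := 7 * X ^ 2 - 4 * X + 16)
    (s := fun n ↦ dblS (B⁻¹ * (n : ℚ) ^ 3) / (8 * (B⁻¹ * (n : ℚ) ^ 3 + 1) ^ 2))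
    (fun n hn ↦ by
      generalize B⁻¹ * (n : ℚ) ^ 3 = w at *
      simp [dblS]; field_simp; ring)
    (ne_of_apply_ne (eval 1) (by
      norm_num [eval_secU, eval_secV, eval_secY, secU, secV, secY, dblS, dblR]))
  obtain ⟨e', he', h'⟩ := exists_hasHeightDegree_chordX_secant hB₀ (E := 9 * X * (X + 4))
    (s := fun n ↦ -(dblS (B⁻¹ * (n : ℚ) ^ 3) / (8 * (B⁻¹ * (n : ℚ) ^ 3 + 1) ^ 2)))
    (fun n hn ↦ by
      generalize B⁻¹ * (n : ℚ) ^ 3 = w at *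
      simp [dblS]; field_simp; ring)
    (ne_of_apply_ne (eval 1) (by
      norm_num [eval_secU, eval_secV, eval_secY, secU, secV, secY, dblS, dblR]))
  refine exists_linearIndependent_of_hasHeightDegree_depressed hd hA hB
    (hasHeightDegree_secant_fst hβ) (hasHeightDegree_secant_snd hβ) h h' he he' (by norm_num) ?_
  filter_upwards [eventually_secant_ne_zero hβ] with n hn
  obtain ⟨w, hw⟩ : ∃ w, w = B⁻¹ * (n : ℚ) ^ 3 := ⟨_, rfl⟩
  obtain ⟨hn₀, -, hw₁, hV, hG, hF⟩ := hn w hw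
  have hBw : (n : ℚ) ^ 3 = w * B := by rw [hw]; field_simp
  simp only [← hw, zero_mul, add_zero]
  refine ⟨?_, ?_, cubic_secant hBw hw₁ hV⟩
  · rw [div_pow, mul_pow, hBw, div_add' _ _ _ (pow_ne_zero 3 hV), mul_right_comm, mul_comm _ B,
      ← mul_add]
    exact div_ne_zero (mul_ne_zero hB₀ hF) (pow_ne_zero 3 hV)
  · rw [← sub_ne_zero, secant_sub hw₁ hV]
    exact div_ne_zero (mul_ne_zero hn₀ hG) (mul_ne_zero (mul_ne_zero four_ne_zero hw₁) hV)

end ZeroLinear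

section RankTwo

variable {a b c : ℤ}

lemma exists_linearIndependent_pair (hd : cubicDisc a b c ≠ 0) :
    ∃ D : ℤ, D ≠ 0 ∧ ∃ P Q : (twist a b c D).Point, LinearIndependent ℤ ![P, Q] := by
  obtain ⟨A, hA⟩ : ∃ A : ℚ, A = b - a ^ 2 / 3 := ⟨_, rfl⟩
  obtain ⟨B, hB⟩ : ∃ B : ℚ, B = c - a * b / 3 + 2 * a ^ 3 / 27 := ⟨_, rfl⟩
  have hdisc : 4 * A ^ 3 + 27 * B ^ 2 ≠ 0 := by
    have : 4 * A ^ 3 + 27 * B ^ 2 = -(cubicDisc a b c : ℤ) := by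
      rw [hA, hB, cubicDisc]; push_cast; ring
    rw [this]
    exact_mod_cast neg_ne_zero.2 hd
  obtain rfl | hA₀ := eq_or_ne A 0
  · exact exists_linearIndependent_of_linear_eq_zero hd hA hB (by rintro rfl; simp at hdisc)
  obtain rfl | hB₀ := eq_or_ne B 0
  · exact exists_linearIndependent_of_const_eq_zero hd hA hB hA₀
  · exact exists_linearIndependent_of_ne_zero_of_ne_zero hd hA hB hA₀ hB₀ hdisc

lemma not_rankBound_of_le_one (hd : cubicDisc a b c ≠ 0) {j : ℝ} (hj : j ≤ 1) :
    ¬ RankBound a b c j := by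
  intro h
  obtain ⟨D, hD, P, Q, hPQ⟩ := exists_linearIndependent_pair hd
  have hj' : ⌈2 * j⌉₊ ≤ 2 := Nat.ceil_le.2 (by push_cast; linarith)
  exact h D hD ⟨_, hPQ.comp _ (Fin.castLE_injective hj')⟩

end RankTwo

section AddSubX

variable {K : Type*} [Field K]

/-- The binary quadratic form with coefficients `z`, evaluated at `x`; it vanishes on
`symProd p m` exactly when `p` or `m` is the point `x` of the affine line. -/
def symEval (x : K) (z : K × K × K) : K := z.1 - x * z.2.1 + x ^ 2 * z.2.2

lemma symEval_smul (x l : K) (z : K × K × K) : symEval x (l • z) = l * symEval x z := by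
  simp only [symEval, Prod.smul_fst, Prod.smul_snd, smul_eq_mul]
  ring

lemma symEval_symProd (x : K) (p m : K × K) :
    symEval x (symProd p m) = (p.1 - x * p.2) * (m.1 - x * m.2) := by
  simp only [symEval, symProd]
  ring

lemma symProd_smul_smul (s t : K) (v w : K × K) :
    symProd (s • v) (t • w) = (s * t) • symProd v w := by
  simp only [symProd, Prod.smul_fst, Prod.smul_snd, Prod.smul_mk, smul_eq_mul, Prod.mk.injEq]
  refine ⟨?_, ?_, ?_⟩ <;> ring

lemma addSubX_smul (a b c l : K) (z : K × K × K) :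
    addSubX a b c (l • z) = l ^ 2 • addSubX a b c z := by
  simp only [addSubX, Prod.smul_fst, Prod.smul_snd, Prod.smul_mk, smul_eq_mul, Prod.mk.injEq]
  refine ⟨?_, ?_, ?_⟩ <;> ring

variable {a b c : K} {v w p m : K × K}

lemma SumDiffRel.map {L : Type*} [Field L] (σ : K →+* L) (h : SumDiffRel a b c v w p m) :
    SumDiffRel (σ a) (σ b) (σ c) (Prod.map σ σ v) (Prod.map σ σ w) (Prod.map σ σ p)
      (Prod.map σ σ m) := by
  obtain ⟨l, hl, h⟩ := h
  refine ⟨σ l, (map_ne_zero σ).2 hl, ?_⟩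
  simpa [addSubX, symProd, map_ofNat] using congrArg (Prod.map σ (Prod.map σ σ)) h

lemma SumDiffRel.rescale (h : SumDiffRel a b c v w p m) {t : K} (ht : t ≠ 0) :
    SumDiffRel (a * t) (b * t ^ 2) (c * t ^ 3)
      (t * v.1, v.2) (t * w.1, w.2) (t * p.1, p.2) (t * m.1, m.2) := by
  obtain ⟨l, hl, h⟩ := h
  simp only [addSubX, symProd, Prod.smul_mk, smul_eq_mul, Prod.mk.injEq] at h
  refine ⟨t ^ 2 * l, mul_ne_zero (pow_ne_zero 2 ht) hl, ?_⟩
  simp only [addSubX, symProd, Prod.smul_mk, smul_eq_mul, Prod.mk.injEq]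
  refine ⟨?_, ?_, ?_⟩
  · linear_combination t ^ 4 * h.1
  · linear_combination t ^ 3 * h.2.1
  · linear_combination t ^ 2 * h.2.2

lemma addSubX_symProd_self_ne_zero [NeZero (2 : K)] (hd : cubicDisc a b c ≠ 0) (hp : p ≠ 0) :
    addSubX a b c (symProd p p) ≠ 0 := by
  obtain ⟨x, z⟩ := p
  intro h
  simp only [addSubX, symProd, Prod.mk_eq_zero] at h
  obtain ⟨h₀, h₁, -⟩ := h
  obtain rfl | hz := eq_or_ne z 0
  · exact hp (by simpa using h₀)
  have h4 : (4 : K) ≠ 0 := by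
    rw [show (4 : K) = 2 ^ 2 by norm_num]
    exact pow_ne_zero 2 (NeZero.ne 2)
  have cubic_eq_zero : x ^ 3 + a * x ^ 2 * z + b * x * z ^ 2 + c * z ^ 3 = 0 :=
    mul_left_cancel₀ (mul_ne_zero h4 hz) (by linear_combination h₁)
  refine mul_ne_zero hd (pow_ne_zero 6 hz) ?_
  rw [cubicDisc]
  -- Bézout's identity for `f` and the numerator of the duplication formula
  linear_combination -(3 * x ^ 2 + 2 * a * x * z + (4 * b - a ^ 2) * z ^ 2) * h₀ +
    (3 * x ^ 3 - a * x ^ 2 * z - 5 * b * x * z ^ 2 + (2 * a * b - 27 * c) * z ^ 3) * cubic_eq_zero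

lemma exists_eq_smul_of_mul_eq_mul {r : K × K} (hp : p ≠ 0) (hr : r ≠ 0)
    (h : p.1 * r.2 = p.2 * r.1) : ∃ t : K, t ≠ 0 ∧ r = t • p := by
  suffices ∃ t : K, r = t • p by
    obtain ⟨t, rfl⟩ := this
    exact ⟨t, fun ht ↦ hr (by rw [ht, zero_smul]), rfl⟩
  obtain ⟨x, z⟩ := p
  obtain ⟨x', z'⟩ := r
  simp only at h
  obtain rfl | hz := eq_or_ne z 0
  · have hx : x ≠ 0 := fun hx ↦ hp (by rw [hx]; rfl)
    have hz' : z' = 0 := by simpa [hx] using h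
    exact ⟨x' / x, by simp [hz', hx]⟩
  · refine ⟨z' / z, ?_⟩
    simp only [Prod.smul_mk, smul_eq_mul, Prod.mk.injEq]
    constructor <;> field_simp
    linear_combination -h

lemma addSubX_symProd_ne_zero [NeZero (2 : K)] {r : K × K} (hd : cubicDisc a b c ≠ 0)
    (hp : p ≠ 0) (hr : r ≠ 0) : addSubX a b c (symProd p r) ≠ 0 := by
  intro h
  have third : (p.1 * r.2 - p.2 * r.1) ^ 2 = 0 := by
    have := congrArg (·.2.2) h
    simp only [addSubX, symProd, Prod.snd_zero] at this
    linear_combination this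
  obtain ⟨t, ht, rfl⟩ := exists_eq_smul_of_mul_eq_mul hp hr
    (sub_eq_zero.1 ((pow_eq_zero_iff two_ne_zero).1 third))
  have hsymm : symProd p (t • p) = t • symProd p p := by simpa using symProd_smul_smul 1 t p p
  rw [hsymm, addSubX_smul] at h
  exact smul_ne_zero (pow_ne_zero 2 ht) (addSubX_symProd_self_ne_zero hd hp) h

end AddSubX

section RealCubic

variable {a b c : ℝ}

/-- The real function `f(x) = x³ + ax² + bx + c`. -/
def cubicFun (a b c x : ℝ) : ℝ := x ^ 3 + a * x ^ 2 + b * x + c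

lemma continuous_cubicFun : Continuous (cubicFun a b c) := by
  unfold cubicFun
  fun_prop

lemma tendsto_cubicFun_atTop : Tendsto (cubicFun a b c) atTop atTop := by
  have horner : cubicFun a b c = fun x ↦ x * (x * (x + a) + b) + c := by
    funext x
    rw [cubicFun]
    ring
  rw [horner]
  exact tendsto_atTop_add_const_right _ c <| tendsto_id.atTop_mul_atTop₀ <|
    tendsto_atTop_add_const_right _ b <| tendsto_id.atTop_mul_atTop₀ <|
    tendsto_atTop_add_const_right _ a tendsto_id

lemma tendsto_cubicFun_atBot : Tendsto (cubicFun a b c) atBot atBot := by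
  have flip : cubicFun a b c = fun x ↦ -cubicFun (-a) b (-c) (-x) := by
    funext x
    simp only [cubicFun]
    ring
  rw [flip]
  exact tendsto_neg_atTop_atBot.comp (tendsto_cubicFun_atTop.comp tendsto_neg_atBot_atTop)

lemma cubicFun_pos_of_le {α x : ℝ} (hα : ∀ r, cubicFun a b c r = 0 → r < α) (hx : α ≤ x) :
    0 < cubicFun a b c x := by
  by_contra! hfx
  obtain ⟨y, hfy, hxy⟩ :=
    ((tendsto_cubicFun_atTop.eventually_gt_atTop 0).and (eventually_ge_atTop x)).exists
  obtain ⟨z, hz, hfz⟩ := intermediate_value_Icc hxy continuous_cubicFun.continuousOn ⟨hfx, hfy.le⟩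
  exact ((hα z hfz).trans_le (hx.trans hz.1)).false

lemma broad_univ (a b c : ℤ) : Broad a b c Set.univ := by
  obtain ⟨M, hM⟩ := eventually_atTop.1 (tendsto_cubicFun_atTop (a := a) (b := b) (c := c)
    |>.eventually_gt_atTop 0)
  obtain ⟨N, hN⟩ := eventually_atBot.1 (tendsto_cubicFun_atBot (a := a) (b := b) (c := c)
    |>.eventually_lt_atBot 0)
  exact ⟨isOpen_univ, ⟨M, trivial, fun r hr ↦ lt_of_not_ge fun h ↦ (hM r h).ne' hr⟩,
    ⟨N, trivial, fun r hr ↦ lt_of_not_ge fun h ↦ (hN r h).ne hr⟩⟩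

lemma norm_symProd_le (p m : ℝ × ℝ) : ‖symProd p m‖ ≤ 2 * (‖p‖ * ‖m‖) := by
  have h₁ : ‖p.1‖ ≤ ‖p‖ := norm_fst_le p
  have h₂ : ‖p.2‖ ≤ ‖p‖ := norm_snd_le p
  have h₃ : ‖m.1‖ ≤ ‖m‖ := norm_fst_le m
  have h₄ : ‖m.2‖ ≤ ‖m‖ := norm_snd_le m
  have hpm : 0 ≤ ‖p‖ * ‖m‖ := by positivity
  have mul_le {x y : ℝ} (hx : ‖x‖ ≤ ‖p‖) (hy : ‖y‖ ≤ ‖m‖) : ‖x * y‖ ≤ ‖p‖ * ‖m‖ :=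
    (norm_mul x y).trans_le (by gcongr)
  refine norm_prod_le_iff.2 ⟨?_, norm_prod_le_iff.2 ⟨?_, ?_⟩⟩
  · exact (mul_le h₁ h₃).trans (by linarith)
  · exact (norm_add_le _ _).trans (by linarith [mul_le h₁ h₄, mul_le h₂ h₃])
  · exact (mul_le h₂ h₄).trans (by linarith)

lemma continuous_addSubX_symProd :
    Continuous fun z : (ℝ × ℝ) × (ℝ × ℝ) ↦ addSubX a b c (symProd z.1 z.2) := by
  unfold addSubX symProd
  fun_prop

lemma exists_pos_mul_le_norm_addSubX (hd : cubicDisc a b c ≠ 0) :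
    ∃ μ > 0, ∀ p r : ℝ × ℝ, μ * (‖p‖ * ‖r‖) ^ 2 ≤ ‖addSubX a b c (symProd p r)‖ := by
  let K := Metric.sphere (0 : ℝ × ℝ) 1 ×ˢ Metric.sphere (0 : ℝ × ℝ) 1
  have hK : IsCompact K := (isCompact_sphere _ _).prod (isCompact_sphere _ _)
  have hne : K.Nonempty := ⟨((1, 0), (1, 0)), by simp [K, Prod.norm_def]⟩
  obtain ⟨⟨p₀, r₀⟩, hpr, hmin⟩ :=
    hK.exists_isMinOn hne (continuous_addSubX_symProd (a := a) (b := b) (c := c)).norm.continuousOn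
  have hp₀ : p₀ ≠ 0 := ne_zero_of_mem_unit_sphere ⟨p₀, hpr.1⟩
  have hr₀ : r₀ ≠ 0 := ne_zero_of_mem_unit_sphere ⟨r₀, hpr.2⟩
  refine ⟨_, norm_pos_iff.2 (addSubX_symProd_ne_zero hd hp₀ hr₀), fun p r ↦ ?_⟩
  obtain rfl | hp := eq_or_ne p 0
  · simp
  obtain rfl | hr := eq_or_ne r 0
  · simp
  have unit : (‖p‖⁻¹ • p, ‖r‖⁻¹ • r) ∈ K := by
    simp [K, norm_smul, norm_ne_zero_iff.2 hp, norm_ne_zero_iff.2 hr]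
  have := hmin unit
  simp only [symProd_smul_smul, addSubX_smul, norm_smul, ← mul_inv, norm_pow, norm_inv,
    Set.mem_ofPred_eq, norm_mul, norm_norm] at this
  rwa [inv_pow, ← div_eq_inv_mul, le_div_iff₀ (by positivity)] at this

end RealCubic

section RealPoints

variable {a b c : ℝ} {G : Type*} [AddCommGroup G] {v : G → ℝ × ℝ}

/-- `v` behaves like the projective `x`-coordinate on a subgroup `G` of the real points of
`y² = x³ + ax² + bx + c`, normalised to `(x, 1)` away from the identity of `G`. -/
structure IsXCoord (a b c : ℝ) {G : Type*} [AddCommGroup G] (v : G → ℝ × ℝ) : Prop where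
  fst_zero_ne_zero : (v 0).1 ≠ 0
  snd_zero : (v 0).2 = 0
  snd_eq_one {g : G} : g ≠ 0 → (v g).2 = 1
  eq_iff {g h : G} : v g = v h ↔ g = h ∨ g = -h
  sumDiffRel (g h : G) : SumDiffRel a b c (v g) (v h) (v (g + h)) (v (g - h))
  cubicFun_nonneg {g : G} : g ≠ 0 → 0 ≤ cubicFun a b c (v g).1

namespace IsXCoord

lemma ne_zero (hv : IsXCoord a b c v) (g : G) : v g ≠ 0 := by
  intro h
  obtain rfl | hg := eq_or_ne g 0
  · exact hv.fst_zero_ne_zero (by rw [h]; rfl)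
  · simpa [h] using hv.snd_eq_one hg

lemma eq_or_eq_neg_of_fst_eq (hv : IsXCoord a b c v) {g h : G} (hg : g ≠ 0) (hh : h ≠ 0)
    (hgh : (v g).1 = (v h).1) : g = h ∨ g = -h :=
  hv.eq_iff.1 (Prod.ext hgh ((hv.snd_eq_one hg).trans (hv.snd_eq_one hh).symm))

lemma add_sub_of_fst_ne (hv : IsXCoord a b c v) {g h : G} (hg : g ≠ 0) (hh : h ≠ 0)
    (hgh : (v g).1 ≠ (v h).1) : g + h ≠ 0 ∧ g - h ≠ 0 ∧ addSubX a b c (symProd (v g) (v h)) =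
      ((v g).1 - (v h).1) ^ 2 • symProd (v (g + h)) (v (g - h)) := by
  have hadd : g + h ≠ 0 := fun h' ↦
    hgh (by rw [hv.eq_iff.2 (.inr (eq_neg_of_add_eq_zero_left h'))])
  have hsub : g - h ≠ 0 := fun h' ↦ hgh (by rw [sub_eq_zero.1 h'])
  refine ⟨hadd, hsub, ?_⟩
  obtain ⟨l, -, hl⟩ := hv.sumDiffRel g h
  have third := congrArg (·.2.2) hl
  simp only [addSubX, symProd, Prod.smul_snd, smul_eq_mul, hv.snd_eq_one hg, hv.snd_eq_one hh,
    hv.snd_eq_one hadd, hv.snd_eq_one hsub, mul_one, one_mul] at third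
  rw [hl, ← third]
  congr 1
  ring

lemma symEval_addSubX_of_fst_ne (hv : IsXCoord a b c v) {g h : G} (hg : g ≠ 0) (hh : h ≠ 0)
    (hgh : (v g).1 ≠ (v h).1) (x : ℝ) :
    symEval x (addSubX a b c (symProd ((v g).1, 1) ((v h).1, 1))) =
      ((v g).1 - (v h).1) ^ 2 * (((v (g + h)).1 - x) * ((v (g - h)).1 - x)) := by
  have mk_one {k : G} (hk : k ≠ 0) : ((v k).1, 1) = v k := Prod.ext rfl (hv.snd_eq_one hk).symm
  obtain ⟨hadd, hsub, heq⟩ := hv.add_sub_of_fst_ne hg hh hgh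
  rw [mk_one hg, mk_one hh, heq, symEval_smul, symEval_symProd, hv.snd_eq_one hadd,
    hv.snd_eq_one hsub, mul_one]

lemma exists_pos_le_sq_sub (hv : IsXCoord a b c v) (hd : cubicDisc a b c ≠ 0) {M : ℝ}
    (hM : ∀ g ≠ 0, |(v g).1| ≤ M) :
    ∃ ε > 0, ∀ g ≠ 0, ∀ h ≠ 0, (v g).1 ≠ (v h).1 → ε ≤ ((v g).1 - (v h).1) ^ 2 := by
  obtain ⟨μ, hμ, hlow⟩ := exists_pos_mul_le_norm_addSubX hd
  have norm_eq {g : G} (hg : g ≠ 0) : ‖v g‖ = max |(v g).1| 1 := by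
    rw [Prod.norm_def, hv.snd_eq_one hg, norm_one, Real.norm_eq_abs]
  have norm_le {g : G} (hg : g ≠ 0) : ‖v g‖ ≤ max M 1 := by
    rw [norm_eq hg]
    exact max_le_max_right 1 (hM g hg)
  have one_le {g : G} (hg : g ≠ 0) : 1 ≤ ‖v g‖ := by
    rw [norm_eq hg]
    exact le_max_right _ _
  refine ⟨μ / (2 * (max M 1 * max M 1)), by positivity, fun g hg h hh hgh ↦ ?_⟩
  obtain ⟨hadd, hsub, heq⟩ := hv.add_sub_of_fst_ne hg hh hgh
  rw [div_le_iff₀ (by positivity)]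
  calc μ ≤ μ * (‖v g‖ * ‖v h‖) ^ 2 :=
        le_mul_of_one_le_right hμ.le
          (one_le_pow₀ (one_le_mul_of_one_le_of_one_le (one_le hg) (one_le hh)))
    _ ≤ ‖addSubX a b c (symProd (v g) (v h))‖ := hlow _ _
    _ = ((v g).1 - (v h).1) ^ 2 * ‖symProd (v (g + h)) (v (g - h))‖ := by
        rw [heq, norm_smul, Real.norm_of_nonneg (sq_nonneg _)]
    _ ≤ ((v g).1 - (v h).1) ^ 2 * (2 * (max M 1 * max M 1)) := by
        gcongr
        exact (norm_symProd_le _ _).trans (by gcongr; exacts [norm_le hadd, norm_le hsub])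

lemma infinite_image_fst (hv : IsXCoord a b c v) [Infinite G] :
    ((fun g ↦ (v g).1) '' {g | g ≠ 0}).Infinite := by
  intro hfin
  refine (Set.finite_singleton (0 : G)).infinite_compl
    (Set.Finite.of_finite_fibers (fun g ↦ (v g).1) hfin ?_)
  rintro _ ⟨h, hh, rfl⟩
  refine Set.Finite.subset (Set.toFinite {h, -h}) ?_
  rintro g ⟨hg, hgh⟩
  exact hv.eq_or_eq_neg_of_fst_eq hg hh hgh

theorem exists_lt_fst (hv : IsXCoord a b c v) (hd : cubicDisc a b c ≠ 0) [Infinite G] (T : ℝ) :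
    ∃ g ≠ 0, T < (v g).1 := by
  by_contra! hT
  obtain ⟨L, hL⟩ := eventually_atBot.1
    (tendsto_cubicFun_atBot (a := a) (b := b) (c := c) |>.eventually_lt_atBot 0)
  have lower (g : G) (hg : g ≠ 0) : L ≤ (v g).1 :=
    le_of_not_ge fun h ↦ (hL _ h).not_ge (hv.cubicFun_nonneg hg)
  obtain ⟨ε, hε, hsep⟩ := hv.exists_pos_le_sq_sub hd (M := max |L| |T|)
    fun g hg ↦ abs_le_max_abs_abs (lower g hg) (hT g hg)
  obtain ⟨_, ⟨g, hg, rfl⟩, _, ⟨h, hh, rfl⟩, hne, hfloor⟩ :=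
    hv.infinite_image_fst.exists_ne_map_eq_of_mapsTo (f := fun x ↦ ⌊x / √ε⌋)
      (t := Set.Icc ⌊L / √ε⌋ ⌊T / √ε⌋) (by
        rintro _ ⟨g, hg, rfl⟩
        exact ⟨Int.floor_mono (by gcongr; exact lower g hg),
          Int.floor_mono (by gcongr; exact hT g hg)⟩) (Set.finite_Icc _ _)
  have close := Int.abs_sub_lt_one_of_floor_eq_floor hfloor
  rw [← sub_div, abs_div, abs_of_pos (Real.sqrt_pos.2 hε), div_lt_one (Real.sqrt_pos.2 hε),
    Real.lt_sqrt (abs_nonneg _), sq_abs] at close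
  exact close.not_ge (hsep g hg h hh hne)

end IsXCoord

lemma eventually_addSubX_separates {α q : ℝ} (hα : α < q) (hq : 0 < cubicFun a b c q) :
    ∀ᶠ τ in atTop, ∀ᶠ p in 𝓝 q, p < τ ∧
      symEval q (addSubX a b c (symProd (p, 1) (τ, 1))) < 0 ∧
      0 < symEval α (addSubX a b c (symProd (p, 1) (τ, 1))) := by
  have hcont (x τ : ℝ) : Continuous fun p ↦ symEval x (addSubX a b c (symProd (p, 1) (τ, 1))) := by
    simp only [symEval, addSubX, symProd]
    fun_prop
  have at_q : Tendsto (fun τ ↦ symEval q (addSubX a b c (symProd (q, 1) (τ, 1)))) atTop atBot := by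
    have linear : (fun τ ↦ symEval q (addSubX a b c (symProd (q, 1) (τ, 1)))) = fun τ ↦
        -(4 * cubicFun a b c q) * τ + symEval q (addSubX a b c (symProd (q, 1) (0, 1))) := by
      funext τ
      simp only [symEval, addSubX, symProd, cubicFun]
      ring
    rw [linear]
    exact tendsto_atBot_add_const_right _ _ (tendsto_id.const_mul_atTop_of_neg (by linarith))
  have at_α : Tendsto (fun τ ↦ symEval α (addSubX a b c (symProd (q, 1) (τ, 1)))) atTop atTop := by
    have quadratic : (fun τ ↦ symEval α (addSubX a b c (symProd (q, 1) (τ, 1)))) = fun τ ↦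
        τ * ((q - α) ^ 2 * τ + (symEval α (addSubX a b c (symProd (q, 1) (1, 1))) -
          symEval α (addSubX a b c (symProd (q, 1) (0, 1))) - (q - α) ^ 2)) +
          symEval α (addSubX a b c (symProd (q, 1) (0, 1))) := by
      funext τ
      simp only [symEval, addSubX, symProd]
      ring
    rw [quadratic]
    exact tendsto_atTop_add_const_right _ _ <| tendsto_id.atTop_mul_atTop₀ <|
      tendsto_atTop_add_const_right _ _ <| tendsto_id.const_mul_atTop (pow_pos (sub_pos.2 hα) 2)
  filter_upwards [at_q.eventually_lt_atBot 0, at_α.eventually_gt_atTop 0, eventually_gt_atTop q]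
    with τ hq hα hτ
  exact (eventually_lt_nhds hτ).and (((hcont q τ).continuousAt.eventually_lt_const hq).and
    ((hcont α τ).continuousAt.eventually_const_lt hα))

namespace IsXCoord

-- If `q` were the least `x`-coordinate beyond `α`, then for `P` with `x(P)` near `q` and `T` near
-- the identity, `q` would lie strictly between the coordinates of `P + T` and `P - T`, both of
-- which exceed `α`.
theorem exists_abs_fst_sub_lt (hv : IsXCoord a b c v) (hd : cubicDisc a b c ≠ 0) [Infinite G]
    {α : ℝ} (hα : ∀ x, α ≤ x → 0 < cubicFun a b c x) {δ : ℝ} (hδ : 0 < δ) :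
    ∃ g ≠ 0, |(v g).1 - α| < δ := by
  by_contra! hfar
  let S := {x | α < x ∧ ∃ g ≠ 0, (v g).1 = x}
  have hne : S.Nonempty := by
    obtain ⟨g, hg, hgα⟩ := hv.exists_lt_fst hd α
    exact ⟨_, hgα, g, hg, rfl⟩
  have hlow : α + δ ∈ lowerBounds S := by
    rintro _ ⟨hx, g, hg, rfl⟩
    have := hfar g hg
    rw [abs_of_pos (sub_pos.2 hx)] at this
    linarith
  have hαq : α < sInf S := (lt_add_of_pos_right α hδ).trans_le (le_csInf hne hlow)
  obtain ⟨τ₀, hτ₀⟩ := eventually_atTop.1 (eventually_addSubX_separates hαq (hα _ hαq.le))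
  obtain ⟨t, ht, hτ⟩ := hv.exists_lt_fst hd τ₀
  obtain ⟨r, hr, hnear⟩ := exists_Ico_subset_of_mem_nhds (hτ₀ _ hτ.le) (exists_gt _)
  obtain ⟨_, ⟨hpα, p, hp, rfl⟩, hpr⟩ := exists_lt_of_csInf_lt hne hr
  obtain ⟨hpt, hneg, hpos⟩ := hnear ⟨csInf_le ⟨_, hlow⟩ ⟨hpα, p, hp, rfl⟩, hpr⟩
  obtain ⟨hadd, hsub, -⟩ := hv.add_sub_of_fst_ne hp ht hpt.ne
  rw [hv.symEval_addSubX_of_fst_ne hp ht hpt.ne] at hneg hpos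
  replace hneg := neg_of_mul_neg_right hneg (sq_nonneg _)
  replace hpos := pos_of_mul_pos_right hpos (sq_nonneg _)
  have not_between {g h : G} (hg : g ≠ 0) (hgq : (v g).1 - sInf S < 0)
      (hhq : 0 < (v h).1 - sInf S) (hα : 0 < ((v g).1 - α) * ((v h).1 - α)) : False :=
    (sub_neg.1 hgq).not_ge (csInf_le ⟨_, hlow⟩
      ⟨sub_pos.1 (pos_of_mul_pos_left hα (sub_pos.2 (hαq.trans (sub_pos.1 hhq))).le), g, hg, rfl⟩)
  obtain ⟨hadd_pos, hsub_neg⟩ | ⟨hadd_neg, hsub_pos⟩ := mul_neg_iff.1 hneg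
  · exact not_between hsub hsub_neg hadd_pos (by rwa [mul_comm])
  · exact not_between hadd hadd_neg hsub_pos hpos

end IsXCoord

end RealPoints

section Syndetic

lemma exists_finset_forall_exists_abs_lt {α β ι : Type*} [PseudoMetricSpace α]
    [PseudoMetricSpace β] {K : Set α} {L : Set β} (hK : IsCompact K) (hL : IsCompact L)
    {Φ : α × β → ℝ} (hΦ : ContinuousOn Φ (K ×ˢ L)) {f : ι → α} {g : ι → β} (hf : ∀ i, f i ∈ K)
    (hg : ∀ i, g i ∈ L) (hzero : ∀ i, Φ (f i, g i) = 0) {η : ℝ} (hη : 0 < η) :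
    ∃ t : Finset ι, ∀ i, ∃ k ∈ t, |Φ (f i, g k)| < η := by
  classical
  obtain ⟨ε, hε, hclose⟩ := Metric.uniformContinuousOn_iff.1
    ((hK.prod hL).uniformContinuousOn_of_continuous hΦ) η hη
  obtain ⟨s, hs, hsfin, hcov⟩ := Metric.finite_approx_of_totallyBounded
    (hL.totallyBounded.subset (Set.range_subset_iff.2 hg)) ε hε
  lift s to Finset β using hsfin
  rw [← Set.image_univ, Finset.subset_set_image_iff] at hs
  obtain ⟨t, -, rfl⟩ := hs
  refine ⟨t, fun i ↦ ?_⟩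
  obtain ⟨_, hk, hik⟩ := Set.mem_iUnion₂.1 (hcov ⟨i, rfl⟩)
  obtain ⟨k, hkt, rfl⟩ := Finset.mem_image.1 hk
  refine ⟨k, hkt, ?_⟩
  have := hclose (f i, g i) ⟨hf i, hg i⟩ (f i, g k) ⟨hf i, hg k⟩
    (by simpa [Prod.dist_eq, hε] using hik)
  rwa [hzero, dist_zero_left, Real.norm_eq_abs] at this

namespace IsXCoord

variable {a b c : ℝ} {G : Type*} [AddCommGroup G] {v : G → ℝ × ℝ}

lemma mul_norm_le_abs_sub (hv : IsXCoord a b c v) {x δ : ℝ} (hδ : 0 < δ) {g : G}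
    (hg : g ≠ 0 → δ ≤ |(v g).1 - x|) :
    δ / (1 + |x| + δ) * ‖v g‖ ≤ |(v g).1 - x * (v g).2| := by
  rw [div_mul_eq_mul_div, div_le_iff₀ (by positivity), Prod.norm_def]
  obtain rfl | h0 := eq_or_ne g 0
  · simp only [hv.snd_zero, norm_zero, Real.norm_eq_abs, mul_zero, sub_zero, abs_nonneg,
      max_eq_left]
    rw [mul_comm]
    gcongr
    linarith [abs_nonneg x]
  · rw [hv.snd_eq_one h0, mul_one, norm_one, Real.norm_eq_abs]
    have hmax : max |(v g).1| 1 ≤ 1 + |x| + |(v g).1 - x| :=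
      max_le (by linarith [abs_sub_abs_le_abs_sub (v g).1 x]) (by
        linarith [abs_nonneg x, abs_nonneg ((v g).1 - x)])
    calc δ * max |(v g).1| 1 ≤ δ * (1 + |x| + |(v g).1 - x|) := by gcongr
      _ = δ * (1 + |x|) + δ * |(v g).1 - x| := by ring
      _ ≤ |(v g).1 - x| * (1 + |x|) + δ * |(v g).1 - x| := by
          gcongr
          exact hg h0
      _ = |(v g).1 - x| * (1 + |x| + δ) := by ring

lemma exists_pos_le_abs_symEval (hv : IsXCoord a b c v) (hd : cubicDisc a b c ≠ 0) (x : ℝ)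
    {δ : ℝ} (hδ : 0 < δ) : ∃ η > 0, ∀ g h,
      (g + h ≠ 0 → δ ≤ |(v (g + h)).1 - x|) → (g - h ≠ 0 → δ ≤ |(v (g - h)).1 - x|) →
      η * (‖v g‖ * ‖v h‖) ^ 2 ≤ |symEval x (addSubX a b c (symProd (v g) (v h)))| := by
  obtain ⟨μ, hμ, hlow⟩ := exists_pos_mul_le_norm_addSubX hd
  let κ := δ / (1 + |x| + δ)
  refine ⟨κ ^ 2 * μ / 2, by positivity, fun g h hadd hsub ↦ ?_⟩
  obtain ⟨l, -, hl⟩ := hv.sumDiffRel g h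
  have upper : μ * (‖v g‖ * ‖v h‖) ^ 2 ≤ |l| * (2 * (‖v (g + h)‖ * ‖v (g - h)‖)) :=
    calc μ * (‖v g‖ * ‖v h‖) ^ 2 ≤ ‖addSubX a b c (symProd (v g) (v h))‖ := hlow _ _
      _ = |l| * ‖symProd (v (g + h)) (v (g - h))‖ := by rw [hl, norm_smul, Real.norm_eq_abs]
      _ ≤ |l| * (2 * (‖v (g + h)‖ * ‖v (g - h)‖)) := by
          gcongr
          exact norm_symProd_le _ _
  rw [hl, symEval_smul, symEval_symProd, abs_mul, abs_mul]
  calc κ ^ 2 * μ / 2 * (‖v g‖ * ‖v h‖) ^ 2 = κ ^ 2 / 2 * (μ * (‖v g‖ * ‖v h‖) ^ 2) := by ring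
    _ ≤ κ ^ 2 / 2 * (|l| * (2 * (‖v (g + h)‖ * ‖v (g - h)‖))) := by gcongr
    _ = |l| * ((κ * ‖v (g + h)‖) * (κ * ‖v (g - h)‖)) := by ring
    _ ≤ |l| * (|(v (g + h)).1 - x * (v (g + h)).2| * |(v (g - h)).1 - x * (v (g - h)).2|) := by
        gcongr
        exacts [hv.mul_norm_le_abs_sub hδ hadd, hv.mul_norm_le_abs_sub hδ hsub]

-- The quadratic form `symEval x(R)` of the pair `(g, R - g)` vanishes; by compactness of the
-- sphere it is small on `(g, R - k)` for some `k` in a finite set, so that the coordinate of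
-- `g + (R - k)` or of `g - (R - k)` is close to that of `R`.
theorem exists_finset_forall_exists_abs_fst_sub_lt (hv : IsXCoord a b c v)
    (hd : cubicDisc a b c ≠ 0) {R : G} (hR : R ≠ 0) {δ : ℝ} (hδ : 0 < δ) :
    ∃ S : Finset G, ∀ g, ∃ s ∈ S, g + s ≠ 0 ∧ |(v (g + s)).1 - (v R).1| < δ := by
  classical
  let x := (v R).1
  let u (g : G) : ℝ × ℝ := ‖v g‖⁻¹ • v g
  have u_mem (g : G) : u g ∈ Metric.sphere (0 : ℝ × ℝ) 1 := by
    simpa using norm_smul_inv_norm (𝕜 := ℝ) (hv.ne_zero g)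
  have symEval_u (g h : G) : symEval x (addSubX a b c (symProd (u g) (u h))) =
      ((‖v g‖ * ‖v h‖) ^ 2)⁻¹ * symEval x (addSubX a b c (symProd (v g) (v h))) := by
    rw [symProd_smul_smul, addSubX_smul, symEval_smul, ← mul_inv, inv_pow]
  have hzero (g : G) : symEval x (addSubX a b c (symProd (u g) (u (R - g)))) = 0 := by
    obtain ⟨l, -, hl⟩ := hv.sumDiffRel g (R - g)
    rw [symEval_u, hl, symEval_smul, symEval_symProd, add_sub_cancel, hv.snd_eq_one hR, mul_one,
      sub_self, zero_mul, mul_zero, mul_zero]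
  obtain ⟨η, hη, hfar⟩ := hv.exists_pos_le_abs_symEval hd x hδ
  obtain ⟨T, hT⟩ := exists_finset_forall_exists_abs_lt (isCompact_sphere (0 : ℝ × ℝ) 1)
    (isCompact_sphere 0 1) (Φ := fun z ↦ symEval x (addSubX a b c (symProd z.1 z.2)))
    (Continuous.continuousOn (by simp only [symEval, addSubX, symProd]; fun_prop))
    u_mem (fun g ↦ u_mem (R - g)) hzero hη
  refine ⟨T.image (R - ·) ∪ T.image (-(R - ·)), fun g ↦ ?_⟩
  obtain ⟨k, hk, hsmall⟩ := hT g
  by_contra! hcon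
  have hpos : 0 < (‖v g‖ * ‖v (R - k)‖) ^ 2 := by
    have := norm_pos_iff.2 (hv.ne_zero g)
    have := norm_pos_iff.2 (hv.ne_zero (R - k))
    positivity
  rw [symEval_u, abs_mul, abs_inv, abs_of_pos hpos, inv_mul_lt_iff₀' hpos] at hsmall
  refine hsmall.not_ge (hfar g (R - k)
    (hcon _ (Finset.mem_union_left _ (Finset.mem_image_of_mem _ hk))) ?_)
  rw [sub_eq_add_neg g]
  exact hcon _ (Finset.mem_union_right _ (Finset.mem_image_of_mem _ hk))

theorem exists_finset_forall_exists_fst_mem (hv : IsXCoord a b c v) (hd : cubicDisc a b c ≠ 0)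
    [Infinite G] {α : ℝ} (hα : ∀ r, cubicFun a b c r = 0 → r < α) {X : Set ℝ} (hX : IsOpen X)
    (hαX : α ∈ X) : ∃ S : Finset G, ∀ g, ∃ s ∈ S, g + s ≠ 0 ∧ (v (g + s)).1 ∈ X ∧
      cubicFun a b c (v (g + s)).1 ≠ 0 := by
  have hpos (x : ℝ) (hx : α ≤ x) : 0 < cubicFun a b c x := cubicFun_pos_of_le hα hx
  obtain ⟨ε, hε, hball⟩ := Metric.eventually_nhds_iff.1 ((hX.eventually_mem hαX).and
    (continuous_cubicFun.continuousAt.eventually_const_lt (hpos α le_rfl)))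
  obtain ⟨R, hR, hRα⟩ := hv.exists_abs_fst_sub_lt hd hpos (half_pos hε)
  obtain ⟨S, hS⟩ := hv.exists_finset_forall_exists_abs_fst_sub_lt hd hR (half_pos hε)
  refine ⟨S, fun g ↦ ?_⟩
  obtain ⟨s, hs, h0, hsR⟩ := hS g
  have hlt : dist (v (g + s)).1 α < ε :=
    (dist_triangle _ (v R).1 _).trans_lt (by rw [Real.dist_eq, Real.dist_eq]; linarith)
  exact ⟨s, hs, h0, (hball hlt).1, (hball hlt).2.ne'⟩

end IsXCoord

end Syndetic

section BroadSet

lemma cubicFun_rescale (a b c t x : ℝ) :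
    cubicFun (a * t) (b * t ^ 2) (c * t ^ 3) (t * x) = t ^ 3 * cubicFun a b c x := by
  simp only [cubicFun]
  ring

lemma cubicDisc_rescale {R : Type*} [CommRing R] (a b c t : R) :
    cubicDisc (a * t) (b * t ^ 2) (c * t ^ 3) = t ^ 6 * cubicDisc a b c := by
  simp only [cubicDisc]
  ring

variable {a b c D : ℤ} {G : Type*} [AddCommGroup G]

lemma cubicFun_ratCast {x y : ℚ} (h : D * y ^ 2 = x ^ 3 + a * x ^ 2 + b * x + c) :
    cubicFun a b c x = D * y ^ 2 := by
  simp only [cubicFun]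
  exact_mod_cast h.symm

lemma isXCoord_projX (hD : D ≠ 0) {φ : G →+ (twist a b c D).Point} (hφ : Function.Injective φ) :
    IsXCoord (a * D : ℝ) (b * D ^ 2) (c * D ^ 3)
      fun g ↦ (D * ((projX a b c D (φ g)).1 : ℝ), ((projX a b c D (φ g)).2 : ℝ)) where
  fst_zero_ne_zero := by simpa [projX_zero] using hD
  snd_zero := by simp [projX_zero]
  snd_eq_one hg := by
    obtain ⟨x, y, hx, -⟩ := exists_projX_eq hD ((map_ne_zero_iff φ hφ).2 hg)
    simp [hx]
  eq_iff {g h} := by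
    simp only [Prod.mk.injEq, mul_eq_mul_left_iff, Int.cast_eq_zero, hD, or_false, Rat.cast_inj,
      ← Prod.ext_iff]
    refine ⟨fun hgh ↦ ?_, ?_⟩
    · simpa only [← map_neg, hφ.eq_iff] using eq_or_eq_neg_of_projX_eq hD hgh
    · rintro (rfl | rfl)
      · rfl
      · rw [map_neg, projX_neg]
  sumDiffRel g h := by
    have hrel := (sumDiffRel_projX hD (φ g) (φ h)).map (Rat.castHom ℝ)
    simpa using hrel.rescale (Int.cast_ne_zero.2 hD)
  cubicFun_nonneg hg := by
    obtain ⟨x, y, hx, hxy⟩ := exists_projX_eq hD ((map_ne_zero_iff φ hφ).2 hg)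
    rw [hx, cubicFun_rescale, cubicFun_ratCast hxy, ← mul_assoc, ← pow_succ]
    exact mul_nonneg (Even.pow_nonneg ⟨2, rfl⟩ _) (sq_nonneg _)

lemma Broad.exists_div_mem_forall_root_lt {X : Set ℝ} (hX : Broad a b c X) (hD : D ≠ 0) :
    ∃ α : ℝ, α / D ∈ X ∧ ∀ r, cubicFun (a * D) (b * D ^ 2) (c * D ^ 3) r = 0 → r < α := by
  have hD' : (D : ℝ) ≠ 0 := Int.cast_ne_zero.2 hD
  have root {r : ℝ} (hr : cubicFun (a * D) (b * D ^ 2) (c * D ^ 3) r = 0) :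
      cubicFun a b c (r / D) = 0 := by
    rw [← mul_div_cancel₀ r hD', cubicFun_rescale] at hr
    exact (mul_eq_zero.1 hr).resolve_left (pow_ne_zero 3 hD')
  obtain ⟨-, ⟨α, hα, above⟩, ⟨β, hβ, below⟩⟩ := hX
  obtain hneg | hpos := lt_or_gt_of_ne hD
  · exact ⟨β * D, by rwa [mul_div_cancel_right₀ _ hD'], fun r hr ↦
      (lt_div_iff_of_neg (Int.cast_lt_zero.2 hneg)).1 (below _ (root hr))⟩
  · exact ⟨α * D, by rwa [mul_div_cancel_right₀ _ hD'], fun r hr ↦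
      (div_lt_iff₀ (Int.cast_pos.2 hpos)).1 (above _ (root hr))⟩

theorem exists_finset_forall_exists_projX_mem (hd : cubicDisc a b c ≠ 0) (hD : D ≠ 0) [Infinite G]
    {φ : G →+ (twist a b c D).Point} (hφ : Function.Injective φ) {X : Set ℝ}
    (hX : Broad a b c X) : ∃ S : Finset G, ∀ g, ∃ s ∈ S, ∃ x y : ℚ,
      projX a b c D (φ (g + s)) = (x, 1) ∧ (x : ℝ) ∈ X ∧
        D * y ^ 2 = x ^ 3 + a * x ^ 2 + b * x + c ∧ y ≠ 0 := by
  have hD' : (D : ℝ) ≠ 0 := Int.cast_ne_zero.2 hD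
  have hdR : cubicDisc (a * D : ℝ) (b * D ^ 2) (c * D ^ 3) ≠ 0 := by
    rw [cubicDisc_rescale]
    refine mul_ne_zero (pow_ne_zero 6 hD') ?_
    simp only [cubicDisc] at hd ⊢
    exact_mod_cast hd
  obtain ⟨α, hαX, hα⟩ := hX.exists_div_mem_forall_root_lt hD
  obtain ⟨S, hS⟩ := (isXCoord_projX hD hφ).exists_finset_forall_exists_fst_mem hdR hα
    (hX.1.preimage (continuous_id.div_const (D : ℝ))) hαX
  refine ⟨S, fun g ↦ ?_⟩
  obtain ⟨s, hs, h0, hmem, hf⟩ := hS g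
  obtain ⟨x, y, hx, hxy⟩ := exists_projX_eq hD ((map_ne_zero_iff φ hφ).2 h0)
  rw [hx] at hmem hf
  rw [cubicFun_rescale, cubicFun_ratCast hxy] at hf
  refine ⟨s, hs, x, y, hx, ?_, hxy, ?_⟩
  · simpa [mul_div_cancel_left₀ _ hD'] using hmem
  · rintro rfl
    simp at hf

end BroadSet

section LatticeSums

lemma summable_comp_of_encard_fiber_le {ι κ : Type*} {f : ι → ℝ} (hf : Summable f)
    (hf0 : ∀ i, 0 ≤ f i) {e : κ → ι} {K : ℕ} (hK : ∀ i, (e ⁻¹' {i}).encard ≤ K) :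
    Summable (f ∘ e) := by
  classical
  refine summable_of_sum_le (c := K * ∑' i, f i) (fun _ ↦ hf0 _) fun s ↦ ?_
  have card_fiber_le (i : ι) : (s.filter (e · = i)).card ≤ K := by
    rw [← Nat.cast_le (α := ℕ∞), ← Set.encard_coe_eq_coe_finsetCard]
    exact (Set.encard_le_encard fun g hg ↦ (Finset.mem_filter.1 hg).2).trans (hK i)
  calc ∑ g ∈ s, f (e g) = ∑ i ∈ s.image e, (s.filter (e · = i)).card • f i :=
        Finset.sum_comp f e
    _ ≤ ∑ i ∈ s.image e, K * f i := by
        gcongr with i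
        rw [nsmul_eq_mul]
        exact mul_le_mul_of_nonneg_right (Nat.cast_le.2 (card_fiber_le i)) (hf0 i)
    _ = K * ∑ i ∈ s.image e, f i := (Finset.mul_sum ..).symm
    _ ≤ K * ∑' i, f i := by
        gcongr
        exact hf.sum_le_tsum _ fun i _ ↦ hf0 i

-- Already the vectors whose first coordinate `m` dominates the others in `[0, m]` contribute
-- `(m + 1) ^ (n - r)` for each `m`.
lemma not_summable_one_add_norm_rpow {n : ℕ} {r : ℝ} (hr : r ≤ n + 1) :
    ¬ Summable fun g : Fin (n + 1) → ℤ ↦ (1 + ‖g‖) ^ (-r) := by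
  intro hsum
  let cone (z : Σ m : ℕ, Fin n → Fin (m + 1)) : Fin (n + 1) → ℤ :=
    Fin.cons (z.1 : ℤ) fun i ↦ ((z.2 i : ℕ) : ℤ)
  have cone_injective : Function.Injective cone := by
    rintro ⟨m, z⟩ ⟨m', z'⟩ h
    obtain ⟨hm, hz⟩ := Fin.cons_injective2 h
    obtain rfl := Nat.cast_injective hm
    congr 1
    funext i
    exact Fin.ext (Nat.cast_injective (congrFun hz i))
  have norm_cone (z : Σ m : ℕ, Fin n → Fin (m + 1)) : ‖cone z‖ = z.1 := by
    have hle : ‖cone z‖ ≤ z.1 := (pi_norm_le_iff_of_nonneg (Nat.cast_nonneg _)).2 <|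
      Fin.cases (by simp [cone]) fun i ↦ by simpa [cone] using Nat.le_of_lt_succ (z.2 i).2
    exact hle.antisymm (by simpa [cone] using norm_le_pi_norm (cone z) 0)
  have hsum' : Summable fun m : ℕ ↦ 1 / |(m : ℝ) + 1| ^ (r - n) := by
    refine (hsum.comp_injective cone_injective).sigma.congr fun m ↦ ?_
    have hm : (0 : ℝ) < m + 1 := by positivity
    simp only [Function.comp_apply, norm_cone, tsum_const, Nat.card_fun, Nat.card_fin]
    rw [abs_of_pos hm, one_div, ← Real.rpow_neg hm.le, neg_sub, sub_eq_add_neg,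
      Real.rpow_add hm, Real.rpow_natCast, add_comm 1 (m : ℝ), nsmul_eq_mul]
    push_cast
    rfl
  exact (Real.summable_one_div_nat_add_rpow 1 _).1 hsum' |>.not_ge (by linarith)

lemma exists_quadraticMap_sum_zsmul_le {A ι : Type*} [AddCommGroup A] [Fintype ι]
    (q : QuadraticMap ℤ A ℝ) (hq : ∀ P, 0 ≤ q P) (P : ι → A) :
    ∃ B : ℝ, 0 ≤ B ∧ ∀ g : ι → ℤ, q (∑ i, g i • P i) ≤ B * ‖g‖ ^ 2 := by
  classical
  suffices h : ∀ s : Finset ι, ∃ B : ℝ, 0 ≤ B ∧ ∀ g : ι → ℤ,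
      q (∑ i ∈ s, g i • P i) ≤ B * ‖g‖ ^ 2 from h Finset.univ
  intro s
  induction s using Finset.induction_on with
  | empty => exact ⟨0, le_rfl, fun g ↦ by simp⟩
  | insert i s his ih =>
    obtain ⟨B, hB, ih⟩ := ih
    have hPi := hq (P i)
    refine ⟨2 * q (P i) + 2 * B, by positivity, fun g ↦ ?_⟩
    have hterm : q (g i • P i) ≤ ‖g‖ ^ 2 * q (P i) := by
      rw [quadraticMap_zsmul, ← sq_abs, ← Int.norm_eq_abs]
      gcongr
      exact norm_le_pi_norm g i
    rw [Finset.sum_insert his]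
    linarith [quadraticMap_add_le q hq (g i • P i) (∑ i ∈ s, g i • P i), ih g]

lemma encard_fiber_le_of_add_eq_or_eq_neg {G ι : Type*} [AddCommGroup G] {S : Finset G}
    {s : G → G} (hs : ∀ g, s g ∈ S) {e : G → ι}
    (he : ∀ g h, e g = e h → g + s g = h + s h ∨ g + s g = -(h + s h)) (i : ι) :
    (e ⁻¹' {i}).encard ≤ (2 * S.card : ℕ) := by
  classical
  obtain hempty | ⟨h, rfl⟩ := (e ⁻¹' {i}).eq_empty_or_nonempty
  · simp [hempty]
  have hsub : e ⁻¹' {e h} ⊆ (S.image (h + s h - ·) ∪ S.image (-(h + s h) - ·) : Finset G) := by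
    intro g hg
    rw [Finset.mem_coe, Finset.mem_union, Finset.mem_image, Finset.mem_image]
    refine (he g h hg).imp (fun h ↦ ⟨s g, hs g, ?_⟩) fun h ↦ ⟨s g, hs g, ?_⟩ <;>
      rw [← h, add_sub_cancel_right]
  calc (e ⁻¹' {e h}).encard ≤ _ := Set.encard_le_encard hsub
    _ ≤ (2 * S.card : ℕ) := by
        rw [Set.encard_coe_eq_coe_finsetCard, Nat.cast_le, two_mul]
        exact (Finset.card_union_le _ _).trans
          (add_le_add Finset.card_image_le Finset.card_image_le)

end LatticeSums

section RankOfConvergence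

variable {a b c : ℤ} {j k : ℝ}

lemma exists_RIdx_le_RTerm {D : ℤ} (hD : D ≠ 0) {x y : ℚ}
    (hxy : D * y ^ 2 = x ^ 3 + a * x ^ 2 + b * x + c) (hy : y ≠ 0) {X : Set ℝ} (hx : (x : ℝ) ∈ X)
    (hk : 0 ≤ k) (j : ℝ) : ∃ i : RIdx a b c X, i.1.2 = (x.num, (x.den : ℤ)) ∧
      |(D : ℝ)| ^ (-k) * ht x.num x.den ^ (-j) ≤ RTerm a b c j k i.1 := by
  obtain ⟨z, hz⟩ : ∃ z : ℚ, z = x.den ^ 2 * y := ⟨_, rfl⟩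
  have hFz : ((Fbin a b c x.num x.den : ℤ) : ℚ) = D * z ^ 2 := by
    rw [Fbin_num_den, ← hxy, hz]
    ring
  have hF0 : Fbin a b c x.num x.den ≠ 0 := by
    rw [← Int.cast_ne_zero (α := ℚ), hFz, hz]
    exact mul_ne_zero (Int.cast_ne_zero.2 hD)
      (pow_ne_zero 2 (mul_ne_zero (pow_ne_zero 2 (mod_cast x.den_ne_zero)) hy))
  obtain ⟨D', hDD', hF⟩ := exists_eq_mul_den_sq_of_eq_mul_sq hFz
  have hD' : D' ≠ 0 := by
    rintro rfl
    exact hF0 (by rw [hF, zero_mul])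
  have hnum : z.num.natAbs ≠ 0 := by
    intro h
    exact hF0 (by rw [hF, Int.natAbs_eq_zero.1 h, zero_pow two_ne_zero, mul_zero])
  rw [← Int.natAbs_sq] at hF
  have hle : |D'| ≤ |D| := by
    rw [hDD', abs_mul]
    exact le_mul_of_one_le_right (abs_nonneg _)
      (Int.one_le_abs (pow_ne_zero 2 (mod_cast z.den_ne_zero)))
  refine ⟨⟨(z.num.natAbs, x.num, (x.den : ℤ)), Nat.one_le_iff_ne_zero.2 hnum,
    ⟨by simpa [Int.gcd] using x.reduced, hF0⟩, ?_, ?_⟩, rfl, ?_⟩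
  · rwa [Int.cast_natCast, ← Rat.cast_def]
  · exact ⟨D', hF.trans (mul_comm _ _)⟩
  · rw [RTerm_eq_of_Fbin_eq hnum hF]
    refine mul_le_mul_of_nonneg_right ?_ (ht_rpow_nonneg _ _ _)
    exact Real.rpow_le_rpow_of_nonpos (abs_pos.2 (Int.cast_ne_zero.2 hD')) (mod_cast hle)
      (neg_nonpos.2 hk)

lemma RTerm_nonneg (q : ℕ × ℤ × ℤ) : 0 ≤ RTerm a b c j k q :=
  mul_nonneg (by positivity) (ht_rpow_nonneg _ _ _)

lemma exists_ht_num_den_le (hd : cubicDisc a b c ≠ 0) {D : ℤ} (hD : D ≠ 0) {ι : Type*} [Fintype ι]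
    (P : ι → (twist a b c D).Point) (S : Finset (ι → ℤ)) :
    ∃ A > 0, ∀ g, ∀ s ∈ S, ∀ x : ℚ,
      projX a b c D (Fintype.linearCombination ℤ P (g + s)) = (x, 1) →
        ht x.num x.den ≤ A * (1 + ‖g‖) ^ 2 := by
  obtain ⟨C, hC, hq⟩ := exists_canonicalHeight hd
  obtain ⟨q, hqC, hq0⟩ := hq D hD
  obtain ⟨B, hB, hqB⟩ := exists_quadraticMap_sum_zsmul_le q hq0 P
  let M := ∑ s ∈ S, q (Fintype.linearCombination ℤ P s)
  have hM : 0 ≤ M := Finset.sum_nonneg fun _ _ ↦ hq0 _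
  refine ⟨2 * B + (2 * M + C + 1), by positivity, fun g s hs x hx ↦ ?_⟩
  have hqs : q (Fintype.linearCombination ℤ P s) ≤ M :=
    Finset.single_le_sum (f := fun s ↦ q (Fintype.linearCombination ℤ P s))
      (fun _ _ ↦ hq0 _) hs
  have hqg : q (Fintype.linearCombination ℤ P g) ≤ B * ‖g‖ ^ 2 := hqB g
  have hadd : q (Fintype.linearCombination ℤ P (g + s)) ≤ 2 * (B * ‖g‖ ^ 2) + 2 * M := by
    rw [map_add]
    exact (quadraticMap_add_le q hq0 _ _).trans (by gcongr)
  have hheight : logHeight₁ x ≤ q (Fintype.linearCombination ℤ P (g + s)) + C := by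
    rw [← naiveHeight_eq_logHeight₁ hx]
    linarith [(abs_le.1 (hqC (Fintype.linearCombination ℤ P (g + s)))).1]
  calc ht x.num x.den ≤ logHeight₁ x + 1 := ht_num_den_le x
    _ ≤ 2 * B * ‖g‖ ^ 2 + (2 * M + C + 1) * 1 := by linarith
    _ ≤ 2 * B * (1 + ‖g‖) ^ 2 + (2 * M + C + 1) * (1 + ‖g‖) ^ 2 := by
        gcongr
        · linarith
        · exact one_le_pow₀ (le_add_of_nonneg_right (norm_nonneg g))
    _ = (2 * B + (2 * M + C + 1)) * (1 + ‖g‖) ^ 2 := by ring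

lemma exists_forall_mul_rpow_le_RTerm (hd : cubicDisc a b c ≠ 0) (hj : 0 ≤ j) (hk : 0 ≤ k)
    {X : Set ℝ} (hX : Broad a b c X) {D : ℤ} (hD : D ≠ 0) {ι : Type*} [Fintype ι] [Nonempty ι]
    {P : ι → (twist a b c D).Point} (hP : LinearIndependent ℤ P) :
    ∃ (e : (ι → ℤ) → RIdx a b c X) (K : ℕ) (A : ℝ), 0 < A ∧
      (∀ i, (e ⁻¹' {i}).encard ≤ K) ∧
      ∀ g, A * (1 + ‖g‖) ^ (-(2 * j)) ≤ RTerm a b c j k (e g).1 := by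
  let φ := (Fintype.linearCombination ℤ P).toAddMonoidHom
  have hφ : Function.Injective φ := linearIndependent_iff_injective_fintypeLinearCombination.1 hP
  obtain ⟨S, hS⟩ := exists_finset_forall_exists_projX_mem hd hD hφ hX
  choose s hs x y hx hxX hxy hy using hS
  choose e he hterm using fun g ↦ exists_RIdx_le_RTerm hD (hxy g) (hy g) (hxX g) hk j
  have he_fiber (g h : ι → ℤ) (hgh : e g = e h) :
      g + s g = h + s h ∨ g + s g = -(h + s h) := by
    have hxgh : x g = x h := by
      have := (he g).symm.trans ((congrArg (·.1.2) hgh).trans (he h))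
      simp only [Prod.mk.injEq, Nat.cast_inj] at this
      exact Rat.ext this.1 this.2
    exact (eq_or_eq_neg_of_projX_eq hD ((hx g).trans (hxgh ▸ (hx h).symm))).imp (hφ ·)
      fun h_neg ↦ hφ (h_neg.trans (map_neg φ _).symm)
  obtain ⟨A, hA, hheight⟩ := exists_ht_num_den_le hd hD P S
  refine ⟨e, 2 * S.card, |(D : ℝ)| ^ (-k) * A ^ (-j), by positivity,
    encard_fiber_le_of_add_eq_or_eq_neg hs he_fiber, fun g ↦ ?_⟩
  calc |(D : ℝ)| ^ (-k) * A ^ (-j) * (1 + ‖g‖) ^ (-(2 * j))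
      = |(D : ℝ)| ^ (-k) * (A * (1 + ‖g‖) ^ 2) ^ (-j) := by
        rw [Real.mul_rpow hA.le (by positivity), ← Real.rpow_natCast _ 2,
          ← Real.rpow_mul (by positivity), Nat.cast_two, mul_neg, mul_assoc]
    _ ≤ |(D : ℝ)| ^ (-k) * ht (x g).num (x g).den ^ (-j) := by
        gcongr ?_ * ?_
        exact Real.rpow_le_rpow_of_nonpos (zero_lt_one.trans_le (one_le_ht _ _))
          (hheight g _ (hs g) _ (hx g)) (neg_nonpos.2 hj)
    _ ≤ RTerm a b c j k (e g).1 := hterm g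

lemma RConv.lt_two_mul_of_linearIndependent (hd : cubicDisc a b c ≠ 0) (hj : 0 ≤ j) (hk : 0 ≤ k)
    {X : Set ℝ} (hX : Broad a b c X) (hR : RConv a b c j k X) {D : ℤ} (hD : D ≠ 0) {n : ℕ}
    {P : Fin (n + 1) → (twist a b c D).Point} (hP : LinearIndependent ℤ P) :
    (n + 1 : ℝ) < 2 * j := by
  obtain ⟨e, K, A, hA, hK, hle⟩ := exists_forall_mul_rpow_le_RTerm hd hj hk hX hD hP
  by_contra! hjn
  refine not_summable_one_add_norm_rpow hjn ((summable_mul_left_iff hA.ne').1 ?_)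
  exact .of_nonneg_of_le (fun g ↦ by positivity) hle
    (summable_comp_of_encard_fiber_le hR (fun i ↦ RTerm_nonneg i.1) hK)

theorem RConv.rankBound (hd : cubicDisc a b c ≠ 0) (hj : 0 < j) (hk : 0 ≤ k) {X : Set ℝ}
    (hX : Broad a b c X) (hR : RConv a b c j k X) : RankBound a b c j := by
  rintro D hD ⟨P, hP⟩
  have hceil := Nat.le_ceil (2 * j)
  generalize ⌈2 * j⌉₊ = n at P hP hceil
  cases n with
  | zero => linarith [Nat.cast_zero (R := ℝ)]
  | succ n =>
    have := hR.lt_two_mul_of_linearIndependent hd hj.le hk hX hD hP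
    push_cast at hceil
    linarith

end RankOfConvergence

/-- **Corollary 11.** For `j > 0`, the following are equivalent:
(a) `rank E^{(D)}(ℚ) < 2j` for all nonzero `D`;
(b) `R_E(j,k,X)` converges for some `k ≥ 1` and some broad `X`;
(c) `R_E(j,k)` converges for every `k ≥ 1`. -/
theorem rank_tfae_R (a b c : ℤ) (hf : DistinctRoots a b c) (j : ℝ) (hj : 0 < j) :
    List.TFAE
      [RankBound a b c j,
       ∃ k : ℝ, 1 ≤ k ∧ ∃ X : Set ℝ, Broad a b c X ∧ RConv a b c j k X,
       ∀ k : ℝ, 1 ≤ k → RConv a b c j k Set.univ] := by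
  have hd := hf.cubicDisc_ne_zero
  tfae_have 1 → 3 := fun h k hk ↦ by
    rcases le_or_gt j 1 with hj₁ | hj₁
    · exact absurd h (not_rankBound_of_le_one hd hj₁)
    · exact h.rConv_of_one_lt hj₁ hd hk
  tfae_have 3 → 2 := fun h ↦ ⟨1, le_rfl, Set.univ, broad_univ a b c, h 1 le_rfl⟩
  tfae_have 2 → 1 := fun ⟨k, hk, X, hX, hR⟩ ↦ hR.rankBound hd hj (zero_le_one.trans hk) hX
  tfae_finish
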